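/- arXiv:2010.09502 — 2 statements merged into one kernel-verified Lean document; each statement's English description precedes it below -/
import Mathlib

section
/- For every u ∈ [−π, π] with u ≠ 0 and every n ∈ ℕ, n ≥ 1, the integral ∫₀^∞ ( x·K₀ˢ(2x·cosh u) − 1/(π·cosh u) ) · Im[J_{in/2}(x)²] dx converges absolutely and equals sin(nu) / (π·sinh(2u)·cosh(πn/2)). -/
open MeasureTheory Filter Topology

/-- Bessel function of the first kind of complex order `ν` at real `x > 0`. -/
noncomputable def besselJ (ν : ℂ) (x : ℝ) : ℂ :=
  ∑' k : ℕ, ((-1 : ℂ) ^ k * Complex.exp ((ν + 2 * k) * (Real.log (x / 2) : ℂ))) /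
    ((Nat.factorial k : ℂ) * Complex.Gamma (ν + k + 1))

/-- Bessel function of the second kind of complex order `ν` at real `x > 0`. -/
noncomputable def besselY (ν : ℂ) (x : ℝ) : ℂ :=
  (besselJ ν x * Complex.cos (Real.pi * ν) - besselJ (-ν) x) / Complex.sin (Real.pi * ν)

/-- Bessel function of the first kind of order `0` (real-valued). -/
noncomputable def besselJ0 (x : ℝ) : ℝ :=
  ∑' k : ℕ, (-1 : ℝ) ^ k * (x / 2) ^ (2 * k) / (Nat.factorial k : ℝ) ^ 2

/-- Lommel function `S_{-1,0}` for `x > 0`. -/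
noncomputable def lommelS (x : ℝ) : ℝ :=
  ∫ t in Set.Ioi (0 : ℝ), t * Real.exp (-x * Real.sinh t)

/-- Struve function `K₀` for `x > 0`. -/
noncomputable def struveK0 (x : ℝ) : ℝ :=
  (2 / Real.pi) * ∫ t in Set.Ioi (0 : ℝ), Real.exp (-x * Real.sinh t)

/-- Bessel function of the second kind of order `0` (real-valued, for `x > 0`). -/
noncomputable def besselY0 (x : ℝ) : ℝ :=
  (2 / Real.pi) * ((Real.log (x / 2) + Real.eulerMascheroniConstant) * besselJ0 x +
    ∑' k : ℕ, (-1 : ℝ) ^ k * ((harmonic (k + 1) : ℚ) : ℝ) * (x / 2) ^ (2 * (k + 1)) /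
      (Nat.factorial (k + 1) : ℝ) ^ 2)

/-- Struve function `H₀`: `H₀ = K₀ˢ + Y₀`. -/
noncomputable def struveH0 (x : ℝ) : ℝ := struveK0 x + besselY0 x

/-!
Neumann's formula turns `J_z(x)²` into an integral of `J_{2z}(2x cos θ)` over `|θ| < π / 2`, while
`x K₀(2xa) - 1 / (πa)` is a Laplace integral in `x`. Exchanging the integrals leaves the Laplace
transform of `J_{2z}`, which at `sinh w` equals `e^{-2zw} / cosh w`; the remaining integral over `θ`
is elementary. What is left is an integral over `w` of `e^{-2zw}` against a kernel which, for
`a = cosh u`, is a multiple of the difference of two translates of `1 / cosh`, so that the Fourier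
transform of `1 / cosh` evaluates its imaginary part.
-/

section

open Set
open Finset.HasAntidiagonal (antidiagonal)
open scoped Real Nat

/-! ### Products of Bessel series -/

/-- The `k`-th term of the power series defining `besselJ ν x`. -/
noncomputable def besselTerm (ν : ℂ) (x : ℝ) (k : ℕ) : ℂ :=
  ((-1 : ℂ) ^ k * Complex.exp ((ν + 2 * k) * (Real.log (x / 2) : ℂ))) /
    ((Nat.factorial k : ℂ) * Complex.Gamma (ν + k + 1))

theorem besselJ_eq_tsum (ν : ℂ) (x : ℝ) : besselJ ν x = ∑' k, besselTerm ν x k := rfl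

theorem besselTerm_of_pos (ν : ℂ) {x : ℝ} (hx : 0 < x) (k : ℕ) :
    besselTerm ν x k = (-1) ^ k * ((x / 2 : ℝ) : ℂ) ^ (ν + 2 * k) /
      (k ! * Complex.Gamma (ν + k + 1)) := by
  have hx2 : ((x / 2 : ℝ) : ℂ) ≠ 0 := by exact_mod_cast (half_pos hx).ne'
  rw [besselTerm, Complex.cpow_def_of_ne_zero hx2, Complex.ofReal_log (half_pos hx).le,
    mul_comm (Complex.log _)]

theorem besselTerm_mul (ν : ℂ) {x c : ℝ} (hx : 0 < x) (hc : 0 < c) (k : ℕ) :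
    besselTerm ν (x * c) k = besselTerm ν x k * (c : ℂ) ^ (ν + 2 * k) := by
  rw [besselTerm_of_pos ν (mul_pos hx hc), besselTerm_of_pos ν hx, mul_div_right_comm x,
    Complex.ofReal_mul, Complex.mul_cpow_ofReal_nonneg (half_pos hx).le hc.le]
  ring

theorem besselTerm_succ (ν : ℂ) (x : ℝ) {k : ℕ} (hk : ν + k + 1 ≠ 0) :
    besselTerm ν x (k + 1) =
      besselTerm ν x k * (-Complex.exp (2 * Real.log (x / 2)) / ((k + 1) * (ν + k + 1))) := by
  have hexp : (ν + 2 * (k + 1 : ℕ)) * (Real.log (x / 2) : ℂ) =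
      (ν + 2 * k) * Real.log (x / 2) + 2 * Real.log (x / 2) := by push_cast; ring
  have hGamma : Complex.Gamma (ν + (k + 1 : ℕ) + 1) =
      (ν + k + 1) * Complex.Gamma (ν + k + 1) := by
    rw [← Complex.Gamma_add_one _ hk]; push_cast; ring_nf
  rw [besselTerm, besselTerm, hexp, Complex.exp_add, hGamma, Nat.factorial_succ, pow_succ,
    div_mul_div_comm]
  push_cast
  ring_nf

theorem tendsto_norm_add_natCast_atTop (c : ℂ) :
    Tendsto (fun k : ℕ => ‖c + k‖) atTop atTop := by
  refine tendsto_atTop_mono (fun k => ?_)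
    (tendsto_atTop_add_const_left atTop c.re tendsto_natCast_atTop_atTop)
  simpa using Complex.re_le_norm (c + k)

theorem summable_norm_besselTerm (ν : ℂ) (x : ℝ) : Summable fun k => ‖besselTerm ν x k‖ := by
  have hfar : ∀ᶠ k : ℕ in atTop, |ν.re| < k :=
    tendsto_natCast_atTop_atTop.eventually_gt_atTop |ν.re|
  have hterm_ne : ∀ᶠ k in atTop, besselTerm ν x k ≠ 0 := by
    filter_upwards [hfar] with k hk
    have hre : 0 < (ν + k + 1).re := by
      simp only [Complex.add_re, Complex.natCast_re, Complex.one_re]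
      linarith [neg_abs_le ν.re]
    exact div_ne_zero (mul_ne_zero (pow_ne_zero _ (neg_ne_zero.2 one_ne_zero))
      (Complex.exp_ne_zero _)) (mul_ne_zero (Nat.cast_ne_zero.2 k.factorial_ne_zero)
        (Complex.Gamma_ne_zero_of_re_pos hre))
  have hratio : Tendsto (fun k : ℕ => ‖Complex.exp (2 * Real.log (x / 2))‖ /
      (‖(1 : ℂ) + k‖ * ‖(ν + 1) + k‖)) atTop (𝓝 0) :=
    ((tendsto_norm_add_natCast_atTop 1).atTop_mul_atTop₀
      (tendsto_norm_add_natCast_atTop (ν + 1))).const_div_atTop _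
  refine summable_of_ratio_test_tendsto_lt_one zero_lt_one
    (hterm_ne.mono fun k => norm_ne_zero_iff.2) (hratio.congr' ?_)
  filter_upwards [hterm_ne, hfar] with k hk hfar
  have hne : ν + k + 1 ≠ 0 := fun h => by
    have := congrArg Complex.re h
    simp only [Complex.add_re, Complex.natCast_re, Complex.one_re, Complex.zero_re] at this
    linarith [neg_abs_le ν.re]
  rw [norm_norm, norm_norm, besselTerm_succ ν x hne, norm_mul,
    mul_div_cancel_left₀ _ (norm_ne_zero_iff.2 hk), norm_div, norm_neg, norm_mul,
    add_comm (1 : ℂ), add_right_comm ν 1]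

@[fun_prop]
theorem measurable_besselTerm (ν : ℂ) (k : ℕ) : Measurable fun x => besselTerm ν x k := by
  unfold besselTerm
  fun_prop

@[fun_prop]
theorem measurable_besselJ (ν : ℂ) : Measurable (besselJ ν) :=
  measurable_of_tendsto_metrizable
    (f := fun (n : ℕ) x => ∑ k ∈ Finset.range n, besselTerm ν x k)
    (fun n => by fun_prop)
    (tendsto_pi_nhds.2 fun x => (summable_norm_besselTerm ν x).of_norm.hasSum.tendsto_sum_nat)

theorem choose_mul_factorial_mul_Gamma {w : ℂ} (hw : -1 < w.re) (m : ℕ) :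
    Ring.choose (w + m) m * m ! * Complex.Gamma (w + 1) = Complex.Gamma (w + m + 1) := by
  have hne : ∀ k : ℕ, w + 1 ≠ -k := fun k h => by
    have := congrArg Complex.re h
    simp only [Complex.add_re, Complex.one_re, Complex.neg_re, Complex.natCast_re] at this
    linarith [(Nat.cast_nonneg k : (0 : ℝ) ≤ k)]
  have hpoch := Ring.factorial_nsmul_multichoose_eq_ascPochhammer (w + 1) m
  rw [Ring.multichoose_eq, nsmul_eq_mul, Polynomial.ascPochhammer_smeval_eq_eval,
    ← Complex.Gamma_add_nat_div_Gamma_eq _ hne, eq_div_iff (Complex.Gamma_ne_zero hne),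
    show w + 1 + m - 1 = w + m by ring, add_right_comm w 1] at hpoch
  rw [← hpoch]
  ring

theorem Gamma_add_natCast_add_one_ne_zero {w : ℂ} (hw : -1 < w.re) (k : ℕ) :
    Complex.Gamma (w + k + 1) ≠ 0 := by
  refine Complex.Gamma_ne_zero_of_re_pos ?_
  simp only [Complex.add_re, Complex.natCast_re, Complex.one_re]
  linarith [(Nat.cast_nonneg k : (0 : ℝ) ≤ k)]

/- The Chu–Vandermonde identity for `choose (a + b + 2 * k) k`. -/
theorem sum_antidiagonal_inv_factorial_mul_Gamma {a b : ℂ} (ha : -1 < a.re) (hb : -1 < b.re)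
    (hab : -1 < (a + b).re) (k : ℕ) :
    ∑ ij ∈ antidiagonal k, ((ij.1 ! * Complex.Gamma (a + ij.1 + 1) *
        (ij.2 ! * Complex.Gamma (b + ij.2 + 1)))⁻¹ : ℂ) =
      Complex.Gamma (a + b + 2 * k + 1) / (k ! * Complex.Gamma (a + k + 1) *
        Complex.Gamma (b + k + 1) * Complex.Gamma (a + b + k + 1)) := by
  have hfact : ∀ m : ℕ, (m ! : ℂ) ≠ 0 := fun m => Nat.cast_ne_zero.2 m.factorial_ne_zero
  have hre : ∀ {w : ℂ} (m : ℕ), -1 < w.re → -1 < (w + m).re := fun {w} m hw => by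
    rw [Complex.add_re, Complex.natCast_re]
    linarith [(Nat.cast_nonneg m : (0 : ℝ) ≤ m)]
  have htotal := choose_mul_factorial_mul_Gamma (hre k hab) k
  rw [show a + b + k + k = (b + k) + (a + k) by ring, Ring.add_choose_eq k (Commute.all _ _),
    show (b + k) + (a + k) + 1 = a + b + 2 * k + 1 by ring] at htotal
  have hA := Gamma_add_natCast_add_one_ne_zero ha
  have hB := Gamma_add_natCast_add_one_ne_zero hb
  rw [← htotal, eq_div_iff (by simp [hA, hB, hfact, Gamma_add_natCast_add_one_ne_zero hab]),
    Finset.sum_mul, Finset.sum_mul, Finset.sum_mul]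
  refine Finset.sum_congr rfl fun ⟨i, j⟩ hij => ?_
  obtain rfl : i + j = k := by simpa using hij
  have hi := choose_mul_factorial_mul_Gamma (hre j hb) i
  have hj := choose_mul_factorial_mul_Gamma (hre i ha) j
  rw [show b + j + i = b + (i + j : ℕ) by push_cast; ring] at hi
  rw [show a + i + j = a + (i + j : ℕ) by push_cast; ring] at hj
  rw [← hi, ← hj]
  have := hA i; have := hB j; have := hfact i; have := hfact j
  field_simp

theorem sum_antidiagonal_besselTerm {a b : ℂ} (ha : -1 < a.re) (hb : -1 < b.re)
    (hab : -1 < (a + b).re) {x : ℝ} (hx : 0 < x) (k : ℕ) :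
    ∑ ij ∈ antidiagonal k, besselTerm a x ij.1 * besselTerm b x ij.2 =
      besselTerm (a + b) x k * (Complex.Gamma (a + b + 2 * k + 1) /
        (Complex.Gamma (a + k + 1) * Complex.Gamma (b + k + 1))) := by
  have hx2 : ((x / 2 : ℝ) : ℂ) ≠ 0 := by exact_mod_cast (half_pos hx).ne'
  have hterm : ∀ ij ∈ antidiagonal k, besselTerm a x ij.1 * besselTerm b x ij.2 =
      (-1) ^ k * ((x / 2 : ℝ) : ℂ) ^ (a + b + 2 * k) * ((ij.1 ! * Complex.Gamma (a + ij.1 + 1) *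
        (ij.2 ! * Complex.Gamma (b + ij.2 + 1)))⁻¹ : ℂ) := by
    rintro ⟨i, j⟩ hij
    obtain rfl : i + j = k := by simpa using hij
    rw [besselTerm_of_pos a hx, besselTerm_of_pos b hx, pow_add,
      show a + b + 2 * (i + j : ℕ) = (a + 2 * i) + (b + 2 * j) by push_cast; ring,
      Complex.cpow_add (a + 2 * i) (b + 2 * j) hx2]
    ring
  rw [Finset.sum_congr rfl hterm, ← Finset.mul_sum,
    sum_antidiagonal_inv_factorial_mul_Gamma ha hb hab, besselTerm_of_pos _ hx]
  ring

/-! ### Trigonometric beta integrals -/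

theorem setIntegral_Ioo_neg_comp_neg {E : Type*} [NormedAddCommGroup E] [NormedSpace ℝ E]
    (f : ℝ → E) (a : ℝ) :
    ∫ θ in Ioo (-a) a, f (-θ) = ∫ θ in Ioo (-a) a, f θ := by
  simpa using (Measure.measurePreserving_neg (volume : Measure ℝ)).setIntegral_preimage_emb
    (MeasurableEquiv.neg ℝ).measurableEmbedding f (Ioo (-a) a)

theorem integrableOn_Ioo_neg_of_even {E : Type*} [NormedAddCommGroup E] {f : ℝ → E}
    (hf : ∀ θ, f (-θ) = f θ) {a : ℝ} (ha : 0 < a) (hint : IntegrableOn f (Ioo 0 a)) :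
    IntegrableOn f (Ioo (-a) a) := by
  have hneg : IntegrableOn f (Ioo (-a) 0) := by
    have := ((Measure.measurePreserving_neg (volume : Measure ℝ)).integrableOn_comp_preimage
      (MeasurableEquiv.neg ℝ).measurableEmbedding (f := f) (s := Ioo 0 a)).2 hint
    simpa [Function.comp_def, hf] using this
  rw [← Ioo_union_Ico_eq_Ioo (neg_lt_zero.2 ha) ha.le]
  exact hneg.union ((integrableOn_Ico_iff_integrableOn_Ioo (by simp)).2 hint)

theorem setIntegral_Ioo_neg_of_even {E : Type*} [NormedAddCommGroup E] [NormedSpace ℝ E]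
    {f : ℝ → E} (hf : ∀ θ, f (-θ) = f θ) {a : ℝ} (ha : 0 < a) (hint : IntegrableOn f (Ioo 0 a)) :
    ∫ θ in Ioo (-a) a, f θ = (2 : ℝ) • ∫ θ in Ioo 0 a, f θ := by
  have hfull := integrableOn_Ioo_neg_of_even hf ha hint
  have hneg : ∫ θ in Ioo (-a) 0, f θ = ∫ θ in Ioo 0 a, f θ := by
    have := (Measure.measurePreserving_neg (volume : Measure ℝ)).setIntegral_preimage_emb
      (MeasurableEquiv.neg ℝ).measurableEmbedding f (Ioo 0 a)
    simpa [hf] using this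
  rw [← Ioo_union_Ico_eq_Ioo (neg_lt_zero.2 ha) ha.le] at hfull ⊢
  rw [setIntegral_union (Ico_disjoint_Ico_same.mono_left Ioo_subset_Ico_self) measurableSet_Ico
    hfull.left_of_union hfull.right_of_union, hneg, integral_Ico_eq_integral_Ioo, two_smul]

theorem sin_pos_and_cos_pos_of_mem_Ioo {θ : ℝ} (hθ : θ ∈ Ioo 0 (π / 2)) :
    0 < Real.sin θ ∧ 0 < Real.cos θ :=
  ⟨Real.sin_pos_of_pos_of_lt_pi hθ.1 (by linarith [hθ.2, Real.pi_pos]),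
    Real.cos_pos_of_mem_Ioo ⟨by linarith [hθ.1, Real.pi_pos], hθ.2⟩⟩

theorem image_sin_sq_Ioo : (fun θ => Real.sin θ ^ 2) '' Ioo 0 (π / 2) = Ioo 0 1 := by
  ext x
  constructor
  · rintro ⟨θ, hθ, rfl⟩
    obtain ⟨hsin, hcos⟩ := sin_pos_and_cos_pos_of_mem_Ioo hθ
    exact ⟨by positivity, by nlinarith [Real.sin_sq_add_cos_sq θ]⟩
  · rintro ⟨hx0, hx1⟩
    refine ⟨Real.arcsin √x, ⟨Real.arcsin_pos.2 (Real.sqrt_pos.2 hx0), ?_⟩, ?_⟩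
    · rw [Real.arcsin_lt_pi_div_two, Real.sqrt_lt' one_pos]
      simpa using hx1
    · simp only
      rw [Real.sin_arcsin (by linarith [Real.sqrt_nonneg x]) (Real.sqrt_le_one.2 hx1.le),
        Real.sq_sqrt hx0.le]

theorem injOn_sin_sq_Ioo : InjOn (fun θ => Real.sin θ ^ 2) (Ioo 0 (π / 2)) := by
  intro θ hθ ψ hψ hsq
  have hsub : Ioo 0 (π / 2) ⊆ Icc (-(π / 2)) (π / 2) := fun x hx =>
    ⟨by linarith [hx.1, Real.pi_pos], hx.2.le⟩
  exact Real.injOn_sin (hsub hθ) (hsub hψ) ((sq_eq_sq₀ (sin_pos_and_cos_pos_of_mem_Ioo hθ).1.le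
    (sin_pos_and_cos_pos_of_mem_Ioo hψ).1.le).1 hsq)

theorem hasDerivWithinAt_sin_sq (s : Set ℝ) (θ : ℝ) :
    HasDerivWithinAt (fun θ => Real.sin θ ^ 2) (2 * Real.sin θ * Real.cos θ) s θ := by
  simpa using ((Real.hasDerivAt_sin θ).fun_pow 2).hasDerivWithinAt

theorem beta_integrand_sin_sq (a b : ℂ) {θ : ℝ} (hθ : θ ∈ Ioo 0 (π / 2)) :
    |2 * Real.sin θ * Real.cos θ| • (((Real.sin θ ^ 2 : ℝ) : ℂ) ^ (a - 1) *
        (1 - ((Real.sin θ ^ 2 : ℝ) : ℂ)) ^ (b - 1)) =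
      2 * ((Real.sin θ : ℂ) ^ (2 * a - 1) * (Real.cos θ : ℂ) ^ (2 * b - 1)) := by
  obtain ⟨hsin, hcos⟩ := sin_pos_and_cos_pos_of_mem_Ioo hθ
  have hsq_cpow : ∀ {s : ℝ} (c : ℂ), 0 < s →
      s * ((s ^ 2 : ℝ) : ℂ) ^ (c - 1) = (s : ℂ) ^ (2 * c - 1) := by
    intro s c hs
    have hs' : (s : ℂ) ≠ 0 := by exact_mod_cast hs.ne'
    rw [sq, Complex.ofReal_mul, Complex.mul_cpow_ofReal_nonneg hs.le hs.le,
      show 2 * c - 1 = 1 + (c - 1) + (c - 1) by ring, Complex.cpow_add _ _ hs',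
      Complex.cpow_add _ _ hs', Complex.cpow_one, mul_assoc]
  have hcos_sq : 1 - ((Real.sin θ ^ 2 : ℝ) : ℂ) = ((Real.cos θ ^ 2 : ℝ) : ℂ) := by
    rw [Real.cos_sq', Complex.ofReal_sub, Complex.ofReal_one]
  rw [abs_of_pos (by positivity), hcos_sq, Complex.real_smul, ← hsq_cpow a hsin,
    ← hsq_cpow b hcos]
  push_cast
  ring

theorem integrableOn_sin_cpow_mul_cos_cpow {a b : ℂ} (ha : 0 < a.re) (hb : 0 < b.re) :
    IntegrableOn (fun θ : ℝ => (Real.sin θ : ℂ) ^ (2 * a - 1) * (Real.cos θ : ℂ) ^ (2 * b - 1))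
      (Ioo 0 (π / 2)) := by
  have h := Complex.betaIntegral_convergent ha hb
  rw [intervalIntegrable_iff_integrableOn_Ioo_of_le (by simp), ← image_sin_sq_Ioo,
    integrableOn_image_iff_integrableOn_abs_deriv_smul measurableSet_Ioo
      (fun θ _ => hasDerivWithinAt_sin_sq _ θ) injOn_sin_sq_Ioo,
    integrableOn_congr_fun (fun θ hθ => beta_integrand_sin_sq a b hθ) measurableSet_Ioo] at h
  exact (integrable_const_mul_iff (isUnit_iff_ne_zero.2 two_ne_zero) _).1 h

theorem two_mul_integral_sin_cpow_mul_cos_cpow (a b : ℂ) :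
    2 * ∫ θ in Ioo 0 (π / 2), (Real.sin θ : ℂ) ^ (2 * a - 1) * (Real.cos θ : ℂ) ^ (2 * b - 1) =
      Complex.betaIntegral a b := by
  rw [Complex.betaIntegral, intervalIntegral.integral_of_le zero_le_one,
    integral_Ioc_eq_integral_Ioo, ← image_sin_sq_Ioo,
    integral_image_eq_integral_abs_deriv_smul measurableSet_Ioo
      (fun θ _ => hasDerivWithinAt_sin_sq _ θ) injOn_sin_sq_Ioo,
    setIntegral_congr_fun measurableSet_Ioo fun θ hθ => beta_integrand_sin_sq a b hθ,
    integral_const_mul]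

theorem re_add_half_pos {z : ℂ} (hz : -(1 / 2) < z.re) : 0 < (z + 1 / 2).re := by
  simp only [Complex.add_re]; norm_num; linarith

theorem re_natCast_add_half_pos (k : ℕ) : 0 < (k + 1 / 2 : ℂ).re :=
  re_add_half_pos (by rw [Complex.natCast_re]; linarith [(Nat.cast_nonneg k : (0 : ℝ) ≤ k)])

theorem sin_cpow_mul_cos_cpow_add_half (z : ℂ) (k : ℕ) (θ : ℝ) :
    (Real.sin θ : ℂ) ^ (2 * (k + 1 / 2 : ℂ) - 1) * (Real.cos θ : ℂ) ^ (2 * (z + 1 / 2) - 1) =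
      (Real.cos θ : ℂ) ^ (2 * z) * (Real.sin θ : ℂ) ^ (2 * k) := by
  rw [show 2 * (k + 1 / 2 : ℂ) - 1 = (2 * k : ℕ) by push_cast; ring, Complex.cpow_natCast,
    show 2 * (z + 1 / 2) - 1 = 2 * z by ring, mul_comm]

theorem cos_cpow_mul_sin_pow_neg (z : ℂ) (k : ℕ) (θ : ℝ) :
    (Real.cos (-θ) : ℂ) ^ (2 * z) * (Real.sin (-θ) : ℂ) ^ (2 * k) =
      (Real.cos θ : ℂ) ^ (2 * z) * (Real.sin θ : ℂ) ^ (2 * k) := by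
  rw [Real.cos_neg, Real.sin_neg, Complex.ofReal_neg, (even_two_mul k).neg_pow]

theorem integrableOn_Ioo_zero_cos_cpow_mul_sin_pow {z : ℂ} (hz : -(1 / 2) < z.re) (k : ℕ) :
    IntegrableOn (fun θ : ℝ => (Real.cos θ : ℂ) ^ (2 * z) * (Real.sin θ : ℂ) ^ (2 * k))
      (Ioo 0 (π / 2)) := by
  simpa only [sin_cpow_mul_cos_cpow_add_half] using integrableOn_sin_cpow_mul_cos_cpow
    (re_natCast_add_half_pos k) (re_add_half_pos hz)

theorem integral_cos_cpow_mul_sin_pow {z : ℂ} (hz : -(1 / 2) < z.re) (k : ℕ) :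
    ∫ θ in Ioo (-(π / 2)) (π / 2), (Real.cos θ : ℂ) ^ (2 * z) * (Real.sin θ : ℂ) ^ (2 * k) =
      Complex.Gamma (k + 1 / 2) * Complex.Gamma (z + 1 / 2) / Complex.Gamma (z + k + 1) := by
  have hbeta := two_mul_integral_sin_cpow_mul_cos_cpow (k + 1 / 2) (z + 1 / 2)
  simp only [sin_cpow_mul_cos_cpow_add_half] at hbeta
  rw [setIntegral_Ioo_neg_of_even (cos_cpow_mul_sin_pow_neg z k) Real.pi_div_two_pos
      (integrableOn_Ioo_zero_cos_cpow_mul_sin_pow hz k), Complex.real_smul, Complex.ofReal_ofNat,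
    hbeta, Complex.betaIntegral_eq_Gamma_mul_div _ _ (re_natCast_add_half_pos k)
      (re_add_half_pos hz)]
  ring_nf

theorem integrableOn_cos_cpow {z : ℂ} (hz : -(1 / 2) < z.re) :
    IntegrableOn (fun θ : ℝ => (Real.cos θ : ℂ) ^ (2 * z)) (Ioo (-(π / 2)) (π / 2)) := by
  simpa using integrableOn_Ioo_neg_of_even (cos_cpow_mul_sin_pow_neg z 0) Real.pi_div_two_pos
    (integrableOn_Ioo_zero_cos_cpow_mul_sin_pow hz 0)

theorem integral_cos_cpow {z : ℂ} (hz : -(1 / 2) < z.re) :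
    ∫ θ in Ioo (-(π / 2)) (π / 2), (Real.cos θ : ℂ) ^ (2 * z) =
      √π * Complex.Gamma (z + 1 / 2) / Complex.Gamma (z + 1) := by
  have h := integral_cos_cpow_mul_sin_pow hz 0
  rw [Nat.cast_zero, zero_add, add_zero, Complex.Gamma_one_half_eq] at h
  simpa [Real.sqrt_eq_rpow, Complex.ofReal_cpow Real.pi_pos.le] using h

theorem integral_cos_cpow_duplication {z : ℂ} (hz : -(1 / 2) < z.re) :
    (2 : ℂ) ^ (2 * z) * ∫ θ in Ioo (-(π / 2)) (π / 2), (Real.cos θ : ℂ) ^ (2 * z) =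
      π * (Complex.Gamma (2 * z + 1) / (Complex.Gamma (z + 1) * Complex.Gamma (z + 1))) := by
  have hGamma : Complex.Gamma (z + 1) ≠ 0 :=
    Complex.Gamma_ne_zero_of_re_pos (by simp; linarith)
  have hdup := Complex.Gamma_mul_Gamma_add_half (z + 1 / 2)
  rw [show z + 1 / 2 + 1 / 2 = z + 1 by ring, show 2 * (z + 1 / 2) = 2 * z + 1 by ring,
    show 1 - (2 * z + 1) = -(2 * z) by ring, Complex.cpow_neg] at hdup
  have h2 : (2 : ℂ) ^ (2 * z) ≠ 0 := by simp [Complex.cpow_eq_zero_iff]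
  have hsqrt : (√π : ℂ) * √π = π := by
    rw [← Complex.ofReal_mul, Real.mul_self_sqrt Real.pi_pos.le]
  rw [integral_cos_cpow hz, ← hsqrt, eq_div_iff hGamma |>.2 hdup]
  field_simp

/-! ### The integrals of Neumann and Poisson -/

theorem hasSum_integral_besselTerm_mul_cos {ν : ℂ} (hν : -1 < ν.re) {x : ℝ} (hx : 0 < x) :
    HasSum (fun k => ∫ θ in Ioo (-(π / 2)) (π / 2), besselTerm ν (x * Real.cos θ) k)
      (∫ θ in Ioo (-(π / 2)) (π / 2), besselJ ν (x * Real.cos θ)) := by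
  have hW : IntegrableOn (fun θ : ℝ => (Real.cos θ : ℂ) ^ ν) (Ioo (-(π / 2)) (π / 2)) := by
    simpa [mul_div_cancel₀] using integrableOn_cos_cpow (z := ν / 2) (by simp; linarith)
  refine hasSum_integral_of_dominated_convergence
    (fun k θ => ‖besselTerm ν x k‖ * ‖(Real.cos θ : ℂ) ^ ν‖)
    (fun k => ((measurable_besselTerm ν k).comp (by fun_prop)).aestronglyMeasurable) (fun k => ?_)
    (ae_of_all _ fun θ => (summable_norm_besselTerm ν x).mul_right _)
    (by simpa only [tsum_mul_right] using hW.norm.const_mul _)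
    (ae_of_all _ fun θ => (summable_norm_besselTerm ν _).of_norm.hasSum)
  refine ae_restrict_of_forall_mem measurableSet_Ioo fun θ hθ => ?_
  have hcos := Real.cos_pos_of_mem_Ioo hθ
  rw [besselTerm_mul ν hx hcos, norm_mul]
  gcongr
  rw [Complex.norm_cpow_eq_rpow_re_of_pos hcos, Complex.norm_cpow_eq_rpow_re_of_pos hcos]
  exact Real.rpow_le_rpow_of_exponent_ge hcos (Real.cos_le_one θ) (by simp)

theorem integral_besselTerm_mul_cos {z : ℂ} (hz : -(1 / 2) < z.re) {x : ℝ} (hx : 0 < x) (k : ℕ) :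
    ∫ θ in Ioo (-(π / 2)) (π / 2), besselTerm (2 * z) (2 * x * Real.cos θ) k =
      π * ∑ ij ∈ antidiagonal k,
        besselTerm z x ij.1 * besselTerm z x ij.2 := by
  have hzk : -(1 / 2) < (z + k).re := by
    rw [Complex.add_re, Complex.natCast_re]; linarith [(Nat.cast_nonneg k : (0 : ℝ) ≤ k)]
  have hscale : ∀ θ ∈ Ioo (-(π / 2)) (π / 2), besselTerm (2 * z) (2 * x * Real.cos θ) k =
      besselTerm (2 * z) x k * 2 ^ (2 * (z + k)) * (Real.cos θ : ℂ) ^ (2 * (z + k)) := by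
    intro θ hθ
    rw [besselTerm_mul _ (by positivity) (Real.cos_pos_of_mem_Ioo hθ), mul_comm 2 x,
      besselTerm_mul _ hx two_pos, mul_add 2 z, Complex.ofReal_ofNat]
  have hdup := integral_cos_cpow_duplication hzk
  rw [setIntegral_congr_fun measurableSet_Ioo hscale, integral_const_mul, mul_assoc, hdup,
    sum_antidiagonal_besselTerm (by linarith) (by linarith) (by rw [Complex.add_re]; linarith) hx,
    ← two_mul, mul_add 2 z]
  ring

theorem besselJ_sq_eq_integral {z : ℂ} (hz : -(1 / 2) < z.re) {x : ℝ} (hx : 0 < x) :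
    besselJ z x ^ 2 =
      1 / π * ∫ θ in Ioo (-(π / 2)) (π / 2), besselJ (2 * z) (2 * x * Real.cos θ) := by
  have hsum := summable_norm_besselTerm z x
  have hpi : (π : ℂ) ≠ 0 := Complex.ofReal_ne_zero.2 Real.pi_ne_zero
  rw [← (hasSum_integral_besselTerm_mul_cos (by simp; linarith) (by positivity)).tsum_eq]
  simp only [integral_besselTerm_mul_cos hz hx]
  rw [tsum_mul_left, ← mul_assoc, one_div_mul_cancel hpi, one_mul, sq, besselJ_eq_tsum,
    tsum_mul_tsum_eq_tsum_sum_antidiagonal_of_summable_norm hsum hsum]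

theorem Gamma_natCast_add_half (k : ℕ) :
    Complex.Gamma (k + 1 / 2) * k ! * 2 ^ (2 * k) = (2 * k) ! * √π := by
  have hdup := Complex.Gamma_mul_Gamma_add_half (k + 1 / 2)
  rw [show (k + 1 / 2 + 1 / 2 : ℂ) = k + 1 by ring, Complex.Gamma_nat_eq_factorial,
    show 2 * (k + 1 / 2 : ℂ) = (2 * k : ℕ) + 1 by push_cast; ring, Complex.Gamma_nat_eq_factorial,
    show (1 : ℂ) - ((2 * k : ℕ) + 1) = -(2 * k : ℕ) by ring, Complex.cpow_neg,
    Complex.cpow_natCast] at hdup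
  rw [hdup]
  field_simp

theorem besselTerm_eq_integral {z : ℂ} (hz : -(1 / 2) < z.re) {y : ℝ} (hy : 0 < y) (k : ℕ) :
    besselTerm z y k = ((y / 2 : ℝ) : ℂ) ^ z / (√π * Complex.Gamma (z + 1 / 2)) *
      ∫ θ in Ioo (-(π / 2)) (π / 2), (Real.cos θ : ℂ) ^ (2 * z) *
        ((-1) ^ k * (y * Real.sin θ : ℂ) ^ (2 * k) / (2 * k) !) := by
  have hy2 : ((y / 2 : ℝ) : ℂ) ≠ 0 := by exact_mod_cast (half_pos hy).ne'
  have hGamma : Complex.Gamma (z + 1 / 2) ≠ 0 :=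
    Complex.Gamma_ne_zero_of_re_pos (re_add_half_pos hz)
  have hGamma' := Gamma_add_natCast_add_one_ne_zero (show -1 < z.re by linarith) k
  have hsqrt : (√π : ℂ) ≠ 0 := Complex.ofReal_ne_zero.2 (Real.sqrt_pos.2 Real.pi_pos).ne'
  have hfact : ((2 * k) ! : ℂ) ≠ 0 := Nat.cast_ne_zero.2 (2 * k).factorial_ne_zero
  have hfact' : (k ! : ℂ) ≠ 0 := Nat.cast_ne_zero.2 k.factorial_ne_zero
  have hmoment : ∀ θ : ℝ, (Real.cos θ : ℂ) ^ (2 * z) *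
      ((-1) ^ k * (y * Real.sin θ : ℂ) ^ (2 * k) / (2 * k) !) =
      (-1) ^ k * (y : ℂ) ^ (2 * k) / (2 * k) ! *
        ((Real.cos θ : ℂ) ^ (2 * z) * (Real.sin θ : ℂ) ^ (2 * k)) := fun θ => by
    rw [mul_pow]; ring
  simp only [hmoment]
  rw [integral_const_mul, integral_cos_cpow_mul_sin_pow hz k, besselTerm_of_pos z hy,
    Complex.cpow_add _ _ hy2, show (2 * k : ℂ) = (2 * k : ℕ) by push_cast; rfl,
    Complex.cpow_natCast, Complex.ofReal_div, Complex.ofReal_ofNat, div_pow]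
  have hhalf := Gamma_natCast_add_half k
  generalize Complex.Gamma (z + 1 / 2) = G at hGamma ⊢
  generalize Complex.Gamma (k + 1 / 2) = H at hhalf ⊢
  field_simp
  linear_combination -(((y : ℂ) / 2) ^ z * y ^ (2 * k)) * hhalf

theorem integral_cos_cpow_mul_exp_I {z : ℂ} (hz : -(1 / 2) < z.re) (y : ℝ) :
    ∫ θ in Ioo (-(π / 2)) (π / 2),
        (Real.cos θ : ℂ) ^ (2 * z) * Complex.exp (Complex.I * (y * Real.sin θ : ℝ)) =
      ∫ θ in Ioo (-(π / 2)) (π / 2),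
        (Real.cos θ : ℂ) ^ (2 * z) * Complex.cos (y * Real.sin θ : ℝ) := by
  set f : ℝ → ℂ := fun θ =>
    (Real.cos θ : ℂ) ^ (2 * z) * Complex.exp (Complex.I * (y * Real.sin θ : ℝ)) with hf
  have hint : IntegrableOn f (Ioo (-(π / 2)) (π / 2)) :=
    (integrableOn_cos_cpow hz).mul_bdd (c := 1) (by fun_prop)
      (ae_of_all _ fun θ => (Complex.norm_exp_I_mul_ofReal _).le)
  have hint_neg : IntegrableOn (fun θ => f (-θ)) (Ioo (-(π / 2)) (π / 2)) := by
    simp only [hf, Real.cos_neg]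
    exact (integrableOn_cos_cpow hz).mul_bdd (c := 1) (by fun_prop)
      (ae_of_all _ fun θ => (Complex.norm_exp_I_mul_ofReal _).le)
  have hcos : ∀ θ : ℝ, (Real.cos θ : ℂ) ^ (2 * z) * Complex.cos (y * Real.sin θ : ℝ) =
      (f θ + f (-θ)) / 2 := fun θ => by
    simp only [hf, Complex.cos, Real.cos_neg, Real.sin_neg]
    push_cast
    ring_nf
  simp only [hcos]
  rw [integral_div, integral_add hint hint_neg, setIntegral_Ioo_neg_comp_neg]
  ring

theorem besselJ_eq_integral {z : ℂ} (hz : -(1 / 2) < z.re) {y : ℝ} (hy : 0 < y) :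
    besselJ z y = ((y / 2 : ℝ) : ℂ) ^ z / (√π * Complex.Gamma (z + 1 / 2)) *
      ∫ θ in Ioo (-(π / 2)) (π / 2),
        (Real.cos θ : ℂ) ^ (2 * z) * Complex.exp (Complex.I * (y * Real.sin θ : ℝ)) := by
  have hW := integrableOn_cos_cpow hz
  have hsum : HasSum (fun k => ∫ θ in Ioo (-(π / 2)) (π / 2), (Real.cos θ : ℂ) ^ (2 * z) *
        ((-1) ^ k * (y * Real.sin θ : ℂ) ^ (2 * k) / (2 * k) !))
      (∫ θ in Ioo (-(π / 2)) (π / 2),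
        (Real.cos θ : ℂ) ^ (2 * z) * Complex.cos (y * Real.sin θ : ℝ)) := by
    refine hasSum_integral_of_dominated_convergence
      (fun k θ => ‖(Real.cos θ : ℂ) ^ (2 * z)‖ * (y ^ (2 * k) / (2 * k) !))
      (fun k => by fun_prop) (fun k => ae_of_all _ fun θ => ?_)
      (ae_of_all _ fun θ => (Real.hasSum_cosh y).summable.mul_left _)
      (by simpa only [tsum_mul_left] using hW.norm.mul_const _)
      (ae_of_all _ fun θ => by
        simpa only [Complex.ofReal_mul] using (Complex.hasSum_cos _).mul_left _)
    rw [norm_mul]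
    gcongr
    simp only [norm_div, norm_mul, norm_pow, norm_neg, norm_one, one_pow, one_mul,
      Complex.norm_real, Complex.norm_natCast, Real.norm_eq_abs, abs_of_pos hy]
    gcongr
    exact mul_le_of_le_one_right hy.le (Real.abs_sin_le_one θ)
  rw [integral_cos_cpow_mul_exp_I hz, ← hsum.tsum_eq, ← tsum_mul_left]
  exact tsum_congr fun k => besselTerm_eq_integral hz hy k

theorem exists_norm_besselJ_le {z : ℂ} (hz : -(1 / 2) < z.re) :
    ∃ C, ∀ y, 0 < y → ‖besselJ z y‖ ≤ C * y ^ z.re := by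
  refine ⟨2⁻¹ ^ z.re / ‖√π * Complex.Gamma (z + 1 / 2)‖ *
    ∫ θ in Ioo (-(π / 2)) (π / 2), ‖(Real.cos θ : ℂ) ^ (2 * z)‖, fun y hy => ?_⟩
  have hint : ‖∫ θ in Ioo (-(π / 2)) (π / 2), (Real.cos θ : ℂ) ^ (2 * z) *
      Complex.exp (Complex.I * (y * Real.sin θ : ℝ))‖ ≤
        ∫ θ in Ioo (-(π / 2)) (π / 2), ‖(Real.cos θ : ℂ) ^ (2 * z)‖ := by
    refine (norm_integral_le_integral_norm _).trans_eq ?_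
    simp only [norm_mul, Complex.norm_exp_I_mul_ofReal, mul_one]
  rw [besselJ_eq_integral hz hy, norm_mul, norm_div,
    Complex.norm_cpow_eq_rpow_re_of_pos (half_pos hy), div_eq_mul_inv y,
    Real.mul_rpow hy.le (by norm_num)]
  exact (mul_le_mul_of_nonneg_left hint (by positivity)).trans_eq (by ring)

/-! ### The Laplace transform of the Bessel function -/

theorem ofReal_sub_I_mul_mem_slitPlane {p : ℝ} (hp : 0 < p) (s : ℝ) :
    (p : ℂ) - Complex.I * s ∈ Complex.slitPlane :=
  Or.inl (by simpa using hp)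

theorem exists_norm_ofReal_sub_I_mul_cpow_le (c : ℂ) {lo : ℝ} (hlo : 0 < lo) (hi : ℝ) :
    ∃ K, ∀ q ∈ Icc lo hi, ∀ s ∈ Icc (-1 : ℝ) 1, ‖((q : ℂ) - Complex.I * s) ^ c‖ ≤ K := by
  have hcont : ContinuousOn (fun w : ℝ × ℝ => ((w.1 : ℂ) - Complex.I * w.2) ^ c)
      (Icc lo hi ×ˢ Icc (-1) 1) :=
    ContinuousOn.cpow_const (by fun_prop) fun w hw =>
      ofReal_sub_I_mul_mem_slitPlane (hlo.trans_le hw.1.1) w.2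
  obtain ⟨K, hK⟩ := (isCompact_Icc.prod isCompact_Icc).exists_bound_of_continuousOn hcont
  exact ⟨K, fun q hq s hs => hK (q, s) ⟨hq, hs⟩⟩

theorem ofReal_mul_cpow {r : ℝ} (hr : 0 < r) {w : ℂ} (hw : w ≠ 0) (e : ℂ) :
    ((r : ℂ) * w) ^ e = (r : ℂ) ^ e * w ^ e := by
  have hr' : (r : ℂ) ≠ 0 := Complex.ofReal_ne_zero.2 hr.ne'
  rw [Complex.cpow_def_of_ne_zero (mul_ne_zero hr' hw), Complex.log_ofReal_mul hr hw,
    Complex.cpow_def_of_ne_zero hr', Complex.cpow_def_of_ne_zero hw, Complex.ofReal_log hr.le,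
    add_mul, Complex.exp_add]

/-- The integral `∫ cos^{2z} θ (p - i sin θ)^{-e} dθ` over `(-π/2, π/2)`. For `e = z + 1` it is, up
to a constant, the Laplace transform at `p` of Poisson's integral for `J_z`. -/
noncomputable def poissonLaplace (z e : ℂ) (p : ℝ) : ℂ :=
  ∫ θ in Ioo (-(π / 2)) (π / 2),
    (Real.cos θ : ℂ) ^ (2 * z) * ((p : ℂ) - Complex.I * Real.sin θ) ^ (-e)

theorem integrableOn_poissonLaplace {z : ℂ} (hz : -(1 / 2) < z.re) (e : ℂ) {p : ℝ}
    (hp : 0 < p) : IntegrableOn (fun θ : ℝ => (Real.cos θ : ℂ) ^ (2 * z) *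
      ((p : ℂ) - Complex.I * Real.sin θ) ^ (-e)) (Ioo (-(π / 2)) (π / 2)) := by
  obtain ⟨K, hK⟩ := exists_norm_ofReal_sub_I_mul_cpow_le (-e) hp p
  exact (integrableOn_cos_cpow hz).mul_bdd (c := K)
    (Measurable.aestronglyMeasurable (by fun_prop))
    (ae_of_all _ fun θ => hK p ⟨le_rfl, le_rfl⟩ _ (Real.sin_mem_Icc θ))

theorem hasDerivAt_poissonLaplace {z : ℂ} (hz : -(1 / 2) < z.re) (e : ℂ) {p : ℝ}
    (hp : 0 < p) : HasDerivAt (poissonLaplace z e) (-e * poissonLaplace z (e + 1) p) p := by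
  obtain ⟨K, hK⟩ := exists_norm_ofReal_sub_I_mul_cpow_le (-(e + 1)) (half_pos hp) (2 * p)
  unfold poissonLaplace
  rw [← integral_const_mul]
  refine (hasDerivAt_integral_of_dominated_loc_of_deriv_le
    (F := fun (q θ : ℝ) => (Real.cos θ : ℂ) ^ (2 * z) *
      ((q : ℂ) - Complex.I * Real.sin θ) ^ (-e))
    (F' := fun (q θ : ℝ) => -e * ((Real.cos θ : ℂ) ^ (2 * z) *
      ((q : ℂ) - Complex.I * Real.sin θ) ^ (-(e + 1))))
    (bound := fun θ => ‖e‖ * (‖(Real.cos θ : ℂ) ^ (2 * z)‖ * K))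
    (Icc_mem_nhds (show p / 2 < p by linarith) (show p < 2 * p by linarith))
    (Eventually.of_forall fun q => Measurable.aestronglyMeasurable (by fun_prop))
    (integrableOn_poissonLaplace hz e hp) (Measurable.aestronglyMeasurable (by fun_prop))
    (ae_of_all _ fun θ q hq => ?_) (((integrableOn_cos_cpow hz).norm.mul_const K).const_mul ‖e‖)
    (ae_of_all _ fun θ q hq => ?_)).2
  · rw [norm_mul, norm_mul, norm_neg]
    gcongr
    exact hK q hq _ (Real.sin_mem_Icc θ)
  · have hbase : HasDerivAt (fun q : ℝ => (q : ℂ) - Complex.I * Real.sin θ) 1 q :=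
      (Complex.ofRealCLM.hasDerivAt (x := q)).sub_const _
    have hslit := ofReal_sub_I_mul_mem_slitPlane
      (show 0 < q from (half_pos hp).trans_le hq.1) (Real.sin θ)
    have hpow := ((hasDerivAt_id' _).cpow_const (c := -e) hslit).comp_of_eq q hbase rfl
    refine (hpow.const_mul ((Real.cos θ : ℂ) ^ (2 * z))).congr_deriv ?_
    rw [show -(e + 1) = -e - 1 by ring]
    ring

theorem tendsto_cpow_mul_poissonLaplace {z : ℂ} (hz : -(1 / 2) < z.re) (e : ℂ) :
    Tendsto (fun p : ℝ => (p : ℂ) ^ e * poissonLaplace z e p) atTop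
      (𝓝 (∫ θ in Ioo (-(π / 2)) (π / 2), (Real.cos θ : ℂ) ^ (2 * z))) := by
  obtain ⟨K, hK⟩ := exists_norm_ofReal_sub_I_mul_cpow_le (-e) one_pos 1
  have hrescale : ∀ {p : ℝ}, 0 < p → (p : ℂ) ^ e * poissonLaplace z e p =
      ∫ θ in Ioo (-(π / 2)) (π / 2), (Real.cos θ : ℂ) ^ (2 * z) *
        (((1 : ℝ) : ℂ) - Complex.I * (Real.sin θ / p : ℝ)) ^ (-e) := fun {p} hp => by
    have hp' : (p : ℂ) ≠ 0 := Complex.ofReal_ne_zero.2 hp.ne'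
    have hpe : (p : ℂ) ^ e ≠ 0 := by simp [Complex.cpow_eq_zero_iff, hp']
    rw [poissonLaplace, ← integral_const_mul]
    refine integral_congr_ae (ae_of_all _ fun θ => ?_)
    have hfactor : (p : ℂ) - Complex.I * Real.sin θ =
        p * (((1 : ℝ) : ℂ) - Complex.I * (Real.sin θ / p : ℝ)) := by
      push_cast
      field_simp
    simp only
    rw [hfactor, ofReal_mul_cpow hp
      (Complex.slitPlane_ne_zero (ofReal_sub_I_mul_mem_slitPlane one_pos _)), Complex.cpow_neg _ e]
    rw [mul_left_comm, mul_inv_cancel_left₀ hpe]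
  refine Tendsto.congr' ((eventually_gt_atTop 0).mono fun p hp => (hrescale hp).symm) ?_
  refine tendsto_integral_filter_of_dominated_convergence
    (fun θ => ‖(Real.cos θ : ℂ) ^ (2 * z)‖ * K)
    (Eventually.of_forall fun p => Measurable.aestronglyMeasurable (by fun_prop))
    ((eventually_ge_atTop 1).mono fun p hp => ae_of_all _ fun θ => ?_)
    ((integrableOn_cos_cpow hz).norm.mul_const K) (ae_of_all _ fun θ => ?_)
  · rw [norm_mul]
    gcongr
    refine hK 1 ⟨le_rfl, le_rfl⟩ _ (abs_le.1 ?_)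
    rw [abs_div, abs_of_pos (one_pos.trans_le hp)]
    exact div_le_one_of_le₀ ((Real.abs_sin_le_one θ).trans hp) (by linarith)
  · have hbase : Tendsto (fun p : ℝ => ((1 : ℝ) : ℂ) - Complex.I * (Real.sin θ / p : ℝ)) atTop
        (𝓝 (((1 : ℝ) : ℂ) - Complex.I * (0 : ℝ))) :=
      (((Complex.continuous_ofReal.tendsto 0).comp
        (tendsto_const_nhds.div_atTop tendsto_id)).const_mul _).const_sub _
    have hpow := (hbase.cpow (tendsto_const_nhds (x := -e))
      (ofReal_sub_I_mul_mem_slitPlane one_pos 0)).const_mul ((Real.cos θ : ℂ) ^ (2 * z))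
    simpa using hpow

theorem hasDerivAt_cos_cpow_mul_cpow {z : ℂ} (hz : -(1 / 2) < z.re) {p : ℝ} (hp : 0 < p) {θ : ℝ}
    (hθ : θ ∈ Ioo (-(π / 2)) (π / 2)) :
    HasDerivAt (fun θ : ℝ => (Real.cos θ : ℂ) ^ (2 * z + 1) *
        ((p : ℂ) - Complex.I * Real.sin θ) ^ (-(z + 2)))
      (Complex.I * ((p ^ 2 + 1) * (z + 2) *
          ((Real.cos θ : ℂ) ^ (2 * z) * ((p : ℂ) - Complex.I * Real.sin θ) ^ (-(z + 3))) -
        3 * p * ((Real.cos θ : ℂ) ^ (2 * z) * ((p : ℂ) - Complex.I * Real.sin θ) ^ (-(z + 2))) +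
        (1 - z) * ((Real.cos θ : ℂ) ^ (2 * z) *
          ((p : ℂ) - Complex.I * Real.sin θ) ^ (-(z + 1))))) θ := by
  have hc : Real.cos θ ≠ 0 := (Real.cos_pos_of_mem_Ioo hθ).ne'
  have hslit := ofReal_sub_I_mul_mem_slitPlane hp (Real.sin θ)
  have hq := Complex.slitPlane_ne_zero hslit
  have hz1 : 2 * z + 1 ≠ 0 := fun h => by
    have := congrArg Complex.re h
    simp only [Complex.add_re, Complex.mul_re, Complex.re_ofNat, Complex.im_ofNat, Complex.one_re,
      Complex.zero_re] at this
    linarith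
  have hcos := (hasDerivAt_ofReal_cpow_const hc hz1).scomp θ (Real.hasDerivAt_cos θ)
  have hbase : HasDerivAt (fun θ : ℝ => (p : ℂ) - Complex.I * Real.sin θ)
      (-(Complex.I * (Real.cos θ : ℂ))) θ :=
    (((Real.hasDerivAt_sin θ).ofReal_comp).const_mul Complex.I).const_sub _
  have hpow := ((hasDerivAt_id' _).cpow_const (c := -(z + 2)) hslit).comp_of_eq θ hbase rfl
  refine (hcos.mul hpow).congr_deriv ?_
  have hsq : (Real.cos θ : ℂ) ^ 2 = 1 - (Real.sin θ : ℂ) ^ 2 := by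
    exact_mod_cast congrArg ((↑) : ℝ → ℂ) (Real.cos_sq' θ)
  simp only [Function.comp_apply, Complex.real_smul, add_sub_cancel_right]
  rw [show -(z + 2) - 1 = -(z + 3) by ring, show -(z + 2) = -(z + 3) + 1 by ring,
    show -(z + 1) = -(z + 3) + 2 by ring, Complex.cpow_add _ _ hq, Complex.cpow_add _ _ hq,
    Complex.cpow_add _ _ (Complex.ofReal_ne_zero.2 hc), Complex.cpow_one, Complex.cpow_one,
    Complex.cpow_ofNat, Complex.ofReal_neg]
  generalize ((p : ℂ) - Complex.I * Real.sin θ) ^ (-(z + 3)) = Q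
  linear_combination (Real.cos θ : ℂ) ^ (2 * z) * Q * (Complex.I * (2 + z) * hsq +
    Real.sin θ * (Complex.I * Real.sin θ * (z - 1) - p * (1 + 2 * z)) * Complex.I_sq)

theorem poissonLaplace_recurrence {z : ℂ} (hz : -(1 / 2) < z.re) {p : ℝ} (hp : 0 < p) :
    (p ^ 2 + 1) * (z + 2) * poissonLaplace z (z + 3) p - 3 * p * poissonLaplace z (z + 2) p +
      (1 - z) * poissonLaplace z (z + 1) p = 0 := by
  set U : ℝ → ℂ := fun θ => (Real.cos θ : ℂ) ^ (2 * z + 1) *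
    ((p : ℂ) - Complex.I * Real.sin θ) ^ (-(z + 2)) with hU
  have hz1 : 0 < (2 * z + 1).re := by
    simp only [Complex.add_re, Complex.mul_re, Complex.re_ofNat, Complex.im_ofNat, Complex.one_re]
    linarith
  have hcont : Continuous U :=
    ((Complex.continuous_ofReal_cpow_const hz1).comp Real.continuous_cos).mul <|
      Continuous.cpow (by fun_prop) continuous_const fun θ =>
        ofReal_sub_I_mul_mem_slitPlane hp (Real.sin θ)
  have hend : U (π / 2) - U (-(π / 2)) = 0 := by
    simp [hU, Complex.zero_cpow (fun h : 2 * z + 1 = 0 => by simp [h] at hz1)]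
  have hI := fun e => integrableOn_poissonLaplace hz e hp
  have hI₃ := (hI (z + 3)).const_mul ((p ^ 2 + 1) * (z + 2))
  have hI₂ := (hI (z + 2)).const_mul (3 * p)
  have hI₁ := (hI (z + 1)).const_mul (1 - z)
  have hftc := intervalIntegral.integral_eq_sub_of_hasDerivAt_of_le (by linarith [Real.pi_pos])
    hcont.continuousOn (fun θ hθ => hasDerivAt_cos_cpow_mul_cpow hz hp hθ)
    ((intervalIntegrable_iff_integrableOn_Ioo_of_le (by linarith [Real.pi_pos])).2
      (((hI₃.sub' hI₂).fun_add hI₁).const_mul Complex.I))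
  rw [hend, intervalIntegral.integral_of_le (by linarith [Real.pi_pos]),
    integral_Ioc_eq_integral_Ioo, integral_const_mul,
    integral_add (hI₃.sub' hI₂) hI₁, integral_sub hI₃ hI₂, integral_const_mul,
    integral_const_mul, integral_const_mul] at hftc
  exact (mul_eq_zero.1 hftc).resolve_left Complex.I_ne_zero

theorem eq_of_hasDerivAt_zero_of_tendsto {f : ℝ → ℂ} {a : ℝ} {l : ℂ}
    (hf : ∀ x, a < x → HasDerivAt f 0 x) (hl : Tendsto f atTop (𝓝 l)) {x : ℝ} (hx : a < x) :
    f x = l := by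
  refine tendsto_nhds_unique (tendsto_const_nhds.congr' ?_) hl
  filter_upwards [eventually_gt_atTop a] with y hy
  exact isOpen_Ioi.is_const_of_deriv_eq_zero isPreconnected_Ioi
    (fun t ht => (hf t ht).differentiableAt.differentiableWithinAt) (fun t ht => (hf t ht).deriv)
    hx hy

theorem tendsto_sinh_atTop : Tendsto Real.sinh atTop atTop :=
  tendsto_atTop_mono' _
    ((eventually_ge_atTop 0).mono fun _ hw => Real.self_le_sinh_iff.2 hw) tendsto_id

theorem tendsto_cosh_div_sinh_atTop :
    Tendsto (fun w => Real.cosh w / Real.sinh w) atTop (𝓝 1) := by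
  have hlim : Tendsto (fun w => 1 + Real.exp (-w) / Real.sinh w) atTop (𝓝 (1 + 0)) :=
    (Real.tendsto_exp_neg_atTop_nhds_zero.div_atTop tendsto_sinh_atTop).const_add 1
  rw [add_zero] at hlim
  refine hlim.congr' ((eventually_gt_atTop 0).mono fun w hw => ?_)
  have hS := (Real.sinh_pos_iff.2 hw).ne'
  rw [← Real.cosh_sub_sinh]
  field_simp
  ring

theorem hasDerivAt_poissonLaplace_sinh {z : ℂ} (hz : -(1 / 2) < z.re) (e : ℂ) {w : ℝ}
    (hw : 0 < w) : HasDerivAt (fun w => poissonLaplace z e (Real.sinh w))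
      (Real.cosh w * (-e * poissonLaplace z (e + 1) (Real.sinh w))) w :=
  (hasDerivAt_poissonLaplace hz e (Real.sinh_pos_iff.2 hw)).scomp w (Real.hasDerivAt_sinh w)

theorem hasDerivAt_cexp_mul_ofReal (c : ℂ) (w : ℝ) :
    HasDerivAt (fun w : ℝ => Complex.exp (c * w)) (Complex.exp (c * w) * c) w := by
  have hlin : HasDerivAt (fun w : ℝ => c * (w : ℂ)) c w := by
    simpa using (Complex.ofRealCLM.hasDerivAt (x := w)).const_mul c
  exact hlin.cexp

theorem tendsto_cosh_div_sinh_pow_mul_poissonLaplace {z : ℂ} (hz : -(1 / 2) < z.re) (e : ℂ)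
    (k : ℕ) :
    Tendsto (fun w : ℝ => ((Real.cosh w / Real.sinh w : ℝ) : ℂ) ^ k *
      ((Real.sinh w : ℂ) ^ e * poissonLaplace z e (Real.sinh w))) atTop
      (𝓝 (∫ θ in Ioo (-(π / 2)) (π / 2), (Real.cos θ : ℂ) ^ (2 * z))) := by
  simpa using (((Complex.continuous_ofReal.tendsto 1).comp tendsto_cosh_div_sinh_atTop).pow k).mul
    ((tendsto_cpow_mul_poissonLaplace hz e).comp tendsto_sinh_atTop)

theorem tendsto_exp_neg_mul_poissonLaplace_combination {z : ℂ} (hz : 0 ≤ z.re) :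
    Tendsto (fun w : ℝ => Complex.exp (-z * w) *
      ((Real.sinh w + z * Real.cosh w) * poissonLaplace z (z + 1) (Real.sinh w) -
        (z + 1) * Real.cosh w ^ 2 * poissonLaplace z (z + 2) (Real.sinh w))) atTop (𝓝 0) := by
  have hlim := fun e => tendsto_cosh_div_sinh_pow_mul_poissonLaplace
    (z := z) (by linarith) e
  have hcombination := ((hlim (z + 1) 0).add ((hlim (z + 1) 1).const_mul z)).sub
    ((hlim (z + 2) 2).const_mul (z + 1))
  rw [← one_add_mul, add_comm 1 z, sub_self] at hcombination
  refine squeeze_zero_norm' ?_ (by simpa only [norm_zero] using hcombination.norm)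
  filter_upwards [eventually_ge_atTop 1] with w hw
  have hS : 1 ≤ Real.sinh w := hw.trans (Real.self_le_sinh_iff.2 (by linarith))
  have hS0 : (Real.sinh w : ℂ) ≠ 0 := Complex.ofReal_ne_zero.2 (by linarith)
  have hexp : ‖Complex.exp (-z * w)‖ ≤ ‖(Real.sinh w : ℂ) ^ z‖ := by
    rw [Complex.norm_exp, Complex.norm_cpow_eq_rpow_re_of_pos (by linarith)]
    refine (Real.exp_le_one_iff.2 ?_).trans (Real.one_le_rpow hS hz)
    simpa using mul_nonneg hz (zero_le_one.trans hw)
  rw [norm_mul]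
  refine (mul_le_mul_of_nonneg_right hexp (norm_nonneg _)).trans_eq ?_
  rw [← norm_mul, Complex.cpow_add _ _ hS0, Complex.cpow_add _ _ hS0, Complex.cpow_one,
    Complex.cpow_ofNat, Complex.ofReal_div]
  congr 1
  field_simp

/- In the variable `w`, `poissonLaplace_recurrence` says that
`f w = cosh w * poissonLaplace z (z + 1) (sinh w)` satisfies `f'' = z² f`; the growth at infinity
selects the solution with `f' = -z f`. -/
theorem poissonLaplace_first_order {z : ℂ} (hz : 0 ≤ z.re) {w : ℝ} (hw : 0 < w) :
    (Real.sinh w + z * Real.cosh w) * poissonLaplace z (z + 1) (Real.sinh w) =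
      (z + 1) * Real.cosh w ^ 2 * poissonLaplace z (z + 2) (Real.sinh w) := by
  have hz' : -(1 / 2) < z.re := by linarith
  set f : ℝ → ℂ := fun w => Complex.exp (-z * w) *
    ((Real.sinh w + z * Real.cosh w) * poissonLaplace z (z + 1) (Real.sinh w) -
      (z + 1) * Real.cosh w ^ 2 * poissonLaplace z (z + 2) (Real.sinh w))
  have hderiv : ∀ w : ℝ, 0 < w → HasDerivAt f 0 w := fun w hw => by
    have hcosh : HasDerivAt (fun w : ℝ => (Real.cosh w : ℂ)) (Real.sinh w) w :=
      (Real.hasDerivAt_cosh w).ofReal_comp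
    have hsinh : HasDerivAt (fun w : ℝ => (Real.sinh w : ℂ)) (Real.cosh w) w :=
      (Real.hasDerivAt_sinh w).ofReal_comp
    refine ((hasDerivAt_cexp_mul_ofReal (-z) w).mul
      (((hsinh.add (hcosh.const_mul z)).mul (hasDerivAt_poissonLaplace_sinh hz' (z + 1) hw)).sub
        (((hcosh.fun_pow 2).const_mul (z + 1)).mul
          (hasDerivAt_poissonLaplace_sinh hz' (z + 2) hw)))).congr_deriv ?_
    have hrec := poissonLaplace_recurrence hz' (Real.sinh_pos_iff.2 hw)
    have hsq : (Real.cosh w : ℂ) ^ 2 = (Real.sinh w : ℂ) ^ 2 + 1 := by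
      exact_mod_cast congrArg ((↑) : ℝ → ℂ) (Real.cosh_sq w)
    rw [← hsq] at hrec
    simp only [Pi.add_apply, Pi.sub_apply, Pi.mul_apply, Nat.cast_ofNat, Nat.add_one_sub_one,
      pow_one]
    rw [show z + 1 + 1 = z + 2 by ring, show z + 2 + 1 = z + 3 by ring]
    linear_combination Complex.exp (-z * w) * Real.cosh w * (z + 1) * hrec
  have hzero := eq_of_hasDerivAt_zero_of_tendsto hderiv
    (tendsto_exp_neg_mul_poissonLaplace_combination hz) hw
  exact sub_eq_zero.1 ((mul_eq_zero.1 hzero).resolve_left (Complex.exp_ne_zero _))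

theorem exp_mul_cosh_mul_poissonLaplace {z : ℂ} (hz : 0 ≤ z.re) {w : ℝ} (hw : 0 < w) :
    Complex.exp (z * w) * (Real.cosh w * poissonLaplace z (z + 1) (Real.sinh w)) =
      2 ^ z * ∫ θ in Ioo (-(π / 2)) (π / 2), (Real.cos θ : ℂ) ^ (2 * z) := by
  have hz' : -(1 / 2) < z.re := by linarith
  refine eq_of_hasDerivAt_zero_of_tendsto (a := 0)
    (f := fun w : ℝ => Complex.exp (z * w) *
      (Real.cosh w * poissonLaplace z (z + 1) (Real.sinh w))) (fun w hw => ?_) ?_ hw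
  · have hcosh : HasDerivAt (fun w : ℝ => (Real.cosh w : ℂ)) (Real.sinh w) w :=
      (Real.hasDerivAt_cosh w).ofReal_comp
    refine ((hasDerivAt_cexp_mul_ofReal z w).mul
      (hcosh.mul (hasDerivAt_poissonLaplace_sinh hz' (z + 1) hw))).congr_deriv ?_
    rw [show z + 1 + 1 = z + 2 by ring]
    simp only [Pi.mul_apply]
    linear_combination Complex.exp (z * w) * poissonLaplace_first_order hz hw
  · have hratio : Tendsto (fun w => 1 + Real.cosh w / Real.sinh w) atTop (𝓝 2) := by
      simpa [one_add_one_eq_two] using tendsto_cosh_div_sinh_atTop.const_add 1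
    have hpow : Tendsto (fun w => ((1 + Real.cosh w / Real.sinh w : ℝ) : ℂ) ^ z) atTop
        (𝓝 (2 ^ z)) := by
      simpa only [Complex.ofReal_ofNat, Function.comp_def] using
        ((Complex.continuous_ofReal.tendsto 2).comp hratio).cpow (tendsto_const_nhds (x := z))
          (by simp)
    refine (hpow.mul (tendsto_cosh_div_sinh_pow_mul_poissonLaplace hz' (z + 1) 1)).congr' ?_
    filter_upwards [eventually_gt_atTop 0] with w hw
    have hS := Real.sinh_pos_iff.2 hw
    have hS0 : (Real.sinh w : ℂ) ≠ 0 := Complex.ofReal_ne_zero.2 hS.ne'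
    have hexp : Complex.exp (z * w) = (Real.sinh w : ℂ) ^ z *
        ((1 + Real.cosh w / Real.sinh w : ℝ) : ℂ) ^ z := by
      rw [← Complex.mul_cpow_ofReal_nonneg hS.le (by positivity), ← Complex.ofReal_mul,
        show Real.sinh w * (1 + Real.cosh w / Real.sinh w) = Real.exp w by
          rw [← Real.sinh_add_cosh]; field_simp,
        Complex.cpow_def_of_ne_zero (Complex.ofReal_ne_zero.2 (Real.exp_pos w).ne'),
        ← Complex.ofReal_log (Real.exp_pos w).le, Real.log_exp, mul_comm]
    rw [hexp, pow_one, Complex.cpow_add _ _ hS0, Complex.cpow_one, Complex.ofReal_div]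
    field_simp

theorem integrableOn_cpow_mul_cexp_neg_mul {a r : ℂ} (ha : 0 < a.re) (hr : 0 < r.re) :
    IntegrableOn (fun y : ℝ => (y : ℂ) ^ (a - 1) * Complex.exp (-(r * y))) (Ioi 0) := by
  have hbound := integrableOn_rpow_mul_exp_neg_mul_rpow (s := a.re - 1) (by linarith) one_pos hr
  refine hbound.mono' (Measurable.aestronglyMeasurable (by fun_prop)) ?_
  filter_upwards [ae_restrict_mem measurableSet_Ioi] with y hy
  rw [norm_mul, Complex.norm_cpow_eq_rpow_re_of_pos hy, Complex.norm_exp]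
  simp

theorem differentiableOn_integral_cpow_mul_cexp_neg_mul {a : ℂ} (ha : 0 < a.re) :
    DifferentiableOn ℂ (fun r : ℂ => ∫ y in Ioi (0 : ℝ), (y : ℂ) ^ (a - 1) * Complex.exp (-(r * y)))
      {r | 0 < r.re} := by
  intro r (hr : 0 < r.re)
  refine (hasDerivAt_integral_of_dominated_loc_of_deriv_le (s := {w : ℂ | r.re / 2 < w.re})
    (F := fun w (y : ℝ) => (y : ℂ) ^ (a - 1) * Complex.exp (-(w * y)))
    (F' := fun w y => (y : ℂ) ^ (a - 1) * (Complex.exp (-(w * y)) * (-(y : ℂ))))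
    (bound := fun y => y ^ a.re * Real.exp (-(r.re / 2) * y ^ (1 : ℝ)))
    ((isOpen_lt continuous_const Complex.continuous_re).mem_nhds (half_lt_self hr))
    (Eventually.of_forall fun w => Measurable.aestronglyMeasurable (by fun_prop))
    (integrableOn_cpow_mul_cexp_neg_mul ha hr) (Measurable.aestronglyMeasurable (by fun_prop)) ?_
    (integrableOn_rpow_mul_exp_neg_mul_rpow (by linarith) one_pos (half_pos hr))
    (ae_of_all _ fun y w _ => ?_)).2.differentiableAt.differentiableWithinAt
  · filter_upwards [ae_restrict_mem measurableSet_Ioi] with y (hy : 0 < y) w (hw : r.re / 2 < w.re)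
    rw [norm_mul, norm_mul, Complex.norm_cpow_eq_rpow_re_of_pos hy, Complex.norm_exp, norm_neg,
      Complex.norm_of_nonneg hy.le, Real.rpow_one, Complex.sub_re, Complex.one_re,
      Real.rpow_sub_one hy.ne', mul_left_comm, mul_comm, div_mul_cancel₀ _ hy.ne']
    gcongr
    simpa using mul_le_mul_of_nonneg_right hw.le hy.le
  · have hlin : HasDerivAt (fun w : ℂ => -(w * (y : ℂ))) (-(y : ℂ)) w :=
      ((hasDerivAt_id' w).mul_const (y : ℂ)).fun_neg.congr_deriv (by ring)
    exact hlin.cexp.const_mul _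

theorem integral_cpow_mul_cexp_neg_mul_Ioi {a r : ℂ} (ha : 0 < a.re) (hr : 0 < r.re) :
    ∫ y in Ioi (0 : ℝ), (y : ℂ) ^ (a - 1) * Complex.exp (-(r * y)) =
      Complex.Gamma a * r ^ (-a) := by
  have hopen : IsOpen {r : ℂ | 0 < r.re} := isOpen_lt continuous_const Complex.continuous_re
  have hright : DifferentiableOn ℂ (fun r : ℂ => Complex.Gamma a * r ^ (-a)) {r | 0 < r.re} :=
    fun r hr => ((differentiableAt_id.cpow_const (Or.inl hr)).const_mul _).differentiableWithinAt
  refine ((differentiableOn_integral_cpow_mul_cexp_neg_mul ha).analyticOnNhd hopen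
    ).eqOn_of_preconnected_of_frequently_eq (hright.analyticOnNhd hopen)
    (convex_halfSpace_re_gt 0).isPreconnected (z₀ := ((1 : ℝ) : ℂ)) (by simp) ?_ hr
  have hreal : Tendsto ((↑) : ℝ → ℂ) (𝓝[≠] 1) (𝓝[≠] ((1 : ℝ) : ℂ)) :=
    Complex.continuous_ofReal.continuousAt.continuousWithinAt.tendsto_nhdsWithin
      fun x hx h => hx (Complex.ofReal_injective h)
  refine hreal.frequently (Eventually.frequently ?_)
  filter_upwards [(lt_mem_nhds one_pos).filter_mono nhdsWithin_le_nhds] with x hx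
  rw [Complex.integral_cpow_mul_exp_neg_mul_Ioi ha hx, one_div, Complex.inv_cpow _ _
    (by rw [Complex.arg_ofReal_of_nonneg hx.le]; exact Real.pi_pos.ne), Complex.cpow_neg, mul_comm]

theorem integral_exp_neg_mul_besselJ_eq_poissonLaplace {z : ℂ} (hz : -(1 / 2) < z.re) {p : ℝ}
    (hp : 0 < p) :
    ∫ y in Ioi 0, Real.exp (-(p * y)) • besselJ z y =
      Complex.Gamma (z + 1) / (2 ^ z * (√π * Complex.Gamma (z + 1 / 2))) *
        poissonLaplace z (z + 1) p := by
  have hz1 : 0 < (z + 1).re := by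
    simp only [Complex.add_re, Complex.one_re]
    linarith
  set f : ℝ → ℝ → ℂ := fun y θ => (y : ℂ) ^ z * Complex.exp (-(p * y)) *
    (Real.cos θ : ℂ) ^ (2 * z) * Complex.exp (Complex.I * (y * Real.sin θ : ℝ)) with hf
  have hint : Integrable (Function.uncurry f)
      ((volume.restrict (Ioi 0)).prod (volume.restrict (Ioo (-(π / 2)) (π / 2)))) := by
    have hy := integrableOn_cpow_mul_cexp_neg_mul hz1 (r := p) (by simpa using hp)
    rw [add_sub_cancel_right] at hy
    exact (hy.mul_prod (integrableOn_cos_cpow hz)).mul_bdd (c := 1)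
      (Measurable.aestronglyMeasurable (by fun_prop))
      (ae_of_all _ fun w => (Complex.norm_exp_I_mul_ofReal _).le)
  have hpoisson : ∀ y ∈ Ioi (0 : ℝ), Real.exp (-(p * y)) • besselJ z y =
      (2 ^ z * (√π * Complex.Gamma (z + 1 / 2)))⁻¹ * ∫ θ in Ioo (-(π / 2)) (π / 2), f y θ := by
    intro y (hy : 0 < y)
    simp only [hf, mul_assoc, integral_const_mul]
    rw [besselJ_eq_integral hz hy, div_eq_inv_mul y 2, Complex.ofReal_mul,
      Complex.mul_cpow_ofReal_nonneg (by norm_num) hy.le, Complex.ofReal_inv,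
      Complex.ofReal_ofNat, Complex.inv_cpow _ _ (by simp [Real.pi_pos.ne]), Complex.real_smul]
    push_cast
    ring
  rw [setIntegral_congr_fun measurableSet_Ioi hpoisson, integral_const_mul,
    integral_integral_swap hint, div_eq_inv_mul (Complex.Gamma (z + 1)), mul_assoc _⁻¹,
    poissonLaplace, ← integral_const_mul (Complex.Gamma (z + 1))]
  congr 1
  refine integral_congr_ae (ae_of_all _ fun θ => ?_)
  have hgamma := integral_cpow_mul_cexp_neg_mul_Ioi hz1 (r := p - Complex.I * Real.sin θ)
    (by simpa using hp)
  simp only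
  rw [mul_left_comm, ← hgamma, ← integral_const_mul, add_sub_cancel_right]
  refine integral_congr_ae (ae_of_all _ fun y => ?_)
  simp only [hf]
  rw [show -((p - Complex.I * Real.sin θ) * y : ℂ) = -(p * y) + Complex.I * (y * Real.sin θ : ℝ) by
    push_cast; ring, Complex.exp_add]
  ring

theorem integral_exp_neg_sinh_mul_besselJ {z : ℂ} (hz : 0 ≤ z.re) {w : ℝ} (hw : 0 < w) :
    ∫ y in Ioi 0, Real.exp (-(Real.sinh w * y)) • besselJ z y =
      Complex.exp (-z * w) / Real.cosh w := by
  have hz' : -(1 / 2) < z.re := by linarith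
  have hclosed := exp_mul_cosh_mul_poissonLaplace hz hw
  rw [integral_cos_cpow hz'] at hclosed
  have hcosh : (Real.cosh w : ℂ) ≠ 0 := Complex.ofReal_ne_zero.2 (Real.cosh_pos w).ne'
  have hGamma : Complex.Gamma (z + 1 / 2) ≠ 0 :=
    Complex.Gamma_ne_zero_of_re_pos (re_add_half_pos hz')
  have hGamma' : Complex.Gamma (z + 1) ≠ 0 :=
    Complex.Gamma_ne_zero_of_re_pos (by simp only [Complex.add_re, Complex.one_re]; linarith)
  have hsqrt : (√π : ℂ) ≠ 0 := Complex.ofReal_ne_zero.2 (Real.sqrt_pos.2 Real.pi_pos).ne'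
  have hpow : (2 : ℂ) ^ z ≠ 0 := by simp [Complex.cpow_eq_zero_iff]
  have hexp := Complex.exp_ne_zero (z * w)
  rw [integral_exp_neg_mul_besselJ_eq_poissonLaplace hz' (Real.sinh_pos_iff.2 hw), neg_mul,
    Complex.exp_neg]
  generalize Complex.Gamma (z + 1 / 2) = G, Complex.Gamma (z + 1) = G' at *
  field_simp at hclosed ⊢
  linear_combination hclosed

/-! ### Laplace integrals for the Struve function -/

theorem integral_cosh_smul_comp_sinh_Ioi {E : Type*} [NormedAddCommGroup E] [NormedSpace ℝ E]
    (g : ℝ → E) : ∫ w in Ioi 0, Real.cosh w • g (Real.sinh w) = ∫ q in Ioi 0, g q := by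
  have himage : Real.sinh '' Ioi 0 = Ioi 0 := by
    simpa using Real.sinhOrderIso.image_Ioi 0
  rw [← integral_image_eq_integral_deriv_smul_of_monotoneOn measurableSet_Ioi
    (fun w _ => (Real.hasDerivAt_sinh w).hasDerivWithinAt)
    (Real.sinh_strictMono.monotone.monotoneOn _), himage]

theorem struveK0_eq_integral_div_sqrt (y : ℝ) :
    struveK0 y = 2 / π * ∫ q in Ioi 0, Real.exp (-y * q) / √(1 + q ^ 2) := by
  rw [struveK0, ← integral_cosh_smul_comp_sinh_Ioi fun q => Real.exp (-y * q) / √(1 + q ^ 2)]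
  congr 1
  refine integral_congr_ae (ae_of_all _ fun w => ?_)
  have hcosh := (Real.cosh_pos w).ne'
  simp only
  rw [add_comm, ← Real.cosh_sq, Real.sqrt_sq (Real.cosh_pos w).le, smul_eq_mul]
  field_simp

theorem hasDerivAt_inv_sqrt_one_add_sq (q : ℝ) :
    HasDerivAt (fun q => (√(1 + q ^ 2))⁻¹) (-(q / √(1 + q ^ 2) ^ 3)) q := by
  have hpos : 0 < 1 + q ^ 2 := by positivity
  have hsqrt := Real.sqrt_pos.2 hpos
  refine (((((hasDerivAt_id' q).pow 2).const_add 1).sqrt hpos.ne').inv hsqrt.ne').congr_deriv ?_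
  simp
  field_simp

theorem mul_integral_exp_neg_mul_div_sqrt {y : ℝ} (hy : 0 < y) :
    y * ∫ q in Ioi 0, Real.exp (-y * q) / √(1 + q ^ 2) =
      1 - ∫ q in Ioi 0, Real.exp (-y * q) * (q / √(1 + q ^ 2) ^ 3) := by
  have hexp : IntegrableOn (fun q => Real.exp (-y * q)) (Ioi 0) := exp_neg_integrableOn_Ioi 0 hy
  have hle_sqrt : ∀ q : ℝ, |q| ≤ √(1 + q ^ 2) := fun q => Real.abs_le_sqrt (by linarith)
  have hone_le_sqrt : ∀ q : ℝ, 1 ≤ √(1 + q ^ 2) := fun q =>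
    Real.one_le_sqrt.2 (by linarith [sq_nonneg q])
  have hbound : ∀ q : ℝ, ‖q / √(1 + q ^ 2) ^ 3‖ ≤ 1 := fun q => by
    rw [Real.norm_eq_abs, abs_div, abs_of_nonneg (by positivity : 0 ≤ √(1 + q ^ 2) ^ 3)]
    exact div_le_one_of_le₀
      ((hle_sqrt q).trans (le_self_pow₀ (hone_le_sqrt q) three_ne_zero)) (by positivity)
  have hbound' : ∀ q : ℝ, ‖(√(1 + q ^ 2))⁻¹‖ ≤ 1 := fun q => by
    rw [norm_inv, Real.norm_of_nonneg (Real.sqrt_nonneg _)]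
    exact inv_le_one_of_one_le₀ (hone_le_sqrt q)
  have hsqrt : ∀ q : ℝ, √(1 + q ^ 2) ≠ 0 := fun q => by positivity
  have hzero : Tendsto (fun q => (√(1 + q ^ 2))⁻¹ * -Real.exp (-y * q)) (𝓝[>] 0) (𝓝 (-1)) :=
    tendsto_nhdsWithin_of_tendsto_nhds
      (Continuous.tendsto' (by fun_prop (disch := assumption)) _ _ (by simp))
  have hinfty : Tendsto (fun q => (√(1 + q ^ 2))⁻¹ * -Real.exp (-y * q)) atTop (𝓝 0) := by
    have hexp_lim : Tendsto (fun q => -Real.exp (-y * q)) atTop (𝓝 (-0)) :=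
      (Real.tendsto_exp_atBot.comp
        (tendsto_id.const_mul_atTop_of_neg (neg_neg_of_pos hy))).neg
    rw [neg_zero] at hexp_lim
    exact isBoundedUnder_le_mul_tendsto_zero (isBoundedUnder_of ⟨1, hbound'⟩) hexp_lim
  have hparts := integral_Ioi_mul_deriv_eq_deriv_mul
    (v := fun q => -Real.exp (-y * q)) (v' := fun q => y * Real.exp (-y * q))
    (fun q _ => hasDerivAt_inv_sqrt_one_add_sq q)
    (fun q _ => ((((hasDerivAt_id' q).const_mul (-y)).exp).fun_neg).congr_deriv (by ring))
    ((hexp.const_mul y).bdd_mul (Measurable.aestronglyMeasurable (by fun_prop))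
      (ae_of_all _ hbound'))
    (hexp.neg.bdd_mul (c := 1) (Measurable.aestronglyMeasurable (by fun_prop))
      (ae_of_all _ fun q => (norm_neg _).trans_le (hbound q))) hzero hinfty
  simp only [neg_mul_neg, zero_sub, neg_neg] at hparts
  rw [← integral_const_mul]
  simpa only [div_eq_inv_mul, mul_assoc, mul_left_comm, mul_comm] using hparts

theorem mul_struveK0_sub_eq_integral {x a c : ℝ} (hx : 0 < x) (ha : 0 < a) (hc : 0 < c) :
    x * struveK0 (2 * x * a) - 1 / (π * a) = -(c ^ 2 / π) *
      ∫ q in Ioi 0, Real.exp (-(2 * x * c * q)) * (q / √(a ^ 2 + (c * q) ^ 2) ^ 3) := by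
  have hscale := integral_comp_mul_left_Ioi
    (fun q => Real.exp (-(2 * x * a) * q) * (q / √(1 + q ^ 2) ^ 3)) 0 (div_pos hc ha)
  have hintegrand : ∀ q, Real.exp (-(2 * x * a) * (c / a * q)) *
      (c / a * q / √(1 + (c / a * q) ^ 2) ^ 3) =
      c * a ^ 2 * (Real.exp (-(2 * x * c * q)) * (q / √(a ^ 2 + (c * q) ^ 2) ^ 3)) := fun q => by
    have hsqrt : √(1 + (c / a * q) ^ 2) = √(a ^ 2 + (c * q) ^ 2) / a := by
      rw [show 1 + (c / a * q) ^ 2 = (a ^ 2 + (c * q) ^ 2) / a ^ 2 by field_simp,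
        Real.sqrt_div' _ (by positivity), Real.sqrt_sq ha.le]
    rw [hsqrt, show -(2 * x * a) * (c / a * q) = -(2 * x * c * q) by field_simp]
    field_simp
  simp only [hintegrand, mul_zero, integral_const_mul, smul_eq_mul] at hscale
  have hparts := mul_integral_exp_neg_mul_div_sqrt (y := 2 * x * a) (by positivity)
  rw [struveK0_eq_integral_div_sqrt]
  field_simp at hscale hparts ⊢
  linear_combination hparts + hscale

theorem hasDerivAt_sin_div_sqrt {a : ℝ} (ha : 0 < a) (q θ : ℝ) :
    HasDerivAt (fun θ => Real.sin θ / ((a ^ 2 + q ^ 2) * √(a ^ 2 + (Real.cos θ * q) ^ 2)))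
      (Real.cos θ / √(a ^ 2 + (Real.cos θ * q) ^ 2) ^ 3) θ := by
  have hpos : 0 < a ^ 2 + (Real.cos θ * q) ^ 2 := by positivity
  have hsqrt := Real.sqrt_pos.2 hpos
  have hsq := Real.sq_sqrt hpos.le
  refine ((Real.hasDerivAt_sin θ).div (((((Real.hasDerivAt_cos θ).mul_const q).pow 2).const_add
    (a ^ 2) |>.sqrt hpos.ne').const_mul (a ^ 2 + q ^ 2)) (by positivity)).congr_deriv ?_
  simp only [Pi.pow_apply, Nat.cast_ofNat, Nat.add_one_sub_one, pow_one]
  generalize √(a ^ 2 + (Real.cos θ * q) ^ 2) = R at *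
  field_simp
  linear_combination Real.cos θ * hsq + Real.cos θ * q ^ 2 * Real.sin_sq_add_cos_sq θ

theorem integral_cos_div_sqrt {a : ℝ} (ha : 0 < a) (q : ℝ) :
    ∫ θ in Ioo (-(π / 2)) (π / 2), Real.cos θ / √(a ^ 2 + (Real.cos θ * q) ^ 2) ^ 3 =
      2 / (a * (a ^ 2 + q ^ 2)) := by
  rw [← integral_Ioc_eq_integral_Ioo, ← intervalIntegral.integral_of_le (by linarith [Real.pi_pos]),
    intervalIntegral.integral_eq_sub_of_hasDerivAt (fun θ _ => hasDerivAt_sin_div_sqrt ha q θ)]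
  · simp [ha.le]
    field_simp
    norm_num
  · have hne : ∀ θ, √(a ^ 2 + (Real.cos θ * q) ^ 2) ^ 3 ≠ 0 := fun θ => by positivity
    exact Continuous.intervalIntegrable (by fun_prop (disch := assumption)) _ _

/-! ### The exchange of integrals -/

/-- Lebesgue measure on the half-strip of pairs `(q, θ)` with `0 < q` and `|θ| < π/2`. -/
noncomputable abbrev halfStripMeasure : Measure (ℝ × ℝ) :=
  (volume.restrict (Ioi 0)).prod (volume.restrict (Ioo (-(π / 2)) (π / 2)))

theorem ae_halfStripMeasure_pos :
    ∀ᵐ v ∂halfStripMeasure, 0 < v.1 ∧ 0 < Real.cos v.2 := by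
  rw [halfStripMeasure, Measure.prod_restrict]
  filter_upwards [ae_restrict_mem (measurableSet_Ioi.prod measurableSet_Ioo)] with v hv
  exact ⟨hv.1, Real.cos_pos_of_mem_Ioo hv.2⟩

theorem integrable_cos_div_sqrt {a : ℝ} (ha : 0 < a) :
    Integrable (fun v : ℝ × ℝ => Real.cos v.2 / √(a ^ 2 + (Real.cos v.2 * v.1) ^ 2) ^ 3)
      halfStripMeasure := by
  rw [integrable_prod_iff (Measurable.aestronglyMeasurable (by fun_prop))]
  refine ⟨ae_of_all _ fun q => ?_, ?_⟩
  · have hne : ∀ θ, √(a ^ 2 + (Real.cos θ * q) ^ 2) ^ 3 ≠ 0 := fun θ => by positivity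
    exact (Continuous.integrableOn_Icc (by fun_prop (disch := assumption))).mono_set
      Ioo_subset_Icc_self
  · have hnorm : ∀ q, ∫ θ in Ioo (-(π / 2)) (π / 2),
        ‖Real.cos θ / √(a ^ 2 + (Real.cos θ * q) ^ 2) ^ 3‖ = 2 / a ^ 3 * (1 + (q / a) ^ 2)⁻¹ :=
      fun q => by
      rw [setIntegral_congr_fun (g := fun θ => Real.cos θ / √(a ^ 2 + (Real.cos θ * q) ^ 2) ^ 3)
        measurableSet_Ioo fun θ hθ => ?_, integral_cos_div_sqrt ha]
      · field_simp
      · have hcos := Real.cos_pos_of_mem_Ioo hθ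
        exact Real.norm_of_nonneg (by positivity)
    simp only [hnorm]
    exact ((integrable_inv_one_add_sq.comp_div ha.ne').const_mul _).integrableOn

/-- The function of `x` and `v = (q, θ)` whose integral over `q`, for fixed `c = cos θ`, is a
multiple of `x K₀(2xa) - 1/(πa)` that does not depend on `c`; see `mul_struveK0_sub_eq_integral`. -/
noncomputable def struveWeight (a x : ℝ) (v : ℝ × ℝ) : ℝ :=
  Real.cos v.2 ^ 2 * (Real.exp (-(2 * x * Real.cos v.2 * v.1)) *
    (v.1 / √(a ^ 2 + (Real.cos v.2 * v.1) ^ 2) ^ 3))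

theorem integrable_struveWeight {a : ℝ} (ha : 0 < a) :
    Integrable (fun t : ℝ × ℝ × ℝ => struveWeight a t.1 t.2)
      ((volume.restrict (Ioi 0)).prod halfStripMeasure) := by
  unfold struveWeight
  have hexp : ∀ {q c : ℝ}, 0 < q → 0 < c →
      IntegrableOn (fun x => Real.exp (-(2 * x * c * q))) (Ioi 0) ∧
        ∫ x in Ioi 0, Real.exp (-(2 * x * c * q)) = 1 / (2 * c * q) := fun {q c} hq hc => by
    have hrate : -(2 * c * q) < 0 := by simp only [Left.neg_neg_iff]; positivity
    simp only [show ∀ x, -(2 * x * c * q) = -(2 * c * q) * x from fun x => by ring]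
    refine ⟨integrableOn_exp_mul_Ioi hrate 0, ?_⟩
    rw [integral_exp_mul_Ioi hrate, mul_zero, Real.exp_zero, neg_div_neg_eq]
  rw [integrable_prod_iff' (Measurable.aestronglyMeasurable (by fun_prop))]
  constructor
  · filter_upwards [ae_halfStripMeasure_pos] with v ⟨hq, hcos⟩
    exact ((hexp hq hcos).1.mul_const _).const_mul _
  · refine ((integrable_cos_div_sqrt ha).const_mul 2⁻¹).congr ?_
    filter_upwards [ae_halfStripMeasure_pos] with v ⟨hq, hcos⟩
    simp only [norm_mul, norm_div, norm_pow, Real.norm_of_nonneg hq.le,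
      Real.norm_of_nonneg hcos.le, Real.norm_of_nonneg (Real.exp_pos _).le,
      Real.norm_of_nonneg (Real.sqrt_nonneg _)]
    rw [integral_const_mul, integral_mul_const, (hexp hq hcos).2]
    field_simp

theorem integrable_struveWeight_smul_besselJ {z : ℂ} (hz : z.re = 0) {a : ℝ} (ha : 0 < a) :
    Integrable (fun t : ℝ × ℝ × ℝ =>
        struveWeight a t.1 t.2 • besselJ z (2 * t.1 * Real.cos t.2.2))
      ((volume.restrict (Ioi 0)).prod halfStripMeasure) := by
  obtain ⟨C, hC⟩ := exists_norm_besselJ_le (z := z) (by linarith)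
  simp only [hz, Real.rpow_zero, mul_one] at hC
  refine (integrable_struveWeight ha).smul_bdd C
    (Measurable.aestronglyMeasurable (by fun_prop)) ?_
  filter_upwards [Measure.quasiMeasurePreserving_fst.ae (ae_restrict_mem measurableSet_Ioi),
    Measure.quasiMeasurePreserving_snd.ae ae_halfStripMeasure_pos] with t (hx : 0 < t.1) ⟨_, hcos⟩
  exact hC _ (by positivity)

theorem integral_struveWeight_smul_besselJ_halfStrip {z : ℂ} (hz : -(1 / 2) < z.re) {a x : ℝ}
    (ha : 0 < a) (hx : 0 < x)
    (hint : Integrable (fun v => struveWeight a x v • besselJ (2 * z) (2 * x * Real.cos v.2))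
      halfStripMeasure) :
    -(1 / π ^ 2) • ∫ v, struveWeight a x v • besselJ (2 * z) (2 * x * Real.cos v.2)
      ∂halfStripMeasure = (x * struveK0 (2 * x * a) - 1 / (π * a)) • besselJ z x ^ 2 := by
  have hweight : ∀ θ ∈ Ioo (-(π / 2)) (π / 2), ∫ q in Ioi 0, struveWeight a x (q, θ) =
      -π * (x * struveK0 (2 * x * a) - 1 / (π * a)) := fun θ hθ => by
    simp only [struveWeight]
    rw [integral_const_mul, mul_struveK0_sub_eq_integral hx ha (Real.cos_pos_of_mem_Ioo hθ)]
    field_simp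
  have hpi : (π : ℂ) ≠ 0 := Complex.ofReal_ne_zero.2 Real.pi_ne_zero
  rw [integral_prod_symm _ hint, besselJ_sq_eq_integral hz hx]
  simp only [integral_smul_const]
  rw [setIntegral_congr_fun measurableSet_Ioo fun θ hθ =>
    congrArg (· • besselJ (2 * z) (2 * x * Real.cos θ)) (hweight θ hθ), integral_smul]
  generalize x * struveK0 (2 * x * a) - 1 / (π * a) = k
  simp only [Complex.real_smul]
  push_cast
  field_simp

theorem integral_struveWeight_smul_besselJ_Ioi {z : ℂ} (hz : 0 ≤ z.re) (a : ℝ) {w θ : ℝ}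
    (hw : 0 < w) (hθ : 0 < Real.cos θ) :
    ∫ x in Ioi 0, struveWeight a x (Real.sinh w, θ) • besselJ z (2 * x * Real.cos θ) =
      (Real.cos θ / √(a ^ 2 + (Real.cos θ * Real.sinh w) ^ 2) ^ 3) •
        ((Real.sinh w / (2 * Real.cosh w)) • Complex.exp (-z * w)) := by
  have hcosh : (Real.cosh w : ℂ) ≠ 0 := Complex.ofReal_ne_zero.2 (Real.cosh_pos w).ne'
  have hcos : (Real.cos θ : ℂ) ≠ 0 := Complex.ofReal_ne_zero.2 hθ.ne'
  have hscale := integral_comp_mul_left_Ioi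
    (fun y => Real.exp (-(Real.sinh w * y)) • besselJ z y) 0 (b := 2 * Real.cos θ) (by positivity)
  rw [mul_zero, integral_exp_neg_sinh_mul_besselJ hz hw] at hscale
  have hintegrand : ∀ x, struveWeight a x (Real.sinh w, θ) • besselJ z (2 * x * Real.cos θ) =
      (Real.cos θ ^ 2 * (Real.sinh w / √(a ^ 2 + (Real.cos θ * Real.sinh w) ^ 2) ^ 3)) •
        Real.exp (-(Real.sinh w * (2 * Real.cos θ * x))) • besselJ z (2 * Real.cos θ * x) :=
    fun x => by
    rw [smul_smul, struveWeight, mul_right_comm 2 x]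
    congr 1
    ring_nf
  simp only [hintegrand]
  rw [integral_smul, hscale]
  simp only [Complex.real_smul]
  push_cast at hcosh hcos ⊢
  field_simp

theorem integral_integral_struveWeight_smul_besselJ {z : ℂ} (hz : 0 ≤ z.re) {a w : ℝ} (ha : 0 < a)
    (hw : 0 < w) :
    ∫ θ in Ioo (-(π / 2)) (π / 2), ∫ x in Ioi 0,
        struveWeight a x (Real.sinh w, θ) • besselJ z (2 * x * Real.cos θ) =
      (1 / (a * Real.cosh w)) •
        ((Real.sinh w / (a ^ 2 + Real.sinh w ^ 2)) • Complex.exp (-z * w)) := by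
  rw [setIntegral_congr_fun measurableSet_Ioo fun θ hθ =>
      integral_struveWeight_smul_besselJ_Ioi hz a hw (Real.cos_pos_of_mem_Ioo hθ),
    integral_smul_const, integral_cos_div_sqrt ha, smul_smul, smul_smul]
  congr 1
  field_simp

theorem ae_integral_struveWeight_smul_besselJ_halfStrip {z : ℂ} (hz : z.re = 0) {a : ℝ}
    (ha : 0 < a) :
    (fun x => -(1 / π ^ 2) • ∫ v, struveWeight a x v •
        besselJ (2 * z) (2 * x * Real.cos v.2) ∂halfStripMeasure) =ᵐ[volume.restrict (Ioi 0)]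
      fun x => (x * struveK0 (2 * x * a) - 1 / (π * a)) • besselJ z x ^ 2 := by
  have hint := integrable_struveWeight_smul_besselJ (z := 2 * z) (by simp [hz]) ha
  filter_upwards [hint.prod_right_ae, ae_restrict_mem measurableSet_Ioi] with x hx hx0
  exact integral_struveWeight_smul_besselJ_halfStrip (by linarith) ha hx0 hx

theorem integrableOn_struveK0_smul_besselJ_sq {z : ℂ} (hz : z.re = 0) {a : ℝ} (ha : 0 < a) :
    IntegrableOn (fun x => (x * struveK0 (2 * x * a) - 1 / (π * a)) • besselJ z x ^ 2)
      (Ioi 0) := by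
  have hint := integrable_struveWeight_smul_besselJ (z := 2 * z) (by simp [hz]) ha
  exact (hint.integral_prod_left.fun_smul (-(1 / π ^ 2))).congr
    (ae_integral_struveWeight_smul_besselJ_halfStrip hz ha)

theorem integral_struveK0_smul_besselJ_sq {z : ℂ} (hz : z.re = 0) {a : ℝ} (ha : 0 < a) :
    ∫ x in Ioi 0, (x * struveK0 (2 * x * a) - 1 / (π * a)) • besselJ z x ^ 2 =
      -(1 / (π ^ 2 * a)) • ∫ w in Ioi 0,
        (Real.sinh w / (a ^ 2 + Real.sinh w ^ 2)) • Complex.exp (-(2 * z) * w) := by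
  have hre : (2 * z).re = 0 := by simp [hz]
  have hint := integrable_struveWeight_smul_besselJ hre ha
  have hinner : ∀ w ∈ Ioi (0 : ℝ), Real.cosh w • ∫ θ in Ioo (-(π / 2)) (π / 2), ∫ x in Ioi 0,
        struveWeight a x (Real.sinh w, θ) • besselJ (2 * z) (2 * x * Real.cos θ) =
      a⁻¹ • ((Real.sinh w / (a ^ 2 + Real.sinh w ^ 2)) • Complex.exp (-(2 * z) * w)) := by
    intro w hw
    rw [integral_integral_struveWeight_smul_besselJ hre.ge ha hw, smul_smul]
    congr 1
    have hcosh := (Real.cosh_pos w).ne'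
    field_simp
  rw [← integral_congr_ae (ae_integral_struveWeight_smul_besselJ_halfStrip hz ha), integral_smul,
    integral_integral_swap hint, integral_prod _ hint.integral_prod_right,
    ← integral_cosh_smul_comp_sinh_Ioi, setIntegral_congr_fun measurableSet_Ioi hinner,
    integral_smul, smul_smul]
  congr 1
  field_simp

/-! ### The Fourier transform of the hyperbolic secant -/

theorem sigmoid_two_mul_eq_exp (w : ℝ) :
    Real.sigmoid (2 * w) = Real.exp (w - Real.log (2 * Real.cosh w)) := by
  rw [Real.exp_sub, Real.exp_log (by positivity), Real.sigmoid_def, Real.cosh_eq,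
    show -(2 * w) = -w - w by ring, Real.exp_sub]
  field_simp

theorem one_sub_sigmoid_two_mul_eq_exp (w : ℝ) :
    1 - Real.sigmoid (2 * w) = Real.exp (-w - Real.log (2 * Real.cosh w)) := by
  rw [← Real.sigmoid_neg, ← mul_neg, sigmoid_two_mul_eq_exp, Real.cosh_neg]

theorem ofReal_exp_cpow (r : ℝ) (c : ℂ) : (Real.exp r : ℂ) ^ c = Complex.exp (r * c) := by
  rw [Complex.cpow_def_of_ne_zero (by exact_mod_cast (Real.exp_pos r).ne'), ← Complex.ofReal_log
    (Real.exp_pos r).le, Real.log_exp]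

theorem hasDerivAt_sigmoid_two_mul (w : ℝ) : HasDerivAt (fun w => Real.sigmoid (2 * w))
    (2 * (Real.sigmoid (2 * w) * (1 - Real.sigmoid (2 * w)))) w := by
  have h := (Real.hasDerivAt_sigmoid (2 * w)).comp w ((hasDerivAt_id w).const_mul 2)
  exact h.congr_deriv (by ring)

theorem image_sigmoid_two_mul_univ : (fun w => Real.sigmoid (2 * w)) '' univ = Ioo 0 1 := by
  rw [image_univ, ← Real.range_sigmoid]
  exact (mul_left_surjective₀ two_ne_zero).range_comp Real.sigmoid

theorem deriv_smul_betaIntegrand_sigmoid_two_mul (s : ℂ) (w : ℝ) :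
    (2 * (Real.sigmoid (2 * w) * (1 - Real.sigmoid (2 * w)))) •
      ((Real.sigmoid (2 * w) : ℂ) ^ ((1 + s) / 2 - 1) *
        (1 - (Real.sigmoid (2 * w) : ℂ)) ^ ((1 - s) / 2 - 1)) =
      Complex.exp (s * w) / Real.cosh w := by
  have hlog : (Real.cosh w : ℂ)⁻¹ = 2 * Complex.exp (-Real.log (2 * Real.cosh w)) := by
    rw [← Complex.ofReal_neg, ← Complex.ofReal_exp, Real.exp_neg, Real.exp_log (by positivity)]
    push_cast
    ring
  rw [← Complex.ofReal_one, ← Complex.ofReal_sub, one_sub_sigmoid_two_mul_eq_exp,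
    sigmoid_two_mul_eq_exp, ofReal_exp_cpow, ofReal_exp_cpow, Complex.real_smul,
    div_eq_mul_inv (Complex.exp _), hlog]
  push_cast
  rw [mul_assoc, ← Complex.exp_add, ← Complex.exp_add, ← Complex.exp_add, mul_left_comm,
    ← Complex.exp_add]
  ring_nf

theorem integrable_cexp_mul_div_cosh {s : ℂ} (hs : |s.re| < 1) :
    Integrable fun w : ℝ => Complex.exp (s * w) / Real.cosh w := by
  obtain ⟨hneg, hpos⟩ := abs_lt.1 hs
  have hbeta := Complex.betaIntegral_convergent (u := (1 + s) / 2) (v := (1 - s) / 2)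
    (by simp; linarith) (by simp; linarith)
  rw [intervalIntegrable_iff_integrableOn_Ioo_of_le zero_le_one, ← image_sigmoid_two_mul_univ,
    integrableOn_image_iff_integrableOn_deriv_smul_of_monotoneOn MeasurableSet.univ
      (fun w _ => (hasDerivAt_sigmoid_two_mul w).hasDerivWithinAt)
      ((Real.sigmoid_monotone.comp (monotone_id.const_mul zero_le_two)).monotoneOn _),
    integrableOn_univ] at hbeta
  simpa only [deriv_smul_betaIntegrand_sigmoid_two_mul] using hbeta

theorem integral_cexp_mul_div_cosh {s : ℂ} (hs : |s.re| < 1) :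
    ∫ w : ℝ, Complex.exp (s * w) / Real.cosh w = π / Complex.cos (π * s / 2) := by
  obtain ⟨hneg, hpos⟩ := abs_lt.1 hs
  have hsum : (1 + s) / 2 + (1 - s) / 2 = 1 := by ring
  have hgamma := Complex.Gamma_mul_Gamma_eq_betaIntegral (s := (1 + s) / 2) (t := (1 - s) / 2)
    (by simp; linarith) (by simp; linarith)
  rw [hsum, Complex.Gamma_one, one_mul, Complex.betaIntegral,
    intervalIntegral.integral_of_le zero_le_one, integral_Ioc_eq_integral_Ioo,
    ← image_sigmoid_two_mul_univ,
    integral_image_eq_integral_deriv_smul_of_monotoneOn MeasurableSet.univ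
      (fun w _ => (hasDerivAt_sigmoid_two_mul w).hasDerivWithinAt)
      ((Real.sigmoid_monotone.comp (monotone_id.const_mul zero_le_two)).monotoneOn _),
    setIntegral_univ] at hgamma
  simp only [deriv_smul_betaIntegrand_sigmoid_two_mul] at hgamma
  rw [← hgamma, eq_sub_of_add_eq' hsum, Complex.Gamma_mul_Gamma_one_sub,
    ← Complex.sin_add_pi_div_two]
  ring_nf

theorem integrable_cexp_mul_div_cosh_sub {s : ℂ} (hs : |s.re| < 1) (u : ℝ) :
    Integrable fun w : ℝ => Complex.exp (s * w) / Real.cosh (w - u) := by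
  refine (((integrable_cexp_mul_div_cosh hs).comp_sub_right u).const_mul
    (Complex.exp (s * u))).congr (ae_of_all _ fun w => ?_)
  simp only [← mul_div_assoc, ← Complex.exp_add]
  push_cast
  ring_nf

theorem integral_cexp_mul_div_cosh_sub {s : ℂ} (hs : |s.re| < 1) (u : ℝ) :
    ∫ w : ℝ, Complex.exp (s * w) / Real.cosh (w - u) =
      Complex.exp (s * u) * (π / Complex.cos (π * s / 2)) := by
  rw [← integral_cexp_mul_div_cosh hs, ← integral_const_mul,
    ← integral_add_right_eq_self _ u]
  refine integral_congr_ae (ae_of_all _ fun w => ?_)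
  simp only [add_sub_cancel_right, ← mul_div_assoc, ← Complex.exp_add]
  push_cast
  ring_nf

theorem integral_eq_integral_Ioi_add_comp_neg {E : Type*} [NormedAddCommGroup E]
    [NormedSpace ℝ E] {f : ℝ → E} (hf : Integrable f) :
    ∫ x, f x = ∫ x in Ioi (0 : ℝ), (f x + f (-x)) := by
  rw [integral_add hf.integrableOn hf.comp_neg.integrableOn, integral_comp_neg_Ioi, neg_zero,
    add_comm, intervalIntegral.integral_Iic_add_Ioi hf.integrableOn hf.integrableOn]

theorem inv_cosh_sub_sub_inv_cosh_add (u w : ℝ) :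
    (Real.cosh (w - u))⁻¹ - (Real.cosh (w + u))⁻¹ =
      2 * Real.sinh u * (Real.sinh w / (Real.cosh u ^ 2 + Real.sinh w ^ 2)) := by
  have hprod : Real.cosh (w - u) * Real.cosh (w + u) = Real.cosh u ^ 2 + Real.sinh w ^ 2 := by
    rw [Real.cosh_sub, Real.cosh_add]
    linear_combination Real.cosh u ^ 2 * Real.cosh_sq w + Real.sinh w ^ 2 * Real.cosh_sq u
  rw [inv_sub_inv (Real.cosh_pos _).ne' (Real.cosh_pos _).ne', hprod, Real.cosh_add,
    Real.cosh_sub]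
  ring

theorem sinh_div_smul_cexp {u : ℝ} (hu : u ≠ 0) (s : ℂ) (w : ℝ) :
    (Real.sinh w / (Real.cosh u ^ 2 + Real.sinh w ^ 2)) • Complex.exp (s * w) =
      (2 * Real.sinh u : ℂ)⁻¹ * (Complex.exp (s * w) / Real.cosh (w - u) -
        Complex.exp (s * w) / Real.cosh (w - -u)) := by
  have hsinh : 2 * Real.sinh u ≠ 0 := mul_ne_zero two_ne_zero (Real.sinh_ne_zero.2 hu)
  rw [(eq_inv_mul_iff_mul_eq₀ hsinh).2 (inv_cosh_sub_sub_inv_cosh_add u w).symm,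
    sub_neg_eq_add, Complex.real_smul]
  push_cast
  ring

theorem integrable_sinh_div_smul_cexp {s : ℂ} (hs : |s.re| < 1) {u : ℝ} (hu : u ≠ 0) :
    Integrable fun w : ℝ =>
      (Real.sinh w / (Real.cosh u ^ 2 + Real.sinh w ^ 2)) • Complex.exp (s * w) := by
  simp only [sinh_div_smul_cexp hu]
  exact ((integrable_cexp_mul_div_cosh_sub hs u).sub'
    (integrable_cexp_mul_div_cosh_sub hs (-u))).const_mul _

theorem integral_sinh_div_smul_cexp {s : ℂ} (hs : |s.re| < 1) {u : ℝ} (hu : u ≠ 0) :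
    ∫ w : ℝ, (Real.sinh w / (Real.cosh u ^ 2 + Real.sinh w ^ 2)) • Complex.exp (s * w) =
      π * Complex.sinh (s * u) / (Real.sinh u * Complex.cos (π * s / 2)) := by
  simp only [sinh_div_smul_cexp hu]
  rw [integral_const_mul, integral_sub (integrable_cexp_mul_div_cosh_sub hs u)
    (integrable_cexp_mul_div_cosh_sub hs (-u)), integral_cexp_mul_div_cosh_sub hs,
    integral_cexp_mul_div_cosh_sub hs, Complex.ofReal_neg, mul_neg, Complex.sinh]
  field_simp

theorem integral_Ioi_sinh_div_smul_sinh {s : ℂ} (hs : |s.re| < 1) {u : ℝ} (hu : u ≠ 0) :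
    ∫ w in Ioi (0 : ℝ), (Real.sinh w / (Real.cosh u ^ 2 + Real.sinh w ^ 2)) •
        Complex.sinh (s * w) =
      π * Complex.sinh (s * u) / (2 * Real.sinh u * Complex.cos (π * s / 2)) := by
  have hodd : ∀ w : ℝ,
      (Real.sinh w / (Real.cosh u ^ 2 + Real.sinh w ^ 2)) • Complex.exp (s * w) +
        (Real.sinh (-w) / (Real.cosh u ^ 2 + Real.sinh (-w) ^ 2)) • Complex.exp (s * (-w : ℝ)) =
      (2 : ℂ) * (Real.sinh w / (Real.cosh u ^ 2 + Real.sinh w ^ 2)) • Complex.sinh (s * w) := by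
    intro w
    rw [Real.sinh_neg, neg_sq, neg_div, neg_smul, ← sub_eq_add_neg, ← smul_sub, mul_smul_comm,
      Complex.ofReal_neg, mul_neg, Complex.two_sinh]
  have hfold := integral_eq_integral_Ioi_add_comp_neg (integrable_sinh_div_smul_cexp hs hu)
  simp only [hodd] at hfold
  rw [integral_const_mul, integral_sinh_div_smul_cexp hs hu] at hfold
  rw [← mul_right_inj' (two_ne_zero (α := ℂ)), ← hfold]
  field_simp

theorem integral_Ioi_sinh_div_mul_sin (τ : ℝ) {u : ℝ} (hu : u ≠ 0) :
    ∫ w in Ioi (0 : ℝ), Real.sinh w / (Real.cosh u ^ 2 + Real.sinh w ^ 2) * Real.sin (τ * w) =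
      π * Real.sin (τ * u) / (2 * Real.sinh u * Real.cosh (π * τ / 2)) := by
  have hint := integral_Ioi_sinh_div_smul_sinh (s := τ * Complex.I) (by simp) hu
  have hsin : ∀ x : ℝ, Complex.sinh (τ * Complex.I * x) = Real.sin (τ * x) * Complex.I := by
    intro x
    rw [mul_right_comm, Complex.sinh_mul_I]
    push_cast
    rfl
  have hcos : Complex.cos (π * (τ * Complex.I) / 2) = Real.cosh (π * τ / 2) := by
    rw [show (π * (τ * Complex.I) / 2 : ℂ) = (π * τ / 2 : ℝ) * Complex.I by push_cast; ring,
      Complex.cos_mul_I, Complex.ofReal_cosh]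
  simp only [hsin, hcos, ← smul_mul_assoc, Complex.real_smul, ← Complex.ofReal_mul] at hint
  rw [integral_mul_const, integral_complex_ofReal, ← mul_assoc, mul_div_right_comm] at hint
  exact_mod_cast mul_right_cancel₀ Complex.I_ne_zero hint

theorem im_cexp_neg_two_mul (τ w : ℝ) :
    (Complex.exp (-(2 * (Complex.I * τ / 2)) * w)).im = -Real.sin (τ * w) := by
  rw [show -(2 * (Complex.I * τ / 2)) * (w : ℂ) = (-(τ * w) : ℝ) * Complex.I by push_cast; ring,
    Complex.exp_ofReal_mul_I_im, Real.sin_neg]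

theorem integral_struveK0_mul_im_besselJ_sq (τ : ℝ) {u : ℝ} (hu : u ≠ 0) :
    ∫ x in Ioi 0, (x * struveK0 (2 * x * Real.cosh u) - 1 / (π * Real.cosh u)) *
        (besselJ (Complex.I * τ / 2) x ^ 2).im =
      1 / (π ^ 2 * Real.cosh u) * ∫ w in Ioi 0,
        Real.sinh w / (Real.cosh u ^ 2 + Real.sinh w ^ 2) * Real.sin (τ * w) := by
  have hre : (Complex.I * τ / 2).re = 0 := by simp
  have hleft := integral_im (integrableOn_struveK0_smul_besselJ_sq hre (Real.cosh_pos u))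
  have hright := integral_im ((integrable_sinh_div_smul_cexp
    (s := -(2 * (Complex.I * τ / 2))) (by simp) hu).restrict (s := Ioi 0))
  rw [integral_struveK0_smul_besselJ_sq hre (Real.cosh_pos u)] at hleft
  simp only [RCLike.im_to_complex, Complex.smul_im, smul_eq_mul] at hleft hright
  rw [hleft, ← hright]
  simp only [im_cexp_neg_two_mul]
  simp only [mul_neg, integral_neg, neg_mul, neg_neg]

end

theorem statement9_general (u τ : ℝ) (hu0 : u ≠ 0) :
    IntegrableOn (fun x : ℝ =>
      (x * struveK0 (2 * x * Real.cosh u) - 1 / (Real.pi * Real.cosh u)) *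
        ((besselJ (Complex.I * τ / 2) x) ^ 2).im) (Set.Ioi (0 : ℝ)) ∧
    ∫ x in Set.Ioi (0 : ℝ),
        (x * struveK0 (2 * x * Real.cosh u) - 1 / (Real.pi * Real.cosh u)) *
          ((besselJ (Complex.I * τ / 2) x) ^ 2).im
      = Real.sin (τ * u) / (Real.pi * Real.sinh (2 * u) * Real.cosh (Real.pi * τ / 2)) := by
  constructor
  · simpa only [RCLike.im_to_complex, Complex.smul_im, smul_eq_mul] using! Integrable.im
      (integrableOn_struveK0_smul_besselJ_sq (z := Complex.I * τ / 2) (by simp)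
        (Real.cosh_pos u))
  · rw [integral_struveK0_mul_im_besselJ_sq τ hu0, integral_Ioi_sinh_div_mul_sin τ hu0,
      Real.sinh_two_mul]
    field_simp

theorem statement9 (u : ℝ) (hu : u ∈ Set.Icc (-Real.pi) Real.pi) (hu0 : u ≠ 0)
    (n : ℕ) (hn : 1 ≤ n) :
    IntegrableOn (fun x : ℝ =>
      (x * struveK0 (2 * x * Real.cosh u) - 1 / (Real.pi * Real.cosh u)) *
        ((besselJ (Complex.I * n / 2) x) ^ 2).im) (Set.Ioi (0 : ℝ)) ∧
    ∫ x in Set.Ioi (0 : ℝ),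
        (x * struveK0 (2 * x * Real.cosh u) - 1 / (Real.pi * Real.cosh u)) *
          ((besselJ (Complex.I * n / 2) x) ^ 2).im
      = Real.sin (n * u) / (Real.pi * Real.sinh (2 * u) * Real.cosh (Real.pi * n / 2)) := by
  simpa only [Complex.ofReal_natCast] using statement9_general u n hu0
end

section
/- Let M ≥ 0 be a constant such that √u · |J₀(u)| ≤ M for all u > 0. Then for every x > 0 and every n ∈ ℕ, n ≥ 1, |Im[J_{in/2}(x)²]| / sinh(πn/2) ≤ Γ(1/4)² · M / (2π·√(πx)). -/
open MeasureTheory Filter Topology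

/-!
For `0 < z.re`, substituting `(a + b, a - b)` in the product of two integrals
`2 K_ν(z) = ∫ exp (-z cosh a + ν a) da` gives Macdonald's formula
`K_{ν+μ}(z) K_{ν-μ}(z) = ∫ cosh (2μb) K_{2ν}(2z cosh b) db`. For imaginary orders, cutting the
integral for `K_ν` at `a = ‖z‖ ^ (-1/2)` and integrating by parts beyond yields
`‖K_ν(z)‖ ≤ (3 + ‖ν‖) / √‖z‖`, uniformly up to the imaginary axis, so that the formula extends by
dominated convergence to `z = -ix`, where `K` is a combination of `J_{±ν}(x)`. Taking imaginary
parts and letting `ν → 0` at `z = -ix` gives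
`Im (J_{iμ}(x)²) / sinh (πμ) = -(1/π) ∫ cos (2μb) J₀(2x cosh b) db`,
and the bound on `J₀` leaves `∫ (cosh b) ^ (-1/2) db = Γ(1/4)² / √(2π)`. The same substitution,
applied to `Γ(1/4)² = (∫ exp (-exp a + a/4) da)²`, evaluates this last integral.
-/

section ProductOfIntegrals

variable {A : Type*} [NormedRing A] [NormedAlgebra ℝ A]

theorem integral_mul_comp_add_sub_eq_convolution (f g : ℝ → A) (b : ℝ) :
    ∫ a, f (a + b) * g (a - b) =
      convolution f (fun t => g (-t)) (ContinuousLinearMap.mul ℝ A) volume (2 * b) := by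
  rw [convolution_def, ← integral_sub_right_eq_self (fun a => f (a + b) * g (a - b)) b]
  refine integral_congr_ae (.of_forall fun a => ?_)
  simp only [ContinuousLinearMap.mul_apply']
  ring_nf

theorem integrable_integral_mul_comp_add_sub {f g : ℝ → A} (hf : Integrable f)
    (hg : Integrable g) : Integrable fun b : ℝ => ∫ a, f (a + b) * g (a - b) := by
  simp only [integral_mul_comp_add_sub_eq_convolution]
  exact (hf.integrable_convolution (ContinuousLinearMap.mul ℝ A) hg.comp_neg).comp_mul_left'
    two_ne_zero

theorem integral_mul_integral_eq_two_smul_integral [CompleteSpace A] {f g : ℝ → A}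
    (hf : Integrable f) (hg : Integrable g) :
    (∫ a, f a) * ∫ a, g a = (2 : ℝ) • ∫ b : ℝ, ∫ a, f (a + b) * g (a - b) := by
  simp only [integral_mul_comp_add_sub_eq_convolution]
  rw [Measure.integral_comp_mul_left, integral_convolution _ hf hg.comp_neg, integral_neg_eq_self]
  simp

end ProductOfIntegrals

section ExpGammaIntegral

open Complex
open scoped Real

theorem eqOn_re_pos_of_eqOn_ofReal {E : Type*} [NormedAddCommGroup E] [NormedSpace ℂ E]
    [CompleteSpace E] {f g : ℂ → E} (hf : DifferentiableOn ℂ f {w | 0 < w.re})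
    (hg : DifferentiableOn ℂ g {w | 0 < w.re}) (h : ∀ r : ℝ, 0 < r → f r = g r) :
    Set.EqOn f g {w | 0 < w.re} := by
  have hopen : IsOpen {w : ℂ | 0 < w.re} := isOpen_lt continuous_const continuous_re
  refine (hf.analyticOnNhd hopen).eqOn_of_preconnected_of_frequently_eq (hg.analyticOnNhd hopen)
    (convex_halfSpace_re_gt 0).isPreconnected (z₀ := ((1 : ℝ) : ℂ)) (by simp) ?_
  have hmap : Tendsto ((↑) : ℝ → ℂ) (𝓝[≠] 1) (𝓝[≠] ((1 : ℝ) : ℂ)) :=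
    continuous_ofReal.continuousWithinAt.tendsto_nhdsWithin fun r hr => by simpa using hr
  exact hmap.frequently (eventually_nhdsWithin_of_eventually_nhds
    ((lt_mem_nhds one_pos).mono h)).frequently

variable {w s : ℂ}

theorem ofReal_exp_cpow_s10 (a : ℝ) (s : ℂ) : (Real.exp a : ℂ) ^ s = exp (s * a) := by
  rw [cpow_def_of_ne_zero (by simp), ← ofReal_log (Real.exp_pos a).le, Real.log_exp, mul_comm]

theorem norm_exp_neg_mul_exp_add (w s : ℂ) (a : ℝ) :
    ‖exp (-w * exp a + s * a)‖ = Real.exp (-w.re * Real.exp a + s.re * a) := by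
  rw [norm_exp, ← ofReal_exp]
  simp [-ofReal_exp]

theorem integrable_realExp_neg_mul_exp_add {r σ : ℝ} (hr : 0 < r) (hσ : 0 < σ) :
    Integrable fun a : ℝ => Real.exp (-r * Real.exp a + σ * a) := by
  have hsub := integrableOn_image_iff_integrableOn_abs_deriv_smul MeasurableSet.univ
    (fun a _ => (Real.hasDerivAt_exp a).hasDerivWithinAt) Real.exp_injective.injOn
    fun t : ℝ => t ^ (σ - 1) * Real.exp (-r * t)
  have hgamma : IntegrableOn (fun t : ℝ => t ^ (σ - 1) * Real.exp (-r * t)) (Set.Ioi 0) := by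
    simpa using integrableOn_rpow_mul_exp_neg_mul_rpow (s := σ - 1) (by linarith) one_pos hr
  rw [Set.image_univ, Real.range_exp, integrableOn_univ] at hsub
  refine (hsub.1 hgamma).congr (.of_forall fun a => ?_)
  simp only [smul_eq_mul, abs_of_pos (Real.exp_pos a)]
  rw [← Real.exp_mul, ← Real.exp_add, ← Real.exp_add]
  ring_nf

theorem integrable_exp_neg_mul_exp_add (hw : 0 < w.re) (hs : 0 < s.re) :
    Integrable fun a : ℝ => exp (-w * exp a + s * a) :=
  (integrable_realExp_neg_mul_exp_add hw hs).mono' (by fun_prop)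
    (.of_forall fun a => (norm_exp_neg_mul_exp_add w s a).le)

theorem differentiableOn_integral_exp_neg_mul_exp_add (hs : 0 < s.re) :
    DifferentiableOn ℂ (fun w => ∫ a : ℝ, exp (-w * exp a + s * a)) {w | 0 < w.re} := by
  intro w (hw : 0 < w.re)
  have hderiv (a : ℝ) (v : ℂ) : HasDerivAt (fun v => exp (-v * exp a + s * a))
      (-exp (-v * exp a + (s + 1) * a)) v := by
    refine (((hasDerivAt_neg v).mul_const (exp a)).add_const (s * a)).cexp.congr_deriv ?_
    rw [add_one_mul, ← add_assoc, exp_add _ (a : ℂ)]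
    ring
  have hbound (a : ℝ) (v : ℂ) (hv : v ∈ {v : ℂ | w.re / 2 < v.re}) :
      ‖-exp (-v * exp a + (s + 1) * a)‖ ≤ Real.exp (-(w.re / 2) * Real.exp a + (s.re + 1) * a) := by
    rw [norm_neg, norm_exp_neg_mul_exp_add, add_re, one_re]
    gcongr
    exact hv.le
  exact (hasDerivAt_integral_of_dominated_loc_of_deriv_le
    ((isOpen_lt continuous_const continuous_re).mem_nhds (half_lt_self hw))
    (.of_forall fun v => by fun_prop) (integrable_exp_neg_mul_exp_add hw hs) (by fun_prop)
    (.of_forall hbound) (integrable_realExp_neg_mul_exp_add (half_pos hw) (by linarith))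
    (.of_forall fun a v _ => hderiv a v)).2.differentiableAt.differentiableWithinAt

theorem integral_exp_neg_ofReal_mul_exp_add {r : ℝ} (hr : 0 < r) (hs : 0 < s.re) :
    ∫ a : ℝ, exp (-r * exp a + s * a) = (r : ℂ) ^ (-s) * Gamma s := by
  have hsub := integral_image_eq_integral_abs_deriv_smul MeasurableSet.univ
    (fun a _ => (Real.hasDerivAt_exp a).hasDerivWithinAt) Real.exp_injective.injOn
    fun t : ℝ => (t : ℂ) ^ (s - 1) * exp (-(r * t))
  have harg : arg (r : ℂ) ≠ π := by rw [arg_ofReal_of_nonneg hr.le]; exact Real.pi_pos.ne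
  rw [Set.image_univ, Real.range_exp, setIntegral_univ, integral_cpow_mul_exp_neg_mul_Ioi hs hr,
    one_div, inv_cpow _ _ harg, ← cpow_neg] at hsub
  rw [hsub]
  refine integral_congr_ae (.of_forall fun a => ?_)
  simp only [abs_of_pos (Real.exp_pos a)]
  rw [ofReal_exp_cpow_s10, real_smul, ofReal_exp, ← exp_add, ← exp_add]
  ring_nf

theorem integral_exp_neg_mul_exp_add (hw : 0 < w.re) (hs : 0 < s.re) :
    ∫ a : ℝ, exp (-w * exp a + s * a) = w ^ (-s) * Gamma s :=
  eqOn_re_pos_of_eqOn_ofReal (differentiableOn_integral_exp_neg_mul_exp_add hs)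
    (fun _ hw => ((differentiableAt_id.cpow_const (.inl hw)).mul_const _).differentiableWithinAt)
    (fun _ hr => integral_exp_neg_ofReal_mul_exp_add hr hs) hw

end ExpGammaIntegral

section IncompleteGamma

open Complex
open scoped Real

variable {w s : ℂ}

/-- The upper incomplete gamma function in the normalization `w ^ (-s) * Γ(s, w)`, for
`0 < w.re`. -/
noncomputable def scaledUpperGamma (w s : ℂ) : ℂ :=
  ∫ a in Set.Ioi (0 : ℝ), exp (-w * exp a + s * a)

/-- The lower incomplete gamma function in the normalization `w ^ (-s) * γ(s, w)`, given by its
power series, which also defines it for `s.re ≤ 0` away from the poles `s = 0, -1, -2, …`. -/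
noncomputable def scaledLowerGamma (w s : ℂ) : ℂ :=
  ∑' m : ℕ, (-w) ^ m / (m.factorial * (s + m))

theorem integrableOn_Ioi_exp_neg_mul_exp_add (hw : 0 < w.re) (s : ℂ) :
    IntegrableOn (fun a : ℝ => exp (-w * exp a + s * a)) (Set.Ioi 0) := by
  have hint := integrable_realExp_neg_mul_exp_add hw (σ := |s.re| + 1) (by positivity)
  refine hint.integrableOn.mono' (by fun_prop) ?_
  filter_upwards [ae_restrict_mem measurableSet_Ioi] with a (ha : 0 < a)
  rw [norm_exp_neg_mul_exp_add]
  gcongr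
  linarith [le_abs_self s.re]

theorem mul_scaledUpperGamma_add_one (hw : 0 < w.re) (s : ℂ) :
    w * scaledUpperGamma w (s + 1) = exp (-w) + s * scaledUpperGamma w s := by
  have hs := integrableOn_Ioi_exp_neg_mul_exp_add hw s
  have hs1 := integrableOn_Ioi_exp_neg_mul_exp_add hw (s + 1)
  have hderiv (a : ℝ) : HasDerivAt (fun a : ℝ => exp (-w * exp a + s * a))
      (s * exp (-w * exp a + s * a) - w * exp (-w * exp a + (s + 1) * a)) a := by
    refine ((((hasDerivAt_exp (a : ℂ)).const_mul (-w)).add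
      ((hasDerivAt_id (a : ℂ)).const_mul s)).cexp.comp_ofReal).congr_deriv ?_
    rw [add_one_mul, ← add_assoc, exp_add _ (a : ℂ)]
    simp only [Pi.add_apply, id]
    ring
  have hint := (hs.const_mul s).sub (hs1.const_mul w)
  have hzero := tendsto_zero_of_hasDerivAt_of_integrableOn_Ioi (fun a _ => hderiv a) hint hs
  have hftc := integral_Ioi_of_hasDerivAt_of_tendsto' (fun a _ => hderiv a) hint hzero
  rw [integral_sub (hs.const_mul s) (hs1.const_mul w), integral_const_mul,
    integral_const_mul] at hftc
  simp only [ofReal_zero, exp_zero, mul_zero, add_zero, mul_one] at hftc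
  rw [scaledUpperGamma, scaledUpperGamma]
  linear_combination -hftc

theorem exists_norm_inv_add_intCast_le (s : ℂ) : ∃ C, ∀ k : ℤ, ‖(s + k)⁻¹‖ ≤ C := by
  have hcast : Tendsto (Int.cast : ℤ → ℂ) cofinite (Bornology.cobounded ℂ) := by
    rw [Int.cofinite_eq]
    exact tendsto_intCast_atBot_sup_atTop_cobounded
  have hlim : Tendsto (fun k : ℤ => ‖(s + k)⁻¹‖) cofinite (𝓝 0) := by
    simpa using (tendsto_inv₀_cobounded.comp (tendsto_const_add_cobounded s |>.comp hcast)).norm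
  obtain ⟨C, hC⟩ := hlim.bddAbove_range_of_cofinite
  exact ⟨C, fun k => hC ⟨k, rfl⟩⟩

theorem hasSum_exp (w : ℂ) : HasSum (fun m : ℕ => w ^ m / (m.factorial : ℂ)) (exp w) := by
  rw [exp_eq_exp_ℂ]
  exact NormedSpace.expSeries_div_hasSum_exp w

theorem summable_scaledLowerGamma (w s : ℂ) :
    Summable fun m : ℕ => (-w) ^ m / (m.factorial * (s + m)) := by
  obtain ⟨C, hC⟩ := exists_norm_inv_add_intCast_le s
  refine .of_norm_bounded ((Real.summable_pow_div_factorial ‖w‖).mul_right C) fun m => ?_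
  rw [← div_div, div_eq_mul_inv _ (s + m), norm_mul, norm_div, norm_pow, norm_neg, norm_natCast]
  gcongr
  exact_mod_cast hC m

theorem mul_scaledLowerGamma (w : ℂ) (hs : ∀ m : ℕ, s ≠ -m) :
    s * scaledLowerGamma w s = exp (-w) + w * scaledLowerGamma w (s + 1) := by
  have hne (m : ℕ) : s + m ≠ 0 := fun h => hs m (eq_neg_of_add_eq_zero_left h)
  have hexp := (hasSum_nat_add_iff' 1).2
    ((hasSum_exp (-w)).sub ((summable_scaledLowerGamma w s).hasSum.mul_left s))
  have hzero := hexp.add ((summable_scaledLowerGamma w (s + 1)).hasSum.mul_left w)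
  have hterm (m : ℕ) : (-w) ^ (m + 1) / ((m + 1).factorial : ℂ)
      - s * ((-w) ^ (m + 1) / ((m + 1).factorial * (s + (m + 1 : ℕ))))
      + w * ((-w) ^ m / (m.factorial * (s + 1 + m))) = 0 := by
    have hm : s + 1 + m ≠ 0 := by simpa [add_assoc, add_comm 1 (m : ℂ)] using hne (m + 1)
    have hfact : (m.factorial : ℂ) ≠ 0 := mod_cast m.factorial_ne_zero
    have hsucc : (m : ℂ) + 1 ≠ 0 := mod_cast m.succ_ne_zero
    rw [Nat.factorial_succ, show s + (m + 1 : ℕ) = s + 1 + m by push_cast; ring]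
    push_cast
    field_simp
    ring
  simp only [hterm] at hzero
  have h := hzero.unique hasSum_zero
  have hs0 : s ≠ 0 := by simpa using hne 0
  simp only [Finset.sum_range_one, pow_zero, Nat.factorial_zero, Nat.cast_one, Nat.cast_zero,
    add_zero, one_mul, div_one, mul_one_div_cancel hs0] at h
  rw [scaledLowerGamma, scaledLowerGamma]
  linear_combination -h

theorem integral_Iic_exp_neg_mul_exp_add (w : ℂ) (hs : 0 < s.re) :
    ∫ a in Set.Iic (0 : ℝ), exp (-w * exp a + s * a) = scaledLowerGamma w s := by
  have hre (m : ℕ) : 0 < (s + m).re := by simpa using by positivity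
  have hint (m : ℕ) : IntegrableOn
      (fun a : ℝ => (-w) ^ m / (m.factorial : ℂ) * exp ((s + m) * a)) (Set.Iic 0) :=
    (integrableOn_exp_mul_complex_Iic (hre m) 0).const_mul _
  have hsummable : Summable fun m : ℕ =>
      ∫ a in Set.Iic (0 : ℝ), ‖(-w) ^ m / (m.factorial : ℂ) * exp ((s + m) * a)‖ := by
    refine .of_nonneg_of_le (fun m => by positivity) (fun m => ?_)
      ((Real.summable_pow_div_factorial ‖w‖).mul_right (∫ a in Set.Iic (0 : ℝ), ‖exp (s * a)‖))
    rw [← integral_const_mul]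
    refine setIntegral_mono_on (hint m).norm
      ((integrableOn_exp_mul_complex_Iic hs 0).norm.const_mul _) measurableSet_Iic
      fun a (ha : a ≤ 0) => ?_
    rw [norm_mul, norm_div, norm_pow, norm_neg, norm_natCast, norm_exp, norm_exp]
    gcongr _ * Real.exp ?_
    simpa [add_mul] using mul_nonpos_of_nonneg_of_nonpos (m.cast_nonneg (α := ℝ)) ha
  have hsum := hasSum_integral_of_summable_integral_norm hint hsummable
  rw [scaledLowerGamma, ← tsum_congr fun m => ?_, hsum.tsum_eq]
  · refine integral_congr_ae (.of_forall fun a => ?_)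
    simp only [exp_add, ← ((hasSum_exp (-w * exp a)).mul_right _).tsum_eq]
    refine tsum_congr fun m => ?_
    rw [add_mul, exp_add, mul_pow, ← exp_nat_mul]
    ring
  · rw [integral_const_mul, integral_exp_mul_complex_Iic (hre m)]
    simp [div_eq_mul_inv, mul_assoc, mul_comm]

theorem scaledUpperGamma_add_scaledLowerGamma (hw : 0 < w.re) (hs : ∀ m : ℕ, s ≠ -m) :
    scaledUpperGamma w s + scaledLowerGamma w s = w ^ (-s) * Gamma s := by
  have hw0 : w ≠ 0 := fun h => by simp [h] at hw
  obtain ⟨k, hk⟩ := exists_nat_gt (-s.re)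
  replace hk : 0 < (s + k).re := by rw [add_re, natCast_re]; linarith
  induction k generalizing s with
  | zero =>
    replace hk : 0 < s.re := by simpa using hk
    have hint := integrable_exp_neg_mul_exp_add hw hk
    rw [← integral_exp_neg_mul_exp_add hw hk, ← integral_Iic_exp_neg_mul_exp_add w hk,
      scaledUpperGamma, add_comm,
      intervalIntegral.integral_Iic_add_Ioi hint.integrableOn hint.integrableOn]
  | succ k ih =>
    have hs0 : s ≠ 0 := by simpa using hs 0
    have hs1 (m : ℕ) : s + 1 ≠ -m := fun h => hs (m + 1) (by push_cast; linear_combination h)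
    have hupper := mul_scaledUpperGamma_add_one hw s
    have hlower := mul_scaledLowerGamma w hs
    have hstep := ih hs1 (by rwa [add_assoc, add_comm 1, ← Nat.cast_succ])
    have hpow : w * w ^ (-(s + 1)) = w ^ (-s) := by
      rw [show -s = -(s + 1) + 1 by ring, cpow_add _ _ hw0, cpow_one, mul_comm]
    rw [Gamma_add_one s hs0] at hstep
    apply mul_left_cancel₀ hs0
    linear_combination hlower - hupper + w * hstep + s * Gamma s * hpow

end IncompleteGamma

section Macdonald

open Complex
open scoped Real

variable {ν w z : ℂ}

/-- The Bessel–Clifford function `₀F₁(; ν + 1; q) / Γ(ν + 1)`, entire in both variables, through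
which `J_ν(x) = (x / 2) ^ ν * besselClifford ν (-(x / 2) ^ 2)`. -/
noncomputable def besselClifford (ν q : ℂ) : ℂ :=
  ∑' k : ℕ, q ^ k / (k.factorial * Gamma (ν + k + 1))

/-- The modified Bessel function of the first kind `I_ν(z)`, with the principal power. -/
noncomputable def besselI (ν z : ℂ) : ℂ :=
  (z / 2) ^ ν * besselClifford ν ((z / 2) ^ 2)

/-- The modified Bessel function of the second kind (Macdonald function) `K_ν(z)` of non-integer
order `ν`. -/
noncomputable def besselK (ν z : ℂ) : ℂ :=
  π / 2 * ((besselI (-ν) z - besselI ν z) / sin (π * ν))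

/-- The integrand of the integral representation of `2 * K_ν(z)` over `ℝ`. -/
noncomputable def macdonaldKernel (ν z : ℂ) (a : ℝ) : ℂ :=
  exp (-z * cosh a + ν * a)

theorem Gamma_sub_natCast (hν : ν ∈ integerComplement) (k : ℕ) :
    Gamma (ν - k) = (-1) ^ k * (π / sin (π * ν)) / Gamma (-ν + k + 1) := by
  have hrefl := Gamma_mul_Gamma_one_sub (ν - k)
  have hne : Gamma (-ν + k + 1) ≠ 0 := by
    refine Gamma_ne_zero fun m hm => hν ⟨k + 1 + m, ?_⟩
    push_cast
    linear_combination hm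
  rw [show 1 - (ν - k) = -ν + k + 1 by ring, mul_sub, mul_comm (π : ℂ) (k : ℂ),
    sin_antiperiodic.sub_nat_mul_eq] at hrefl
  rw [eq_div_iff hne, hrefl]
  have hsign : ((-1 : ℂ) ^ k) * (-1) ^ k = 1 := by rw [← mul_pow]; simp
  have hsin := sin_pi_mul_ne_zero hν
  field_simp
  rw [pow_two, hsign]

theorem summable_pow_mul_pow_div_sub_add (w ν : ℂ) :
    Summable fun p : ℕ × ℕ => (-w) ^ p.1 / (p.1.factorial : ℂ) *
      ((-w) ^ p.2 / (p.2.factorial * (ν - p.1 + p.2))) := by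
  obtain ⟨C, hC⟩ := exists_norm_inv_add_intCast_le ν
  have hexp := Real.summable_pow_div_factorial ‖w‖
  refine .of_norm_bounded ((hexp.mul_of_nonneg hexp (fun m => by positivity)
    fun m => by positivity).mul_right C) fun p => ?_
  have hp : ‖(ν - p.1 + p.2)⁻¹‖ ≤ C := by
    simpa [sub_eq_add_neg, add_assoc] using hC (-p.1 + p.2)
  rw [← div_div, div_eq_mul_inv _ (ν - p.1 + p.2), norm_mul, norm_mul, norm_div, norm_div, norm_pow,
    norm_pow, norm_neg, norm_natCast, norm_natCast, ← mul_assoc]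
  gcongr

theorem norm_macdonaldKernel (ν z : ℂ) (a : ℝ) :
    ‖macdonaldKernel ν z a‖ = Real.exp (-z.re * Real.cosh a + ν.re * a) := by
  rw [macdonaldKernel, norm_exp, ← ofReal_cosh]
  simp [-ofReal_cosh]

theorem macdonaldKernel_neg (ν z : ℂ) (a : ℝ) :
    macdonaldKernel ν z (-a) = macdonaldKernel (-ν) z a := by
  simp [macdonaldKernel]

@[fun_prop]
theorem continuous_macdonaldKernel (ν z : ℂ) : Continuous (macdonaldKernel ν z) := by
  unfold macdonaldKernel
  fun_prop

theorem integrableOn_Ioi_macdonaldKernel (ν : ℂ) (hz : 0 < z.re) :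
    IntegrableOn (macdonaldKernel ν z) (Set.Ioi 0) := by
  have hw : 0 < (z / 2).re := by simpa using hz
  refine Integrable.mono (integrableOn_Ioi_exp_neg_mul_exp_add hw ν) (by fun_prop)
    (.of_forall fun a => ?_)
  rw [norm_macdonaldKernel, norm_exp_neg_mul_exp_add, Real.cosh_eq, Real.exp_le_exp]
  have hexp : 0 < z.re * Real.exp (-a) := by positivity
  simp only [div_ofNat_re]
  linarith

theorem integrable_macdonaldKernel (ν : ℂ) (hz : 0 < z.re) :
    Integrable (macdonaldKernel ν z) := by
  have hIio : IntegrableOn (macdonaldKernel ν z) (Set.Iio 0) := by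
    rw [← (Measure.measurePreserving_neg volume).integrableOn_comp_preimage
      (Homeomorph.neg ℝ).measurableEmbedding]
    simpa [Function.comp_def, macdonaldKernel_neg] using integrableOn_Ioi_macdonaldKernel (-ν) hz
  rw [← integrableOn_univ, ← Set.Iic_union_Ioi (a := (0 : ℝ))]
  exact ((integrableOn_Iic_iff_integrableOn_Iio).2 hIio).union
    (integrableOn_Ioi_macdonaldKernel ν hz)

-- Expanding `exp (-w * exp (-a))` turns the integral over `a > 0` into incomplete gamma functions.
theorem hasSum_integral_Ioi_macdonaldKernel (hw : 0 < w.re) (ν : ℂ) :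
    HasSum (fun k : ℕ => (-w) ^ k / (k.factorial : ℂ) * scaledUpperGamma w (ν - k))
      (∫ a in Set.Ioi (0 : ℝ), macdonaldKernel ν (2 * w) a) := by
  have hint (k : ℕ) : IntegrableOn
      (fun a : ℝ => (-w) ^ k / (k.factorial : ℂ) * exp (-w * exp a + (ν - k) * a)) (Set.Ioi 0) :=
    (integrableOn_Ioi_exp_neg_mul_exp_add hw _).const_mul _
  have hsummable : Summable fun k : ℕ => ∫ a in Set.Ioi (0 : ℝ),
      ‖(-w) ^ k / (k.factorial : ℂ) * exp (-w * exp a + (ν - k) * a)‖ := by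
    refine .of_nonneg_of_le (fun k => by positivity) (fun k => ?_)
      ((Real.summable_pow_div_factorial ‖w‖).mul_right
        (∫ a in Set.Ioi (0 : ℝ), ‖exp (-w * exp a + ν * a)‖))
    rw [← integral_const_mul]
    refine setIntegral_mono_on (hint k).norm
      ((integrableOn_Ioi_exp_neg_mul_exp_add hw ν).norm.const_mul _) measurableSet_Ioi
      fun a (ha : 0 < a) => ?_
    rw [norm_mul, norm_div, norm_pow, norm_neg, norm_natCast, norm_exp_neg_mul_exp_add,
      norm_exp_neg_mul_exp_add, sub_re, natCast_re]
    gcongr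
    exact sub_le_self _ k.cast_nonneg
  have hkernel (a : ℝ) : ∑' k : ℕ, (-w) ^ k / (k.factorial : ℂ) * exp (-w * exp a + (ν - k) * a) =
      macdonaldKernel ν (2 * w) a := by
    have hsplit : -(2 * w) * cosh a + ν * a = -w * exp (-a) + (-w * exp a + ν * a) := by
      rw [cosh]; ring
    rw [macdonaldKernel, hsplit, exp_add, ← ((hasSum_exp (-w * exp (-a))).mul_right _).tsum_eq]
    refine tsum_congr fun k => ?_
    rw [show -w * exp a + (ν - k) * a = (k : ℂ) * (-a) + (-w * exp a + ν * a) by ring,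
      exp_add _ (-w * exp a + ν * a), mul_pow, ← exp_nat_mul]
    ring
  simpa only [hkernel, integral_const_mul, ← scaledUpperGamma.eq_1] using
    hasSum_integral_of_summable_integral_norm hint hsummable

theorem pow_div_factorial_mul_cpow_mul_Gamma_sub (hw : w ≠ 0) (hν : ν ∈ integerComplement)
    (k : ℕ) : (-w) ^ k / (k.factorial : ℂ) * (w ^ (-(ν - k)) * Gamma (ν - k)) =
      π / sin (π * ν) * w ^ (-ν) * ((w ^ 2) ^ k / (k.factorial * Gamma (-ν + k + 1))) := by
  have hsign : ((-1 : ℂ) ^ k) * (-1) ^ k = 1 := by rw [← mul_pow]; simp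
  rw [Gamma_sub_natCast hν, show -(ν - k) = -ν + k by ring, cpow_add _ _ hw, cpow_natCast,
    neg_pow w k, ← pow_mul, mul_comm 2 k, pow_mul]
  linear_combination (w ^ k / (k.factorial : ℂ) *
    (w ^ (-ν) * w ^ k * (π / sin (π * ν) / Gamma (-ν + k + 1)))) * hsign

theorem integral_Ioi_macdonaldKernel (hz : 0 < z.re) (hν : ν ∈ integerComplement) :
    ∫ a in Set.Ioi (0 : ℝ), macdonaldKernel ν z a =
      π / sin (π * ν) * besselI (-ν) z -
        ∑' p : ℕ × ℕ, (-(z / 2)) ^ p.1 / (p.1.factorial : ℂ) *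
          ((-(z / 2)) ^ p.2 / (p.2.factorial * (ν - p.1 + p.2))) := by
  have hw : 0 < (z / 2).re := by simpa using hz
  have hw0 : z / 2 ≠ 0 := fun h => by simp [h] at hw
  have hne (k m : ℕ) : ν - k ≠ -m := fun h => hν ⟨k - m, by
    push_cast; linear_combination -h⟩
  have hsummable := summable_pow_mul_pow_div_sub_add (z / 2) ν
  have hlower := hsummable.prod.hasSum
  simp only [tsum_mul_left] at hlower
  have hsum := (hasSum_integral_Ioi_macdonaldKernel hw ν).add hlower
  simp only [← scaledLowerGamma.eq_1, ← mul_add,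
    scaledUpperGamma_add_scaledLowerGamma hw (hne _),
    pow_div_factorial_mul_cpow_mul_Gamma_sub hw0 hν, mul_div_cancel₀ z two_ne_zero] at hsum
  have heq := hsum.tsum_eq
  rw [tsum_mul_left, ← besselClifford] at heq
  rw [hsummable.tsum_prod, besselI, ← mul_assoc, heq]
  simp only [tsum_mul_left, ← scaledLowerGamma.eq_1]
  ring

theorem integral_macdonaldKernel_eq_add (ν : ℂ) (hz : 0 < z.re) :
    ∫ a, macdonaldKernel ν z a =
      (∫ a in Set.Ioi 0, macdonaldKernel ν z a) + ∫ a in Set.Ioi 0, macdonaldKernel (-ν) z a := by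
  have hint := integrable_macdonaldKernel ν hz
  have hneg := integral_comp_neg_Ioi (0 : ℝ) (macdonaldKernel ν z)
  simp only [macdonaldKernel_neg, neg_zero] at hneg
  rw [hneg, add_comm,
    intervalIntegral.integral_Iic_add_Ioi hint.integrableOn hint.integrableOn]

theorem integral_macdonaldKernel (hz : 0 < z.re) (hν : ν ∈ integerComplement) :
    ∫ a, macdonaldKernel ν z a = 2 * besselK ν z := by
  have hνneg : -ν ∈ integerComplement := fun ⟨k, hk⟩ => hν ⟨-k, by simp [hk]⟩
  -- Transposing the summation indices exchanges, up to sign, the double series left over by the two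
  -- half-lines.
  have hanti : ∑' p : ℕ × ℕ, (-(z / 2)) ^ p.1 / (p.1.factorial : ℂ) *
        ((-(z / 2)) ^ p.2 / (p.2.factorial * (-ν - p.1 + p.2))) =
      -∑' p : ℕ × ℕ, (-(z / 2)) ^ p.1 / (p.1.factorial : ℂ) *
        ((-(z / 2)) ^ p.2 / (p.2.factorial * (ν - p.1 + p.2))) := by
    rw [← (Equiv.prodComm ℕ ℕ).tsum_eq, ← tsum_neg]
    refine tsum_congr fun p => ?_
    rw [Equiv.prodComm_apply, Prod.fst_swap, Prod.snd_swap,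
      show -ν - p.2 + p.1 = -(ν - p.1 + p.2) by ring]
    simp only [div_eq_mul_inv, mul_inv, inv_neg]
    ring
  rw [integral_macdonaldKernel_eq_add ν hz, integral_Ioi_macdonaldKernel hz hν,
    integral_Ioi_macdonaldKernel hz hνneg, hanti, besselK, neg_neg, mul_neg, sin_neg]
  ring

end Macdonald

section MacdonaldBound

open Complex
open scoped Real

variable {A : ℝ} {ν z : ℂ}

theorem tendsto_inv_sinh_atTop : Tendsto (fun a : ℝ => (Real.sinh a)⁻¹) atTop (𝓝 0) :=
  tendsto_inv_atTop_zero.comp <| tendsto_atTop_mono' _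
    ((eventually_ge_atTop 0).mono fun _ => Real.self_le_sinh_iff.2) tendsto_id

theorem hasDerivAt_neg_inv_sinh {a : ℝ} (ha : 0 < a) :
    HasDerivAt (fun a : ℝ => -(Real.sinh a)⁻¹) (Real.cosh a / Real.sinh a ^ 2) a :=
  ((Real.hasDerivAt_sinh a).inv (Real.sinh_pos_iff.2 ha).ne').neg.congr_deriv (by ring)

theorem integrableOn_Ioi_cosh_div_sinh_sq (hA : 0 < A) :
    IntegrableOn (fun a : ℝ => Real.cosh a / Real.sinh a ^ 2) (Set.Ioi A) :=
  integrableOn_Ioi_deriv_of_nonneg' (fun _ ha => hasDerivAt_neg_inv_sinh (hA.trans_le ha))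
    (fun _ _ => div_nonneg (Real.cosh_pos _).le (sq_nonneg _)) tendsto_inv_sinh_atTop.neg

theorem integral_Ioi_cosh_div_sinh_sq (hA : 0 < A) :
    ∫ a in Set.Ioi A, Real.cosh a / Real.sinh a ^ 2 = (Real.sinh A)⁻¹ := by
  rw [integral_Ioi_of_hasDerivAt_of_nonneg'
    (fun _ ha => hasDerivAt_neg_inv_sinh (hA.trans_le ha))
    (fun _ _ => div_nonneg (Real.cosh_pos _).le (sq_nonneg _)) tendsto_inv_sinh_atTop.neg]
  simp

theorem norm_macdonaldKernel_le_one (hν : ν.re ≤ 0) (hz : 0 ≤ z.re) {a : ℝ} (ha : 0 ≤ a) :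
    ‖macdonaldKernel ν z a‖ ≤ 1 := by
  rw [norm_macdonaldKernel, Real.exp_le_one_iff]
  nlinarith [mul_nonneg hz (Real.cosh_pos a).le, mul_nonneg (neg_nonneg.2 hν) ha]

theorem norm_macdonaldKernel_mul_div_sinh_sq_le (hν : ν.re ≤ 0) (hz : 0 ≤ z.re) {a : ℝ}
    (ha : 0 < a) :
    ‖macdonaldKernel ν z a * ((ν * Real.sinh a - Real.cosh a) / Real.sinh a ^ 2)‖ ≤
      (1 + ‖ν‖) * (Real.cosh a / Real.sinh a ^ 2) := by
  have hsinh := Real.sinh_pos_iff.2 ha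
  have hnum : ‖ν * Real.sinh a - Real.cosh a‖ ≤ (1 + ‖ν‖) * Real.cosh a := by
    refine (norm_sub_le _ _).trans ?_
    rw [norm_mul, norm_real, norm_real, Real.norm_of_nonneg hsinh.le,
      Real.norm_of_nonneg (Real.cosh_pos a).le]
    nlinarith [Real.sinh_lt_cosh a, norm_nonneg ν]
  rw [norm_mul, norm_div, norm_pow, norm_real, Real.norm_of_nonneg hsinh.le,
    ← mul_div_assoc (1 + ‖ν‖)]
  refine (mul_le_of_le_one_left ?_ (norm_macdonaldKernel_le_one hν hz ha.le)).trans ?_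
  · positivity
  · gcongr

theorem integrableOn_Ioi_macdonaldKernel_mul_div_sinh_sq (hν : ν.re ≤ 0) (hz : 0 ≤ z.re)
    (hA : 0 < A) :
    IntegrableOn (fun a : ℝ => macdonaldKernel ν z a *
      ((ν * Real.sinh a - Real.cosh a) / Real.sinh a ^ 2)) (Set.Ioi A) := by
  refine ((integrableOn_Ioi_cosh_div_sinh_sq hA).const_mul (1 + ‖ν‖)).mono'
    (ContinuousOn.aestronglyMeasurable (fun a ha => ContinuousAt.continuousWithinAt ?_)
      measurableSet_Ioi) ?_
  · have hsinh : ((Real.sinh a : ℂ)) ^ 2 ≠ 0 :=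
      pow_ne_zero 2 (mod_cast (Real.sinh_pos_iff.2 (hA.trans ha)).ne')
    fun_prop (disch := assumption)
  · filter_upwards [ae_restrict_mem measurableSet_Ioi] with a ha
    exact norm_macdonaldKernel_mul_div_sinh_sq_le hν hz (hA.trans ha)

theorem mul_integral_Ioi_macdonaldKernel (hν : ν.re ≤ 0) (hz : 0 < z.re) (hA : 0 < A) :
    z * ∫ a in Set.Ioi A, macdonaldKernel ν z a =
      macdonaldKernel ν z A / Real.sinh A + ∫ a in Set.Ioi A,
        macdonaldKernel ν z a * ((ν * Real.sinh a - Real.cosh a) / Real.sinh a ^ 2) := by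
  have hderiv (a : ℝ) (ha : a ∈ Set.Ici A) :
      HasDerivAt (fun a : ℝ => macdonaldKernel ν z a / Real.sinh a)
        (macdonaldKernel ν z a * ((ν * Real.sinh a - Real.cosh a) / Real.sinh a ^ 2)
          - z * macdonaldKernel ν z a) a := by
    have hsinh : (Real.sinh a : ℂ) ≠ 0 := mod_cast (Real.sinh_pos_iff.2 (hA.trans_le ha)).ne'
    have hkernel : HasDerivAt (macdonaldKernel ν z)
        (macdonaldKernel ν z a * (-z * Real.sinh a + ν)) a := by
      refine ((((hasDerivAt_cosh (a : ℂ)).const_mul (-z)).add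
        ((hasDerivAt_id (a : ℂ)).const_mul ν)).cexp.comp_ofReal).congr_deriv ?_
      simp [macdonaldKernel]
    refine (hkernel.div (Real.hasDerivAt_sinh a).ofReal_comp hsinh).congr_deriv ?_
    field_simp
    ring
  have hint := (integrableOn_Ioi_macdonaldKernel_mul_div_sinh_sq hν hz.le hA)
  have hker := (integrable_macdonaldKernel ν hz).integrableOn (s := Set.Ioi A) |>.const_mul z
  have hlim : Tendsto (fun a : ℝ => macdonaldKernel ν z a / Real.sinh a) atTop (𝓝 0) := by
    refine squeeze_zero_norm' ?_ tendsto_inv_sinh_atTop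
    filter_upwards [eventually_gt_atTop 0] with a ha
    have hsinh := Real.sinh_pos_iff.2 ha
    rw [norm_div, norm_real, Real.norm_of_nonneg hsinh.le, div_eq_mul_inv]
    exact mul_le_of_le_one_left (by positivity) (norm_macdonaldKernel_le_one hν hz.le ha.le)
  have hftc := integral_Ioi_of_hasDerivAt_of_tendsto' hderiv (hint.sub hker) hlim
  rw [integral_sub hint hker, integral_const_mul] at hftc
  linear_combination -hftc

theorem norm_integral_Ioi_macdonaldKernel_le (hν : ν.re ≤ 0) (hz : 0 < z.re) (hA : 0 < A) :
    ‖∫ a in Set.Ioi A, macdonaldKernel ν z a‖ ≤ (2 + ‖ν‖) / (‖z‖ * A) := by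
  have hnz : 0 < ‖z‖ := norm_pos_iff.2 fun h => by simp [h] at hz
  have hsinh := Real.sinh_pos_iff.2 hA
  have hboundary : ‖macdonaldKernel ν z A / Real.sinh A‖ ≤ (Real.sinh A)⁻¹ := by
    rw [norm_div, norm_real, Real.norm_of_nonneg hsinh.le, div_eq_mul_inv]
    exact mul_le_of_le_one_left (by positivity) (norm_macdonaldKernel_le_one hν hz.le hA.le)
  have hintegral : ‖∫ a in Set.Ioi A, macdonaldKernel ν z a *
      ((ν * Real.sinh a - Real.cosh a) / Real.sinh a ^ 2)‖ ≤ (1 + ‖ν‖) * (Real.sinh A)⁻¹ := by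
    rw [← integral_Ioi_cosh_div_sinh_sq hA, ← integral_const_mul]
    refine norm_integral_le_of_norm_le ((integrableOn_Ioi_cosh_div_sinh_sq hA).const_mul _) ?_
    filter_upwards [ae_restrict_mem measurableSet_Ioi] with a ha
    exact norm_macdonaldKernel_mul_div_sinh_sq_le hν hz.le (hA.trans ha)
  rw [← div_div, div_right_comm, le_div_iff₀' hnz, ← norm_mul,
    mul_integral_Ioi_macdonaldKernel hν hz hA]
  calc _ ≤ (Real.sinh A)⁻¹ + (1 + ‖ν‖) * (Real.sinh A)⁻¹ :=
        (norm_add_le _ _).trans (add_le_add hboundary hintegral)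
    _ = (2 + ‖ν‖) * (Real.sinh A)⁻¹ := by ring
    _ ≤ (2 + ‖ν‖) / A := by
        rw [div_eq_mul_inv]
        gcongr
        exact Real.self_le_sinh_iff.2 hA.le

theorem norm_integral_Ioi_zero_macdonaldKernel_le (hν : ν.re ≤ 0) (hz : 0 < z.re) :
    ‖∫ a in Set.Ioi 0, macdonaldKernel ν z a‖ ≤ (3 + ‖ν‖) / √‖z‖ := by
  have hnz : 0 < ‖z‖ := norm_pos_iff.2 fun h => by simp [h] at hz
  have hA : 0 < (√‖z‖)⁻¹ := by positivity
  have hint := integrable_macdonaldKernel ν hz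
  have hnear : ‖∫ a in Set.Ioc 0 (√‖z‖)⁻¹, macdonaldKernel ν z a‖ ≤ (√‖z‖)⁻¹ := by
    simpa [Real.volume_real_Ioc_of_le hA.le] using norm_setIntegral_le_of_norm_le_const (C := 1)
      (measure_Ioc_lt_top (μ := volume) (a := 0) (b := (√‖z‖)⁻¹))
      fun a ha => norm_macdonaldKernel_le_one hν hz.le ha.1.le
  rw [← Set.Ioc_union_Ioi_eq_Ioi hA.le, setIntegral_union (Set.Ioc_disjoint_Ioi le_rfl)
    measurableSet_Ioi hint.integrableOn hint.integrableOn]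
  calc _ ≤ (√‖z‖)⁻¹ + (2 + ‖ν‖) / (‖z‖ * (√‖z‖)⁻¹) :=
        (norm_add_le _ _).trans
          (add_le_add hnear (norm_integral_Ioi_macdonaldKernel_le hν hz hA))
    _ = (3 + ‖ν‖) / √‖z‖ := by
        rw [← div_eq_mul_inv, Real.div_sqrt]
        ring

theorem mem_integerComplement_of_re_eq_zero (hν : ν.re = 0) (hν0 : ν ≠ 0) :
    ν ∈ integerComplement := by
  rintro ⟨k, rfl⟩
  simp_all

theorem norm_besselK_le_of_re_pos (hν : ν.re = 0) (hν0 : ν ≠ 0) (hz : 0 < z.re) :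
    ‖besselK ν z‖ ≤ (3 + ‖ν‖) / √‖z‖ := by
  have hsum : ‖2 * besselK ν z‖ ≤ (3 + ‖ν‖) / √‖z‖ + (3 + ‖-ν‖) / √‖z‖ := by
    rw [← integral_macdonaldKernel hz (mem_integerComplement_of_re_eq_zero hν hν0),
      integral_macdonaldKernel_eq_add ν hz]
    exact (norm_add_le _ _).trans (add_le_add
      (norm_integral_Ioi_zero_macdonaldKernel_le hν.le hz)
      (norm_integral_Ioi_zero_macdonaldKernel_le (by simp [hν]) hz))
  rw [norm_mul, norm_neg, norm_ofNat] at hsum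
  linarith

end MacdonaldBound

section ProductFormula

open Complex
open scoped Real

variable {ν μ s z : ℂ}

theorem macdonaldKernel_add_mul_macdonaldKernel_sub (ν μ z : ℂ) (a b : ℝ) :
    macdonaldKernel (ν + μ) z (a + b) * macdonaldKernel (ν - μ) z (a - b) =
      exp (2 * μ * b) * macdonaldKernel (2 * ν) (2 * cosh b * z) a := by
  simp only [macdonaldKernel, ← exp_add]
  push_cast
  rw [cosh_add, cosh_sub]
  ring_nf

theorem integral_macdonaldKernel_mul_integral_macdonaldKernel (ν μ : ℂ) (hz : 0 < z.re) :
    (∫ a, macdonaldKernel (ν + μ) z a) * ∫ a, macdonaldKernel (ν - μ) z a =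
      2 * ∫ b : ℝ, exp (2 * μ * b) * ∫ a, macdonaldKernel (2 * ν) (2 * cosh b * z) a := by
  rw [integral_mul_integral_eq_two_smul_integral (integrable_macdonaldKernel _ hz)
    (integrable_macdonaldKernel _ hz)]
  simp only [macdonaldKernel_add_mul_macdonaldKernel_sub, integral_const_mul, real_smul,
    ofReal_ofNat]

theorem integrable_exp_mul_integral_macdonaldKernel (ν μ : ℂ) (hz : 0 < z.re) :
    Integrable fun b : ℝ =>
      exp (2 * μ * b) * ∫ a, macdonaldKernel (2 * ν) (2 * cosh b * z) a := by
  simpa only [macdonaldKernel_add_mul_macdonaldKernel_sub, integral_const_mul] using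
    integrable_integral_mul_comp_add_sub (integrable_macdonaldKernel (ν + μ) hz)
      (integrable_macdonaldKernel (ν - μ) hz)

theorem re_two_mul_cosh_mul_pos (hz : 0 < z.re) (b : ℝ) : 0 < (2 * cosh b * z).re := by
  rw [← ofReal_cosh, ← ofReal_ofNat, ← ofReal_mul, re_ofReal_mul]
  have := Real.cosh_pos b
  positivity

theorem besselK_mul_besselK_of_re_pos (hz : 0 < z.re) (hadd : ν + μ ∈ integerComplement)
    (hsub : ν - μ ∈ integerComplement) (hν : 2 * ν ∈ integerComplement) :
    besselK (ν + μ) z * besselK (ν - μ) z =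
      ∫ b : ℝ, cosh (2 * μ * b) * besselK (2 * ν) (2 * cosh b * z) := by
  have hprod := integral_macdonaldKernel_mul_integral_macdonaldKernel ν μ hz
  have hprod_neg := integral_macdonaldKernel_mul_integral_macdonaldKernel ν (-μ) hz
  have hint := integrable_exp_mul_integral_macdonaldKernel ν μ hz
  have hint_neg := integrable_exp_mul_integral_macdonaldKernel ν (-μ) hz
  simp only [integral_macdonaldKernel (re_two_mul_cosh_mul_pos hz _) hν]
    at hprod hprod_neg hint hint_neg
  rw [← sub_eq_add_neg, sub_neg_eq_add] at hprod_neg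
  rw [integral_macdonaldKernel hz hadd, integral_macdonaldKernel hz hsub] at hprod hprod_neg
  have hsum := integral_add hint hint_neg
  have hcosh (b : ℝ) : exp (2 * μ * b) * (2 * besselK (2 * ν) (2 * cosh b * z)) +
      exp (2 * -μ * b) * (2 * besselK (2 * ν) (2 * cosh b * z)) =
      4 * (cosh (2 * μ * b) * besselK (2 * ν) (2 * cosh b * z)) := by
    rw [mul_neg, neg_mul]
    linear_combination (-2 * besselK (2 * ν) (2 * cosh b * z)) * two_cosh (2 * μ * b)
  simp only [hcosh, integral_const_mul] at hsum
  linear_combination (hprod + hprod_neg - 2 * hsum) / 8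

theorem exp_neg_exp_add_mul_exp_neg_exp_sub (s : ℂ) (a b : ℝ) :
    exp (-1 * exp (a + b : ℝ) + s * (a + b : ℝ)) * exp (-1 * exp (a - b : ℝ) + s * (a - b : ℝ)) =
      exp (-(2 * cosh b) * exp a + 2 * s * a) := by
  rw [← exp_add]
  push_cast
  rw [sub_eq_add_neg (a : ℂ), exp_add (a : ℂ), exp_add (a : ℂ), cosh]
  ring_nf

theorem integral_exp_neg_two_cosh_mul_exp_add (hs : 0 < s.re) (b : ℝ) :
    ∫ a : ℝ, exp (-(2 * cosh b) * exp a + 2 * s * a) =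
      (2 * cosh b : ℂ) ^ (-(2 * s)) * Gamma (2 * s) :=
  integral_exp_neg_mul_exp_add (by simpa using re_two_mul_cosh_mul_pos (z := 1) (by simp) b)
    (by simpa using hs)

theorem integrable_two_mul_cosh_cpow (hs : 0 < s.re) :
    Integrable fun b : ℝ => (2 * cosh b : ℂ) ^ (-(2 * s)) := by
  have hint : Integrable fun a : ℝ => exp (-1 * exp a + s * a) :=
    integrable_exp_neg_mul_exp_add (by simp) hs
  have hGamma : Gamma (2 * s) ≠ 0 := Gamma_ne_zero_of_re_pos (by simpa using hs)
  have h := integrable_integral_mul_comp_add_sub hint hint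
  simp only [exp_neg_exp_add_mul_exp_neg_exp_sub, integral_exp_neg_two_cosh_mul_exp_add hs] at h
  simpa [hGamma] using h.mul_const (Gamma (2 * s))⁻¹

theorem integral_two_mul_cosh_cpow (hs : 0 < s.re) :
    ∫ b : ℝ, (2 * cosh b : ℂ) ^ (-(2 * s)) = Gamma s ^ 2 / (2 * Gamma (2 * s)) := by
  have hone : 0 < (1 : ℂ).re := by simp
  have hint : Integrable fun a : ℝ => exp (-1 * exp a + s * a) :=
    integrable_exp_neg_mul_exp_add hone hs
  have hGamma : Gamma (2 * s) ≠ 0 := Gamma_ne_zero_of_re_pos (by simpa using hs)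
  have h := integral_mul_integral_eq_two_smul_integral hint hint
  simp only [exp_neg_exp_add_mul_exp_neg_exp_sub, integral_exp_neg_two_cosh_mul_exp_add hs,
    integral_exp_neg_mul_exp_add hone hs, one_cpow, one_mul, integral_mul_const, real_smul,
    ofReal_ofNat] at h
  rw [eq_div_iff (mul_ne_zero two_ne_zero hGamma), pow_two, h]
  ring

theorem two_mul_cosh_cpow_neg_half (b : ℝ) :
    (2 * cosh b : ℂ) ^ (-(2 * (1 / 4)) : ℂ) = ((√2)⁻¹ * (√(Real.cosh b))⁻¹ : ℝ) := by
  have := Real.cosh_pos b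
  rw [← mul_inv, ← Real.sqrt_mul zero_le_two, Real.sqrt_eq_rpow, ← Real.rpow_neg (by positivity),
    ofReal_cpow (by positivity)]
  norm_num

theorem integrable_inv_sqrt_cosh : Integrable fun b : ℝ => (√(Real.cosh b))⁻¹ := by
  have h := integrable_two_mul_cosh_cpow (s := 1 / 4) (by norm_num)
  simp only [two_mul_cosh_cpow_neg_half] at h
  have htwo : √2 ≠ 0 := by positivity
  simpa only [RCLike.re_to_complex, ofReal_re, mul_inv_cancel_left₀ htwo] using h.re.const_mul √2

theorem integral_inv_sqrt_cosh :
    ∫ b : ℝ, (√(Real.cosh b))⁻¹ = Real.Gamma (1 / 4) ^ 2 / √(2 * π) := by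
  have h := integral_two_mul_cosh_cpow (s := 1 / 4) (by norm_num)
  have hGamma : Gamma (2 * (1 / 4)) = (√π : ℝ) := by
    rw [show (2 * (1 / 4) : ℂ) = (1 / 2 : ℝ) by norm_num, Gamma_ofReal, Real.Gamma_one_half_eq]
  simp only [two_mul_cosh_cpow_neg_half, hGamma] at h
  rw [integral_complex_ofReal, integral_const_mul,
    show (1 / 4 : ℂ) = (1 / 4 : ℝ) by norm_num, Gamma_ofReal] at h
  norm_cast at h
  rw [Real.sqrt_mul zero_le_two]
  have : 0 < √π := Real.sqrt_pos.2 Real.pi_pos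
  have htwo : √2 * √2 = 2 := Real.mul_self_sqrt zero_le_two
  field_simp at h ⊢
  linear_combination (√2 / 2) * h + Real.Gamma (1 / 4) ^ 2 / 2 * htwo

end ProductFormula

section MacdonaldContinuity

open Complex
open scoped Real

variable {ν μ z : ℂ}

theorem exists_norm_inv_Gamma_add_natCast_le (R : ℝ) :
    ∃ C, ∀ ν : ℂ, ‖ν‖ ≤ R → ∀ k : ℕ, ‖(Gamma (ν + k + 1))⁻¹‖ ≤ C := by
  obtain ⟨N, hN⟩ := exists_nat_ge R
  obtain ⟨C, hC⟩ := (isCompact_closedBall (0 : ℂ) (R + N + 1)).exists_bound_of_continuousOn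
    differentiable_one_div_Gamma.continuous.continuousOn
  refine ⟨C, fun ν hν k => ?_⟩
  have hsmall (k : ℕ) (hk : k ≤ N) : ‖(Gamma (ν + k + 1))⁻¹‖ ≤ C := by
    refine hC _ (mem_closedBall_zero_iff.2 ((norm_add₃_le).trans ?_))
    rw [norm_natCast, norm_one]
    gcongr
  rcases le_total k N with hk | hk
  · exact hsmall k hk
  induction k, hk using Nat.le_induction with
  | base => exact hsmall N le_rfl
  | succ k hk ih =>
    have hone : 1 ≤ ‖ν + k + 1‖ := by
      have h := abs_le.1 ((abs_re_le_norm ν).trans hν)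
      have hkN : (N : ℝ) ≤ k := mod_cast hk
      refine le_trans ?_ (re_le_norm _)
      simp only [add_re, natCast_re, one_re]
      linarith
    rw [one_div_Gamma_eq_self_mul_one_div_Gamma_add_one, norm_mul] at ih
    push_cast
    rw [← add_assoc]
    exact (le_mul_of_one_le_left (norm_nonneg _) hone).trans ih

@[fun_prop]
theorem continuous_besselClifford : Continuous fun p : ℂ × ℂ => besselClifford p.1 p.2 := by
  refine continuous_iff_continuousAt.2 fun p => ?_
  obtain ⟨C, hC⟩ := exists_norm_inv_Gamma_add_natCast_le (‖p‖ + 1)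
  suffices ContinuousOn (fun p : ℂ × ℂ => besselClifford p.1 p.2) (Metric.ball 0 (‖p‖ + 1)) from
    this.continuousAt (Metric.isOpen_ball.mem_nhds (by simp))
  refine continuousOn_tsum (fun k => Continuous.continuousOn ?_)
    ((Real.summable_pow_div_factorial (‖p‖ + 1)).mul_right C) fun k q hq => ?_
  · simp only [div_eq_mul_inv, mul_inv]
    have hGamma : Continuous fun p : ℂ × ℂ => (Gamma (p.1 + k + 1))⁻¹ :=
      differentiable_one_div_Gamma.continuous.comp (by fun_prop)
    fun_prop
  · have hqnorm : ‖q‖ ≤ ‖p‖ + 1 := (mem_ball_zero_iff.1 hq).le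
    rw [← div_div, div_eq_mul_inv _ (Gamma _), norm_mul, norm_div, norm_pow,
      Complex.norm_natCast]
    gcongr
    · exact (norm_snd_le q).trans hqnorm
    · exact hC q.1 ((norm_fst_le q).trans hqnorm) k

theorem continuous_besselI_left (hz : z ≠ 0) : Continuous fun ν => besselI ν z := by
  have hcpow : Continuous fun ν : ℂ => (z / 2) ^ ν :=
    continuous_id.const_cpow (.inl (div_ne_zero hz two_ne_zero))
  unfold besselI
  fun_prop

theorem continuousAt_besselI (ν : ℂ) (hz : z ∈ slitPlane) : ContinuousAt (besselI ν) z := by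
  have hz2 : z / 2 ∈ slitPlane := by simpa [mem_slitPlane_iff] using hz
  have : ContinuousAt (fun z : ℂ => (z / 2) ^ ν) z := by fun_prop (disch := assumption)
  unfold besselI
  fun_prop

theorem continuousAt_besselK_left (hν : ν ∈ integerComplement) (hz : z ≠ 0) :
    ContinuousAt (fun ν => besselK ν z) ν := by
  have hsin := sin_pi_mul_ne_zero hν
  have hI := continuous_besselI_left hz
  have : Continuous fun ν => besselI (-ν) z := hI.comp continuous_neg
  unfold besselK
  fun_prop (disch := assumption)

theorem continuousAt_besselK (ν : ℂ) (hz : z ∈ slitPlane) : ContinuousAt (besselK ν) z :=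
  (((continuousAt_besselI (-ν) hz).sub (continuousAt_besselI ν hz)).div_const _).const_mul _

theorem besselK_neg (ν z : ℂ) : besselK (-ν) z = besselK ν z := by
  rw [besselK, besselK, neg_neg, mul_neg, sin_neg, div_neg, ← neg_div, neg_sub]

theorem mem_slitPlane_of_re_nonneg (hz : 0 ≤ z.re) (hz0 : z ≠ 0) : z ∈ slitPlane :=
  mem_slitPlane_iff.2 (hz.lt_or_eq.imp_right fun hre him => hz0 (Complex.ext hre.symm him))

theorem mem_closure_setOf_re_pos (hz : 0 ≤ z.re) : z ∈ closure {w : ℂ | 0 < w.re} := by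
  rwa [closure_setOfPred_lt_re]

theorem norm_besselK_le (hν : ν.re = 0) (hν0 : ν ≠ 0) (hz : 0 ≤ z.re) (hz0 : z ≠ 0) :
    ‖besselK ν z‖ ≤ (3 + ‖ν‖) / √‖z‖ := by
  have hsqrt : √‖z‖ ≠ 0 := (Real.sqrt_pos.2 (norm_pos_iff.2 hz0)).ne'
  refine ContinuousWithinAt.closure_le (mem_closure_setOf_re_pos hz)
    (continuousAt_besselK ν (mem_slitPlane_of_re_nonneg hz hz0)).norm.continuousWithinAt
    (ContinuousAt.continuousWithinAt ?_) fun w hw => norm_besselK_le_of_re_pos hν hν0 hw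
  fun_prop (disch := assumption)

theorem two_mul_cosh_mul_ne_zero (hz0 : z ≠ 0) (b : ℝ) : 2 * cosh b * z ≠ 0 :=
  mul_ne_zero (mul_ne_zero two_ne_zero (mod_cast (Real.cosh_pos b).ne')) hz0

theorem re_two_mul_cosh_mul_nonneg (hz : 0 ≤ z.re) (b : ℝ) : 0 ≤ (2 * cosh b * z).re := by
  rw [← ofReal_cosh, ← ofReal_ofNat, ← ofReal_mul, re_ofReal_mul]
  have := Real.cosh_pos b
  positivity

theorem norm_besselK_two_mul_cosh_mul_le (hν : ν.re = 0) (hν0 : ν ≠ 0) (hz : 0 ≤ z.re)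
    (hz0 : z ≠ 0) (b : ℝ) :
    ‖besselK ν (2 * cosh b * z)‖ ≤ (3 + ‖ν‖) / √(2 * ‖z‖) * (√(Real.cosh b))⁻¹ := by
  have hcosh := Real.cosh_pos b
  refine (norm_besselK_le hν hν0 (re_two_mul_cosh_mul_nonneg hz b)
    (two_mul_cosh_mul_ne_zero hz0 b)).trans_eq ?_
  rw [norm_mul, norm_mul, norm_ofNat, ← ofReal_cosh, norm_real, Real.norm_of_nonneg hcosh.le,
    mul_right_comm, Real.sqrt_mul (by positivity), ← div_eq_mul_inv, div_div]

theorem continuous_besselK_two_mul_cosh_mul (ν : ℂ) (hz : 0 ≤ z.re) (hz0 : z ≠ 0) :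
    Continuous fun b : ℝ => besselK ν (2 * cosh b * z) := by
  refine continuous_iff_continuousAt.2 fun b => ContinuousAt.comp (g := besselK ν)
    (continuousAt_besselK ν (mem_slitPlane_of_re_nonneg (re_two_mul_cosh_mul_nonneg hz b)
      (two_mul_cosh_mul_ne_zero hz0 b))) ?_
  fun_prop

theorem norm_cosh_two_mul_mul_le_one (hμ : μ.re = 0) (b : ℝ) : ‖cosh (2 * μ * b)‖ ≤ 1 := by
  obtain ⟨t, rfl⟩ : ∃ t : ℝ, μ = t * I := ⟨μ.im, Complex.ext (by simp [hμ]) (by simp)⟩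
  rw [show 2 * (t * I) * b = (2 * t * b : ℝ) * I by push_cast; ring, cosh_mul_I, ← ofReal_cos,
    norm_real]
  exact Real.abs_cos_le_one _

theorem norm_cosh_mul_besselK_le (hν : ν.re = 0) (hν0 : ν ≠ 0) (hμ : μ.re = 0) (hz : 0 ≤ z.re)
    (hz0 : z ≠ 0) (b : ℝ) :
    ‖cosh (2 * μ * b) * besselK ν (2 * cosh b * z)‖ ≤
      (3 + ‖ν‖) / √(2 * ‖z‖) * (√(Real.cosh b))⁻¹ := by
  rw [norm_mul]
  exact (mul_le_of_le_one_left (norm_nonneg _) (norm_cosh_two_mul_mul_le_one hμ b)).trans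
    (norm_besselK_two_mul_cosh_mul_le hν hν0 hz hz0 b)

theorem continuous_cosh_mul_besselK (ν μ : ℂ) (hz : 0 ≤ z.re) (hz0 : z ≠ 0) :
    Continuous fun b : ℝ => cosh (2 * μ * b) * besselK ν (2 * cosh b * z) :=
  Continuous.mul (by fun_prop) (continuous_besselK_two_mul_cosh_mul ν hz hz0)

theorem integrable_cosh_mul_besselK (hν : ν.re = 0) (hν0 : ν ≠ 0) (hμ : μ.re = 0)
    (hz : 0 ≤ z.re) (hz0 : z ≠ 0) :
    Integrable fun b : ℝ => cosh (2 * μ * b) * besselK ν (2 * cosh b * z) :=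
  (integrable_inv_sqrt_cosh.const_mul _).mono'
    (continuous_cosh_mul_besselK ν μ hz hz0).aestronglyMeasurable
    (.of_forall (norm_cosh_mul_besselK_le hν hν0 hμ hz hz0))

theorem continuousWithinAt_integral_cosh_mul_besselK (hν : ν.re = 0) (hν0 : ν ≠ 0)
    (hμ : μ.re = 0) (hz : 0 ≤ z.re) (hz0 : z ≠ 0) :
    ContinuousWithinAt (fun w => ∫ b : ℝ, cosh (2 * μ * b) * besselK ν (2 * cosh b * w))
      {w | 0 < w.re} z := by
  have hne (w : ℂ) (hw : 0 < w.re) : w ≠ 0 := fun h => by simp [h] at hw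
  have hnear : ∀ᶠ w in 𝓝[{w | 0 < w.re}] z, ‖z‖ / 2 < ‖w‖ := nhdsWithin_le_nhds <|
    continuous_norm.continuousAt.eventually_const_lt (half_lt_self (norm_pos_iff.2 hz0))
  refine continuousWithinAt_of_dominated
    (bound := fun b => (3 + ‖ν‖) / √‖z‖ * (√(Real.cosh b))⁻¹) ?_ ?_
    (integrable_inv_sqrt_cosh.const_mul _) (.of_forall fun b => ?_)
  · filter_upwards [self_mem_nhdsWithin] with w hw
    exact (continuous_cosh_mul_besselK ν μ (le_of_lt hw) (hne w hw)).aestronglyMeasurable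
  · filter_upwards [self_mem_nhdsWithin, hnear] with w hw hzw
    refine .of_forall fun b =>
      (norm_cosh_mul_besselK_le hν hν0 hμ (le_of_lt hw) (hne w hw) b).trans ?_
    have := norm_pos_iff.2 hz0
    gcongr
    linarith
  · have hK : ContinuousAt (fun w => besselK ν (2 * cosh b * w)) z :=
      ContinuousAt.comp (g := besselK ν) (continuousAt_besselK ν (mem_slitPlane_of_re_nonneg
        (re_two_mul_cosh_mul_nonneg hz b) (two_mul_cosh_mul_ne_zero hz0 b))) (by fun_prop)
    exact (hK.const_mul _).continuousWithinAt

theorem besselK_mul_besselK (hν : ν.re = 0) (hν0 : ν ≠ 0) (hμ : μ.re = 0) (hadd : ν + μ ≠ 0)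
    (hsub : ν - μ ≠ 0) (hz : 0 ≤ z.re) (hz0 : z ≠ 0) :
    besselK (ν + μ) z * besselK (ν - μ) z =
      ∫ b : ℝ, cosh (2 * μ * b) * besselK (2 * ν) (2 * cosh b * z) := by
  have := mem_closure_iff_nhdsWithin_neBot.1 (mem_closure_setOf_re_pos hz)
  have hslit := mem_slitPlane_of_re_nonneg hz hz0
  have hν2 : (2 * ν).re = 0 := by simp [hν]
  have hν20 : 2 * ν ≠ 0 := mul_ne_zero two_ne_zero hν0
  refine tendsto_nhds_unique_of_eventuallyEq
    ((continuousAt_besselK _ hslit).mul (continuousAt_besselK _ hslit)).continuousWithinAt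
    (continuousWithinAt_integral_cosh_mul_besselK hν2 hν20 hμ hz hz0) ?_
  filter_upwards [self_mem_nhdsWithin] with w hw
  exact besselK_mul_besselK_of_re_pos hw
    (mem_integerComplement_of_re_eq_zero (by simp [hν, hμ]) hadd)
    (mem_integerComplement_of_re_eq_zero (by simp [hν, hμ]) hsub)
    (mem_integerComplement_of_re_eq_zero hν2 hν20)

end MacdonaldContinuity

section BesselJ

open Complex ComplexConjugate
open scoped Real

variable {x : ℝ}

theorem besselJ_eq_cpow_mul_besselClifford (ν : ℂ) (hx : 0 < x) :
    besselJ ν x = (x / 2 : ℝ) ^ ν * besselClifford ν (-(x / 2 : ℝ) ^ 2) := by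
  have hx2 : ((x / 2 : ℝ) : ℂ) ≠ 0 := mod_cast (half_pos hx).ne'
  have hexp : exp (Real.log (x / 2)) = (x / 2 : ℝ) := by
    rw [← ofReal_exp, Real.exp_log (half_pos hx)]
  rw [besselJ, besselClifford, ← tsum_mul_left]
  refine tsum_congr fun k => ?_
  rw [cpow_def_of_ne_zero hx2, ← ofReal_log (half_pos hx).le, add_mul, exp_add, mul_comm ν,
    show 2 * (k : ℂ) * Real.log (x / 2) = (2 * k : ℕ) * Real.log (x / 2) by push_cast; ring,
    exp_nat_mul, hexp, pow_mul, neg_pow (_ ^ 2)]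
  ring

theorem continuous_besselJ_left (hx : 0 < x) : Continuous fun ν => besselJ ν x := by
  have hx2 : ((x / 2 : ℝ) : ℂ) ≠ 0 := mod_cast (half_pos hx).ne'
  have hcpow : Continuous fun ν : ℂ => ((x / 2 : ℝ) : ℂ) ^ ν := continuous_id.const_cpow (.inl hx2)
  simp only [besselJ_eq_cpow_mul_besselClifford _ hx]
  fun_prop

theorem besselJ_zero (hx : 0 < x) : besselJ 0 x = besselJ0 x := by
  rw [besselJ_eq_cpow_mul_besselClifford 0 hx, cpow_zero, one_mul, besselClifford, besselJ0,
    ofReal_tsum]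
  refine tsum_congr fun k => ?_
  rw [zero_add, Gamma_nat_eq_factorial, neg_pow (_ ^ 2), ← pow_mul]
  push_cast
  ring

theorem besselJ_conj (ν : ℂ) (x : ℝ) : besselJ (conj ν) x = conj (besselJ ν x) := by
  rw [besselJ, besselJ, conj_tsum]
  refine tsum_congr fun k => ?_
  simp [← exp_conj, ← Gamma_conj, conj_ofNat]

theorem besselI_neg_ofReal_mul_I (ν : ℂ) (hx : 0 < x) :
    besselI ν (-(x * I)) = exp (-(π / 2) * I * ν) * besselJ ν x := by
  have hx2 : ((x / 2 : ℝ) : ℂ) ≠ 0 := mod_cast (half_pos hx).ne'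
  have harg : -(x * I) / 2 = (x / 2 : ℝ) * -I := by push_cast; ring
  rw [besselI, besselJ_eq_cpow_mul_besselClifford ν hx, harg, mul_pow, neg_sq, I_sq, mul_neg_one,
    cpow_def_of_ne_zero (mul_ne_zero hx2 (neg_ne_zero.2 I_ne_zero)), cpow_def_of_ne_zero hx2,
    log_ofReal_mul (half_pos hx) (neg_ne_zero.2 I_ne_zero), log_neg_I, ← mul_assoc, ← exp_add,
    ← ofReal_log (half_pos hx).le]
  ring_nf

theorem besselK_I_mul_neg_ofReal_mul_I (t : ℝ) (hx : 0 < x) :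
    besselK (I * t) (-(x * I)) = (π / (2 * Real.sinh (π * t)) : ℝ) * (I *
      (Real.exp (π * t / 2) * besselJ (I * t) x -
        Real.exp (-(π * t / 2)) * conj (besselJ (I * t) x))) := by
  have hconj : -(I * t) = conj (I * t) := by simp
  have hsin : sin (π * (I * t)) = Real.sinh (π * t) * I := by
    rw [show (π : ℂ) * (I * t) = (π * t : ℝ) * I by push_cast; ring, sin_mul_I, ofReal_sinh]
  have hpos : exp (-(π / 2) * I * (I * t)) = Real.exp (π * t / 2) := by
    rw [ofReal_exp]
    congr 1
    push_cast
    linear_combination (-(π * t / 2)) * I_sq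
  have hneg : exp (-(π / 2) * I * -(I * t)) = Real.exp (-(π * t / 2)) := by
    rw [mul_neg, exp_neg, hpos, Real.exp_neg, ofReal_inv]
  rw [besselK, besselI_neg_ofReal_mul_I _ hx, besselI_neg_ofReal_mul_I _ hx, hpos, hneg, hsin,
    hconj, besselJ_conj, div_mul_eq_div_div, div_I]
  push_cast
  ring

theorem sinh_pi_mul (t : ℝ) :
    Real.sinh (π * t) = 2 * Real.sinh (π * t / 2) * Real.cosh (π * t / 2) := by
  rw [← Real.sinh_two_mul, mul_div_cancel₀ _ two_ne_zero]

theorem re_besselK_I_mul (t : ℝ) (hx : 0 < x) :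
    (besselK (I * t) (-(x * I))).re =
      -(π / (2 * Real.sinh (π * t / 2))) * (besselJ (I * t) x).im := by
  have hcosh := (Real.cosh_pos (π * t / 2)).ne'
  rw [besselK_I_mul_neg_ofReal_mul_I t hx, sinh_pi_mul, re_ofReal_mul, I_mul_re, sub_im,
    im_ofReal_mul, im_ofReal_mul, conj_im, mul_neg, mul_neg, sub_neg_eq_add, ← add_mul,
    ← mul_div_cancel₀ (Real.exp _ + _) two_ne_zero, ← Real.cosh_eq]
  field_simp

theorem im_besselK_I_mul {t : ℝ} (ht : t ≠ 0) (hx : 0 < x) :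
    (besselK (I * t) (-(x * I))).im =
      π / (2 * Real.cosh (π * t / 2)) * (besselJ (I * t) x).re := by
  have hsinh : Real.sinh (π * t / 2) ≠ 0 := by simp [ht, Real.pi_ne_zero]
  rw [besselK_I_mul_neg_ofReal_mul_I t hx, sinh_pi_mul, im_ofReal_mul, I_mul_im, sub_re,
    re_ofReal_mul, re_ofReal_mul, conj_re, ← sub_mul,
    ← mul_div_cancel₀ (Real.exp _ - _) two_ne_zero, ← Real.sinh_eq]
  field_simp

theorem im_besselK_I_mul_sq {t : ℝ} (ht : t ≠ 0) (hx : 0 < x) :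
    (besselK (I * t) (-(x * I)) ^ 2).im =
      -(π ^ 2 / 2) * ((besselJ (I * t) x ^ 2).im / Real.sinh (π * t)) := by
  have hcosh := (Real.cosh_pos (π * t / 2)).ne'
  have hsinh : Real.sinh (π * t / 2) ≠ 0 := by simp [ht, Real.pi_ne_zero]
  rw [pow_two, mul_im, pow_two (besselJ _ _), mul_im, re_besselK_I_mul t hx,
    im_besselK_I_mul ht hx, sinh_pi_mul]
  field_simp
  ring

end BesselJ

section ImaginaryOrder

open Complex
open scoped Real

variable {x η μ : ℝ}

theorem im_cosh_mul_besselK (hη : η ≠ 0) (μ : ℝ) (hx : 0 < x) (b : ℝ) :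
    (cosh (2 * (I * μ) * b) * besselK (2 * (I * η)) (2 * cosh b * -(x * I))).im =
      Real.cos (2 * μ * b) *
        (π / (2 * Real.cosh (π * η)) * (besselJ (2 * (I * η)) (2 * x * Real.cosh b)).re) := by
  have hy : 0 < 2 * x * Real.cosh b := mul_pos (by positivity) (Real.cosh_pos b)
  have hcos : cosh (2 * (I * μ) * b) = Real.cos (2 * μ * b) := by
    rw [show 2 * (I * μ) * b = (2 * μ * b : ℝ) * I by push_cast; ring, cosh_mul_I, ofReal_cos]
  have harg : 2 * cosh b * -(x * I) = -((2 * x * Real.cosh b : ℝ) * I) := by push_cast; ring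
  have horder : 2 * (I * η) = I * (2 * η : ℝ) := by push_cast; ring
  rw [hcos, harg, horder, im_ofReal_mul, im_besselK_I_mul (mul_ne_zero two_ne_zero hη) hy,
    mul_left_comm π, mul_div_cancel_left₀ _ two_ne_zero]

theorem tendsto_integral_im_cosh_mul_besselK (μ : ℝ) (hx : 0 < x) :
    Tendsto (fun η : ℝ => ∫ b : ℝ,
        (cosh (2 * (I * μ) * b) * besselK (2 * (I * η)) (2 * cosh b * -(x * I))).im) (𝓝[≠] 0)
      (𝓝 (∫ b, Real.cos (2 * μ * b) * (π / 2 * besselJ0 (2 * x * Real.cosh b)))) := by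
  have hz : 0 ≤ (-(x * I)).re := by simp
  have hz0 : -(x * I) ≠ 0 := by simp [hx.ne']
  have hsmall : ∀ᶠ η : ℝ in 𝓝[≠] 0, ‖2 * (I * η)‖ < 1 := nhdsWithin_le_nhds <|
    (Continuous.tendsto' (by fun_prop) 0 0 (by simp)).eventually_lt_const zero_lt_one
  refine tendsto_integral_filter_of_dominated_convergence
    (fun b => 4 / √(2 * ‖-(x * I)‖) * (√(Real.cosh b))⁻¹) (.of_forall fun η => ?_) ?_
    (integrable_inv_sqrt_cosh.const_mul _) (.of_forall fun b => ?_)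
  · exact (continuous_im.comp (continuous_cosh_mul_besselK _ _ hz hz0)).aestronglyMeasurable
  · filter_upwards [hsmall, self_mem_nhdsWithin] with η hη1 hη
    refine .of_forall fun b => (abs_im_le_norm _).trans <| (norm_cosh_mul_besselK_le (by simp)
      (by simpa using hη) (by simp) hz hz0 b).trans ?_
    gcongr
    linarith
  · have hy : 0 < 2 * x * Real.cosh b := mul_pos (by positivity) (Real.cosh_pos b)
    have hJ : Continuous fun η : ℝ => (besselJ (2 * (I * η)) (2 * x * Real.cosh b)).re :=
      continuous_re.comp ((continuous_besselJ_left hy).comp (by fun_prop))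
    have hcosh (η : ℝ) : 2 * Real.cosh (π * η) ≠ 0 := (mul_pos two_pos (Real.cosh_pos _)).ne'
    have hlim : ContinuousAt (fun η : ℝ => Real.cos (2 * μ * b) * (π / (2 * Real.cosh (π * η)) *
        (besselJ (2 * (I * η)) (2 * x * Real.cosh b)).re)) 0 := by
      fun_prop (disch := exact hcosh _)
    have htendsto := hlim.tendsto.mono_left (nhdsWithin_le_nhds (s := {0}ᶜ))
    simp only [ofReal_zero, mul_zero, besselJ_zero hy, ofReal_re, Real.cosh_zero, mul_one]
      at htendsto
    refine htendsto.congr' ?_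
    filter_upwards [self_mem_nhdsWithin] with η hη
    exact (im_cosh_mul_besselK hη μ hx b).symm

theorem tendsto_besselK_mul_besselK {z : ℂ} (hμ : μ ≠ 0) (hz : z ≠ 0) :
    Tendsto (fun η : ℝ => besselK (I * η + I * μ) z * besselK (I * η - I * μ) z) (𝓝[≠] 0)
      (𝓝 (besselK (I * μ) z ^ 2)) := by
  have hcont (t : ℝ) (ht : t ≠ 0) : ContinuousAt (fun ν => besselK ν z) (I * t) :=
    continuousAt_besselK_left (mem_integerComplement_of_re_eq_zero (by simp) (by simpa using ht)) hz
  have hadd : Tendsto (fun η : ℝ => I * η + I * μ) (𝓝[≠] 0) (𝓝 (I * μ)) :=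
    (Continuous.tendsto' (by fun_prop) _ _ (by simp)).mono_left nhdsWithin_le_nhds
  have hsub : Tendsto (fun η : ℝ => I * η - I * μ) (𝓝[≠] 0) (𝓝 (I * (-μ : ℝ))) :=
    (Continuous.tendsto' (by fun_prop) _ _ (by simp)).mono_left nhdsWithin_le_nhds
  have h := ((hcont μ hμ).tendsto.comp hadd).mul ((hcont (-μ) (neg_ne_zero.2 hμ)).tendsto.comp hsub)
  rwa [ofReal_neg, mul_neg, besselK_neg, ← pow_two] at h

theorem im_besselJ_sq_div_sinh (hμ : μ ≠ 0) (hx : 0 < x) :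
    (besselJ (I * μ) x ^ 2).im / Real.sinh (π * μ) =
      -(1 / π) * ∫ b, Real.cos (2 * μ * b) * besselJ0 (2 * x * Real.cosh b) := by
  have hz : 0 ≤ (-(x * I)).re := by simp
  have hz0 : -(x * I) ≠ 0 := by simp [hx.ne']
  have hsmall : ∀ᶠ η : ℝ in 𝓝[≠] 0, |η| < |μ| := nhdsWithin_le_nhds <|
    (continuous_abs.tendsto' 0 0 abs_zero).eventually_lt_const (abs_pos.2 hμ)
  have hlim := tendsto_nhds_unique_of_eventuallyEq
    ((continuous_im.tendsto _).comp (tendsto_besselK_mul_besselK hμ hz0))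
    (tendsto_integral_im_cosh_mul_besselK μ hx) <| by
      filter_upwards [hsmall, self_mem_nhdsWithin] with η hημ hη
      have hadd : I * η + I * μ ≠ 0 := by
        rw [← mul_add, ← ofReal_add]
        exact mul_ne_zero I_ne_zero (mod_cast fun h => by
          rw [eq_neg_of_add_eq_zero_left h, abs_neg] at hημ; exact hημ.false)
      have hsub : I * η - I * μ ≠ 0 := by
        rw [← mul_sub, ← ofReal_sub]
        exact mul_ne_zero I_ne_zero (mod_cast fun h => by
          rw [sub_eq_zero.1 h] at hημ; exact hημ.false)
      have hη0 : I * η ≠ 0 := mul_ne_zero I_ne_zero (mod_cast hη)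
      rw [Function.comp_apply, besselK_mul_besselK (by simp) hη0 (by simp) hadd hsub hz hz0]
      exact (integral_im (integrable_cosh_mul_besselK (by simp) (mul_ne_zero two_ne_zero hη0)
        (by simp) hz hz0)).symm
  simp only [mul_left_comm _ (π / 2)] at hlim
  rw [im_besselK_I_mul_sq hμ hx, integral_const_mul] at hlim
  have hπ := Real.pi_ne_zero
  field_simp at hlim ⊢
  linear_combination -hlim

theorem norm_integral_cos_mul_besselJ0_le {M : ℝ}
    (hbound : ∀ u : ℝ, 0 < u → √u * |besselJ0 u| ≤ M) (hx : 0 < x) (μ : ℝ) :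
    ‖∫ b, Real.cos (2 * μ * b) * besselJ0 (2 * x * Real.cosh b)‖ ≤
      M / √(2 * x) * ∫ b, (√(Real.cosh b))⁻¹ := by
  rw [← integral_const_mul]
  refine norm_integral_le_of_norm_le (integrable_inv_sqrt_cosh.const_mul _) (.of_forall fun b => ?_)
  have := Real.cosh_pos b
  have hJ := hbound (2 * x * Real.cosh b) (by positivity)
  rw [norm_mul, ← div_eq_mul_inv, div_div, ← Real.sqrt_mul (by positivity),
    le_div_iff₀ (by positivity), mul_comm]
  exact (mul_le_mul_of_nonneg_left (mul_le_of_le_one_left (abs_nonneg _) (Real.abs_cos_le_one _))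
    (Real.sqrt_nonneg _)).trans hJ

end ImaginaryOrder

theorem statement10_general (M : ℝ)
    (hbound : ∀ u : ℝ, 0 < u → Real.sqrt u * |besselJ0 u| ≤ M)
    (x : ℝ) (hx : 0 < x) (μ : ℝ) (hμ : μ ≠ 0) :
    |((besselJ (Complex.I * μ) x) ^ 2).im / Real.sinh (Real.pi * μ)|
      ≤ Real.Gamma (1 / 4) ^ 2 * M / (2 * Real.pi * Real.sqrt (Real.pi * x)) := by
  have := Real.pi_pos
  have hsqrt : √(2 * x) * √(2 * Real.pi) = 2 * √(Real.pi * x) := by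
    rw [← Real.sqrt_mul (by positivity), show 2 * x * (2 * Real.pi) = 2 ^ 2 * (Real.pi * x) by ring,
      Real.sqrt_mul (by positivity), Real.sqrt_sq zero_le_two]
  calc |((besselJ (Complex.I * μ) x) ^ 2).im / Real.sinh (Real.pi * μ)|
      = 1 / Real.pi * ‖∫ b, Real.cos (2 * μ * b) * besselJ0 (2 * x * Real.cosh b)‖ := by
        rw [im_besselJ_sq_div_sinh hμ hx, abs_mul, abs_neg, abs_of_pos (by positivity),
          Real.norm_eq_abs]
    _ ≤ 1 / Real.pi * (M / √(2 * x) * (Real.Gamma (1 / 4) ^ 2 / √(2 * Real.pi))) := by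
        rw [← integral_inv_sqrt_cosh]
        gcongr
        exact norm_integral_cos_mul_besselJ0_le hbound hx μ
    _ = Real.Gamma (1 / 4) ^ 2 * M / (2 * Real.pi * √(Real.pi * x)) := by
        rw [div_mul_div_comm, hsqrt, div_mul_div_comm]
        ring

theorem statement10 (M : ℝ) (hM : 0 ≤ M)
    (hbound : ∀ u : ℝ, 0 < u → Real.sqrt u * |besselJ0 u| ≤ M)
    (x : ℝ) (hx : 0 < x) (n : ℕ) (hn : 1 ≤ n) :
    |((besselJ (Complex.I * n / 2) x) ^ 2).im| / Real.sinh (Real.pi * n / 2)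
      ≤ Real.Gamma (1 / 4) ^ 2 * M / (2 * Real.pi * Real.sqrt (Real.pi * x)) := by
  have hsinh : 0 ≤ Real.sinh (Real.pi * (n / 2)) := Real.sinh_nonneg_iff.2 (by positivity)
  simpa [abs_div, abs_of_nonneg hsinh, mul_div_assoc] using
    statement10_general M hbound x hx (n / 2) (by positivity)
end
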